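/- arXiv:2208.08916 — 2 statements merged into one kernel-verified Lean document; each statement's English description precedes it below -/
import Mathlib

section
/- Let Q₁, Q₂, Q₃ : ℝ³ → ℝ be real quadratic forms with symmetric matrices M₁, M₂, M₃, let f := Q₁Q₃ − Q₂², and assume: (i) fderiv ℝ f P ≠ 0 for every P ∈ ℝ³∖{0} with f(P) = 0; (ii) the binary sextic p(t₀, t₁) := det(t₀²M₁ + 2t₀t₁M₂ + t₁²M₃) is nonzero and squarefree in ℂ[t₀, t₁]. Let ℝP² be the quotient topological space of ℝ³∖{0} by the scaling action of ℝ∖{0}. If the zero locus Z := { [P] ∈ ℝP² : f(P) = 0 } has exactly four connected components (i.e. the real isotopy class of the quartic Δ is four ovals), then the sets { [P] ∈ ℝP² : f(P) < 0 } and { [P] ∈ ℝP² : f(P) ≤ 0 } are connected. (That is, the outside U_Δ of the four ovals is exactly the region where Q₁Q₃ − Q₂² < 0.) -/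
/-- The scaling relation on nonzero vectors of `ℝⁿ`. -/
def projRel (n : ℕ) (v w : {x : Fin n → ℝ // x ≠ 0}) : Prop :=
  ∃ c : ℝ, c ≠ 0 ∧ c • (v : Fin n → ℝ) = (w : Fin n → ℝ)

/-- The real projective space `ℝPⁿ⁻¹`, as the quotient topological space of `ℝⁿ ∖ {0}` by the
scaling action of `ℝ ∖ {0}`. -/
def RP (n : ℕ) : Type := Quot (projRel n)

instance (n : ℕ) : TopologicalSpace (RP n) :=
  inferInstanceAs (TopologicalSpace (Quot (projRel n)))

open MvPolynomial in
/-- The binary sextic form `det(t₀²M₁ + 2t₀t₁M₂ + t₁²M₃)`, as a polynomial in `ℂ[t₀, t₁]`. -/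
noncomputable def binarySextic (M₁ M₂ M₃ : Matrix (Fin 3) (Fin 3) ℝ) :
    MvPolynomial (Fin 2) ℂ :=
  Matrix.det (Matrix.of fun i j =>
    X 0 ^ 2 * C (M₁ i j : ℂ) + 2 * X 0 * X 1 * C (M₂ i j : ℂ) + X 1 ^ 2 * C (M₃ i j : ℂ))

section Helpers

open Matrix Set Filter Topology

/-- Bilinear form of a matrix. -/
def bl (M : Matrix (Fin 3) (Fin 3) ℝ) (x y : Fin 3 → ℝ) : ℝ := x ⬝ᵥ (M *ᵥ y)

theorem bl_add_left (M : Matrix (Fin 3) (Fin 3) ℝ) (x y z : Fin 3 → ℝ) :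
    bl M (x + y) z = bl M x z + bl M y z := by simp [bl]

theorem bl_add_right (M : Matrix (Fin 3) (Fin 3) ℝ) (x y z : Fin 3 → ℝ) :
    bl M x (y + z) = bl M x y + bl M x z := by simp [bl, mulVec_add]

theorem bl_smul_left (M : Matrix (Fin 3) (Fin 3) ℝ) (c : ℝ) (x y : Fin 3 → ℝ) :
    bl M (c • x) y = c * bl M x y := by simp [bl]

theorem bl_smul_right (M : Matrix (Fin 3) (Fin 3) ℝ) (c : ℝ) (x y : Fin 3 → ℝ) :
    bl M x (c • y) = c * bl M x y := by simp [bl, mulVec_smul]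

theorem bl_symm {M : Matrix (Fin 3) (Fin 3) ℝ} (h : M.IsSymm) (x y : Fin 3 → ℝ) :
    bl M x y = bl M y x := by
  unfold bl
  rw [dotProduct_mulVec, ← mulVec_transpose, h.eq, dotProduct_comm]

theorem bl_add_mat (M N : Matrix (Fin 3) (Fin 3) ℝ) (x y : Fin 3 → ℝ) :
    bl (M + N) x y = bl M x y + bl N x y := by simp [bl, add_mulVec]

theorem bl_smul_mat (c : ℝ) (M : Matrix (Fin 3) (Fin 3) ℝ) (x y : Fin 3 → ℝ) :
    bl (c • M) x y = c * bl M x y := by simp [bl, smul_mulVec]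

theorem bl_continuous (M : Matrix (Fin 3) (Fin 3) ℝ) :
    Continuous (fun p : (Fin 3 → ℝ) × (Fin 3 → ℝ) => bl M p.1 p.2) := by
  unfold bl
  simp only [dotProduct, mulVec]
  fun_prop

theorem continuous_bl {X : Type*} [TopologicalSpace X] (M : Matrix (Fin 3) (Fin 3) ℝ)
    {u v : X → Fin 3 → ℝ} (hu : Continuous u) (hv : Continuous v) :
    Continuous (fun t => bl M (u t) (v t)) :=
  (bl_continuous M).comp (hu.prodMk hv)

/-- Scaling invariant locally constant functions on a cone. -/
def LC (K : Set (Fin 3 → ℝ)) (g : (Fin 3 → ℝ) → ℕ) : Prop :=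
  ContinuousOn g K ∧ ∀ x ∈ K, ∀ c : ℝ, c ≠ 0 → g (c • x) = g x

theorem LC.mono {K K' : Set (Fin 3 → ℝ)} {g : (Fin 3 → ℝ) → ℕ} (h : LC K g) (hs : K' ⊆ K) :
    LC K' g := ⟨h.1.mono hs, fun x hx => h.2 x (hs hx)⟩

theorem path_const {K : Set (Fin 3 → ℝ)} {g : (Fin 3 → ℝ) → ℕ} (h : ContinuousOn g K)
    (γ : ℝ → Fin 3 → ℝ) (hγ : ContinuousOn γ (Icc 0 1)) (hK : ∀ t ∈ Icc (0:ℝ) 1, γ t ∈ K) :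
    g (γ 0) = g (γ 1) := by
  have h1 : ContinuousOn (g ∘ γ) (Icc (0:ℝ) 1) := h.comp hγ hK
  exact (isPreconnected_Icc).constant h1 (by simp) (by simp)

theorem exists_orth (a b : Fin 3 → ℝ) : ∃ k : Fin 3 → ℝ, k ≠ 0 ∧ k ⬝ᵥ a = 0 ∧ k ⬝ᵥ b = 0 := by
  obtain ⟨k, hk, h⟩ := (Matrix.exists_mulVec_eq_zero_iff (M := !![a 0, a 1, a 2; b 0, b 1, b 2; 0, 0, 0])).2
    (by simp [Matrix.det_fin_three])
  refine ⟨k, hk, ?_, ?_⟩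
  · have := congrFun h 0
    simp [mulVec, dotProduct, Fin.sum_univ_three] at this ⊢
    linarith
  · have := congrFun h 1
    simp [mulVec, dotProduct, Fin.sum_univ_three] at this ⊢
    linarith

theorem conic_aux {M : Matrix (Fin 3) (Fin 3) ℝ} (hM : M.IsSymm) {g : (Fin 3 → ℝ) → ℕ}
    (hg : LC {x | x ≠ 0 ∧ bl M x x = 0} g) {x y : Fin 3 → ℝ} (hx : x ≠ 0) (hy : y ≠ 0)
    (hqx : bl M x x = 0) (hqy : bl M y y = 0) (hxy : bl M x y = 0) : g x = g y := by
  by_cases hp : ∃ c : ℝ, y = c • x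
  · obtain ⟨c, rfl⟩ := hp
    have : c ≠ 0 := by rintro rfl; simp at hy
    exact (hg.2 x ⟨hx, hqx⟩ c this).symm
  · have := path_const hg.1 (fun t => (1 - t) • x + t • y) (by fun_prop) ?_
    · simpa using this
    · intro t ht
      refine ⟨?_, ?_⟩
      · intro h0
        by_cases ht0 : t = 0
        · subst ht0; simp at h0; exact hx h0
        · apply hp
          refine ⟨-(t⁻¹ * (1 - t)), ?_⟩
          have : t • y = -((1 - t) • x) := by
            rw [eq_neg_iff_add_eq_zero, add_comm]; exact h0
          calc y = t⁻¹ • (t • y) := by rw [smul_smul, inv_mul_cancel₀ ht0, one_smul]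
            _ = _ := by rw [this, smul_neg, smul_smul, neg_smul]
      · simp only [bl_add_left, bl_add_right, bl_smul_left, bl_smul_right, bl_symm hM y x, hqx, hqy,
          hxy]
        ring

theorem conic_const {M : Matrix (Fin 3) (Fin 3) ℝ} (hM : M.IsSymm) {g : (Fin 3 → ℝ) → ℕ}
    (hg : LC {x | x ≠ 0 ∧ bl M x x = 0} g) {x y : Fin 3 → ℝ} (hx : x ≠ 0) (hy : y ≠ 0)
    (hqx : bl M x x = 0) (hqy : bl M y y = 0) : g x = g y := by
  by_cases hxy : bl M x y = 0
  · exact conic_aux hM hg hx hy hqx hqy hxy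
  obtain ⟨k, hk, h1, h2⟩ := exists_orth (M *ᵥ x) (M *ᵥ y)
  change bl M k x = 0 at h1
  change bl M k y = 0 at h2
  by_cases hqk : bl M k k = 0
  · rw [← conic_aux hM hg hk hx hqk hqx h1, conic_aux hM hg hk hy hqk hqy h2]
  -- stereographic projection from `x`
  let d : ℝ → Fin 3 → ℝ := fun t => (1 - t) • y + t • k
  have hd : ∀ t, bl M x (d t) = (1 - t) * bl M x y := by
    intro t
    simp only [d, bl_add_right, bl_smul_right, bl_symm hM x k, h1]; ring
  have := path_const hg.1 (fun t => (2 * bl M x (d t)) • d t - (bl M (d t) (d t)) • x) ?_ ?_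
  · simp only [d] at this
    simp [hqy] at this
    rw [hg.2 y ⟨hy, hqy⟩ _ (by simpa using hxy)] at this
    rw [this, bl_symm hM x k, h1]
    simp only [mul_zero, zero_smul, zero_sub, ← neg_smul]
    exact (hg.2 x ⟨hx, hqx⟩ _ (by simpa using hqk)).symm
  · have hdc : Continuous d := by fun_prop
    have h3 := continuous_bl M (u := fun _ : ℝ => x) continuous_const hdc
    have h4 := continuous_bl M hdc hdc
    apply Continuous.continuousOn
    fun_prop
  · intro t ht
    refine ⟨?_, ?_⟩
    · intro h0
      have e1 : (2 * bl M x (d t)) • d t = (bl M (d t) (d t)) • x := sub_eq_zero.1 h0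
      have e2 : bl M x ((2 * bl M x (d t)) • d t) = bl M x ((bl M (d t) (d t)) • x) := by rw [e1]
      rw [bl_smul_right, bl_smul_right, hqx, hd] at e2
      have : (1 - t) = 0 := by
        by_contra hne
        have := mul_ne_zero hne hxy
        have := mul_self_pos.2 this
        nlinarith
      have ht1 : t = 1 := by linarith
      subst ht1
      rw [hd] at e1
      have e1' : (bl M k k) • x = 0 := by
        rw [show d 1 = k by simp [d]] at e1
        rw [← e1]; simp
      rcases smul_eq_zero.1 e1' with e1 | e1
      · exact hqk e1
      · exact hx e1
    · simp only [sub_eq_add_neg, ← neg_smul]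
      simp only [bl_add_left, bl_add_right (M := M), bl_smul_left, bl_smul_right, hqx,
        bl_symm hM (d t) x]
      ring

theorem graph_ne (F : ℝ → (Fin 3 → ℝ) → ℝ) (s0 : ℝ) (x v : Fin 3 → ℝ) (ε : ℝ) (hε : 0 < ε)
    (hF : ∀ c z, |c - s0| < ε → z ∈ Metric.ball x ε →
      ContinuousAt (fun q : ℝ × (Fin 3 → ℝ) => F q.1 q.2) (c, z))
    (mono : ∀ c z, ∀ t : ℝ, |c - s0| < ε → z ∈ Metric.ball x ε → z + t • v ∈ Metric.ball x ε → 0 < t →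
      F c z < F c (z + t • v)) (h0 : F s0 x = 0) (ρ : ℝ) (hρ : 0 < ρ) :
    ∀ᶠ c in 𝓝 s0, ∃ y, y ∈ Metric.ball x ρ ∧ F c y = 0 := by
  set r := min ρ ε with hr
  have hr0 : 0 < r := lt_min hρ hε
  set τ := r / (2 * (‖v‖ + 1)) with hτ
  have hv1 : 0 < ‖v‖ + 1 := by positivity
  have hτ0 : 0 < τ := by positivity
  have hball : ∀ t : ℝ, |t| ≤ τ → x + t • v ∈ Metric.ball x r := by
    intro t ht
    rw [Metric.mem_ball, dist_eq_norm, add_sub_cancel_left, norm_smul, Real.norm_eq_abs]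
    calc |t| * ‖v‖ ≤ τ * ‖v‖ := by gcongr
      _ ≤ τ * (‖v‖ + 1) := by gcongr; linarith
      _ = r / 2 := by rw [hτ]; field_simp
      _ < r := by linarith
  have hb1 : ∀ t : ℝ, |t| ≤ τ → x + t • v ∈ Metric.ball x ε := fun t ht =>
    Metric.ball_subset_ball (min_le_right _ _) (hball t ht)
  have hxε : x ∈ Metric.ball x ε := Metric.mem_ball_self hε
  have h00 : |s0 - s0| < ε := by simpa using hε
  have p1 : 0 < F s0 (x + τ • v) := by
    rw [← h0]; exact mono s0 x τ h00 hxε (hb1 τ (by rw [abs_of_pos hτ0])) hτ0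
  have p2 : F s0 (x + (-τ) • v) < 0 := by
    rw [← h0]
    have := mono s0 (x + (-τ) • v) τ h00 (hb1 _ (by rw [abs_neg, abs_of_pos hτ0])) (by simpa using hε) hτ0
    simpa using this
  have cc : ∀ z, z ∈ Metric.ball x ε → ContinuousAt (fun c => F c z) s0 := by
    intro z hz
    exact ContinuousAt.comp (f := fun c : ℝ => (c, z)) (hF s0 z h00 hz) (by fun_prop)
  have e1 := (cc _ (hb1 τ (by rw [abs_of_pos hτ0]))).eventually (lt_mem_nhds p1)
  have e2 := (cc _ (hb1 (-τ) (by rw [abs_neg, abs_of_pos hτ0]))).eventually (gt_mem_nhds p2)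
  have e3 : ∀ᶠ c in 𝓝 s0, |c - s0| < ε := by
    have := Metric.ball_mem_nhds s0 hε
    filter_upwards [this] with c hc
    simpa [Real.dist_eq] using hc
  filter_upwards [e1, e2, e3] with c h1 h2 h3
  have hcont : ContinuousOn (fun t : ℝ => F c (x + t • v)) (Icc (-τ) τ) := by
    intro t ht
    apply ContinuousAt.continuousWithinAt
    exact ContinuousAt.comp (f := fun t : ℝ => (c, x + t • v)) (hF c _ h3 (hb1 t (abs_le.2 ht)))
      (by fun_prop)
  have := intermediate_value_Icc (by linarith) hcont ⟨h2.le, h1.le⟩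
  obtain ⟨t, ht, h⟩ := this
  exact ⟨_, Metric.ball_subset_ball (min_le_left _ _) (hball t (abs_le.2 ht)), h⟩

theorem graph_cn (F : ℝ → (Fin 3 → ℝ) → ℝ) (s0 : ℝ) (x v : Fin 3 → ℝ) (ε : ℝ) (hε : 0 < ε)
    (hF : ∀ c z, |c - s0| < ε → z ∈ Metric.ball x ε →
      ContinuousAt (fun q : ℝ × (Fin 3 → ℝ) => F q.1 q.2) (c, z))
    (mono : ∀ c z, ∀ t : ℝ, |c - s0| < ε → z ∈ Metric.ball x ε → z + t • v ∈ Metric.ball x ε → 0 < t →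
      F c z < F c (z + t • v)) (h0 : F s0 x = 0) :
    ∃ η > 0, ∀ᶠ c in 𝓝 s0, ∀ g : (Fin 3 → ℝ) → ℕ,
      ContinuousOn g {y | y ∈ Metric.ball x ε ∧ F c y = 0} →
      ∀ y ∈ Metric.ball x η, ∀ z ∈ Metric.ball x η, F c y = 0 → F c z = 0 → g y = g z := by
  set τ := ε / (2 * (‖v‖ + 1)) with hτ
  have hv1 : 0 < ‖v‖ + 1 := by positivity
  have hτ0 : 0 < τ := by positivity
  have hball : ∀ t : ℝ, |t| ≤ τ → ∀ z ∈ Metric.ball x (ε / 2), z + t • v ∈ Metric.ball x ε := by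
    intro t ht z hz
    rw [Metric.mem_ball, dist_eq_norm] at hz ⊢
    calc ‖z + t • v - x‖ = ‖(z - x) + t • v‖ := by congr 1; abel
      _ ≤ ‖z - x‖ + ‖t • v‖ := norm_add_le _ _
      _ < ε := by
        have : ‖t • v‖ ≤ ε / 2 := by
          rw [norm_smul, Real.norm_eq_abs]
          calc |t| * ‖v‖ ≤ τ * ‖v‖ := by gcongr
            _ ≤ τ * (‖v‖ + 1) := by gcongr; linarith
            _ = ε / 2 := by rw [hτ]; field_simp
        linarith
  have hxε : x ∈ Metric.ball x (ε / 2) := Metric.mem_ball_self (by positivity)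
  have hxε' : x ∈ Metric.ball x ε := Metric.mem_ball_self (by positivity)
  have h00 : |s0 - s0| < ε := by simpa using hε
  have ht1 : |τ| ≤ τ := by rw [abs_of_pos hτ0]
  have ht2 : |-τ| ≤ τ := by rw [abs_neg, abs_of_pos hτ0]
  have p1 : 0 < F s0 (x + τ • v) := by
    rw [← h0]; exact mono s0 x τ h00 hxε' (hball τ ht1 x hxε) hτ0
  have p2 : F s0 (x + (-τ) • v) < 0 := by
    rw [← h0]
    have := mono s0 (x + (-τ) • v) τ h00 (hball _ ht2 x hxε) (by simpa using hε) hτ0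
    simpa using this
  have cc : ∀ t, |t| ≤ τ → ContinuousAt (fun q : ℝ × (Fin 3 → ℝ) => F q.1 (q.2 + t • v)) (s0, x) := by
    intro t ht
    exact ContinuousAt.comp (g := fun q : ℝ × (Fin 3 → ℝ) => F q.1 q.2)
      (f := fun q : ℝ × (Fin 3 → ℝ) => (q.1, q.2 + t • v)) (hF s0 _ h00 (hball t ht x hxε)) (by fun_prop)
  have e1 := (cc τ ht1).eventually (lt_mem_nhds p1)
  have e2 := (cc (-τ) ht2).eventually (gt_mem_nhds p2)
  obtain ⟨η0, hη0, he⟩ := Metric.eventually_nhds_iff.1 (e1.and e2)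
  refine ⟨min η0 (ε / 2), by positivity, ?_⟩
  have e4 : ∀ᶠ c in 𝓝 s0, |c - s0| < min η0 ε := by
    have := Metric.ball_mem_nhds s0 (show 0 < min η0 ε by positivity)
    filter_upwards [this] with c hc
    simpa [Real.dist_eq] using hc
  filter_upwards [e4] with c hc g hg y hy z hz hFy hFz
  have hcε : |c - s0| < ε := hc.trans_le (min_le_right _ _)
  set η := min η0 (ε / 2)
  -- segment
  set γ : ℝ → Fin 3 → ℝ := fun u => (1 - u) • y + u • z with hγ
  have hγc : Continuous γ := by fun_prop
  have hγb : ∀ u ∈ Icc (0:ℝ) 1, γ u ∈ Metric.ball x η := by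
    intro u hu
    exact (convex_ball x η) hy hz (by linarith [hu.2]) hu.1 (by ring)
  have hγb2 : ∀ u ∈ Icc (0:ℝ) 1, γ u ∈ Metric.ball x (ε / 2) := fun u hu =>
    Metric.ball_subset_ball (min_le_right _ _) (hγb u hu)
  have hs : ∀ u ∈ Icc (0:ℝ) 1, 0 < F c (γ u + τ • v) ∧ F c (γ u + (-τ) • v) < 0 := by
    intro u hu
    have h1 : dist (c, γ u) (s0, x) < η0 := by
      rw [Prod.dist_eq]
      refine max_lt ?_ ((hγb u hu).trans_le (min_le_left _ _))
      rw [Real.dist_eq]; exact hc.trans_le (min_le_left _ _)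
    exact he h1
  have hcont : ∀ u ∈ Icc (0:ℝ) 1, ∀ t, |t| ≤ τ →
      ContinuousAt (fun q : ℝ × ℝ => F c (γ q.1 + q.2 • v)) (u, t) := by
    intro u hu t ht
    exact ContinuousAt.comp (g := fun q : ℝ × (Fin 3 → ℝ) => F q.1 q.2)
      (f := fun q : ℝ × ℝ => (c, γ q.1 + q.2 • v)) (hF c _ hcε (hball t ht _ (hγb2 u hu))) (by fun_prop)
  have hmono : ∀ u ∈ Icc (0:ℝ) 1, ∀ t t', |t| ≤ τ → |t'| ≤ τ → t < t' →
      F c (γ u + t • v) < F c (γ u + t' • v) := by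
    intro u hu t t' ht ht' htt
    have := mono c (γ u + t • v) (t' - t) hcε (hball t ht _ (hγb2 u hu))
      (by
        have := hball t' ht' _ (hγb2 u hu)
        convert this using 1
        rw [sub_smul]; abel) (by linarith)
    convert this using 2
    rw [sub_smul]; abel
  have hex : ∀ u ∈ Icc (0:ℝ) 1, ∃ t, |t| < τ ∧ F c (γ u + t • v) = 0 := by
    intro u hu
    have hco : ContinuousOn (fun t : ℝ => F c (γ u + t • v)) (Icc (-τ) τ) := by
      intro t ht
      apply ContinuousAt.continuousWithinAt
      exact ContinuousAt.comp (f := fun t : ℝ => (u, t)) (hcont u hu t (abs_le.2 ht)) (by fun_prop)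
    obtain ⟨t, ht, h⟩ := intermediate_value_Ioo (by linarith) hco ⟨(hs u hu).2, (hs u hu).1⟩
    exact ⟨t, abs_lt.2 ht, h⟩
  choose! t ht hft using hex
  have hmono_inv : ∀ u ∈ Icc (0:ℝ) 1, ∀ a b, |a| ≤ τ → |b| ≤ τ →
      F c (γ u + a • v) < F c (γ u + b • v) → a < b := by
    intro u hu a b ha hb h
    by_contra hh
    rcases lt_or_eq_of_le (not_lt.1 hh) with h' | h'
    · exact absurd (hmono u hu b a hb ha h') (by linarith)
    · rw [h'] at h; exact lt_irrefl _ h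
  have huniq : ∀ u ∈ Icc (0:ℝ) 1, F c (γ u) = 0 → t u = 0 := by
    intro u hu h
    have hh : F c (γ u + (0:ℝ) • v) = 0 := by simpa using h
    rcases lt_trichotomy (t u) 0 with h1 | h1 | h1
    · have := hmono u hu _ _ (ht u hu).le (by simpa using hτ0.le) h1
      linarith [hft u hu]
    · exact h1
    · have := hmono u hu _ _ (by simpa using hτ0.le) (ht u hu).le h1
      linarith [hft u hu]
  have htc : ContinuousOn t (Icc 0 1) := by
    intro u hu
    rw [ContinuousWithinAt, Metric.tendsto_nhds]
    intro e he0
    set e' := min (e / 2) ((τ - |t u|) / 2) with he'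
    have h1 := ht u hu
    have he'0 : 0 < e' := lt_min (by linarith) (by linarith)
    have he'1 : e' ≤ e / 2 := min_le_left _ _
    have he'2 : e' ≤ (τ - |t u|) / 2 := min_le_right _ _
    have ha := abs_lt.1 h1
    have hA : |t u + e'| ≤ τ := by
      have := abs_add_le (t u) e'
      rw [abs_of_pos he'0] at this; linarith
    have hB : |t u - e'| ≤ τ := by
      have := abs_sub (t u) e'
      rw [abs_of_pos he'0] at this; linarith
    have q1 : 0 < F c (γ u + (t u + e') • v) := by
      rw [← hft u hu]; exact hmono u hu _ _ h1.le hA (by linarith)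
    have q2 : F c (γ u + (t u - e') • v) < 0 := by
      rw [← hft u hu]; exact hmono u hu _ _ hB h1.le (by linarith)
    have k1 : ContinuousAt (fun u' : ℝ => F c (γ u' + (t u + e') • v)) u :=
      ContinuousAt.comp (f := fun u' : ℝ => (u', t u + e')) (hcont u hu _ hA) (by fun_prop)
    have k2 : ContinuousAt (fun u' : ℝ => F c (γ u' + (t u - e') • v)) u :=
      ContinuousAt.comp (f := fun u' : ℝ => (u', t u - e')) (hcont u hu _ hB) (by fun_prop)
    filter_upwards [self_mem_nhdsWithin, mem_nhdsWithin_of_mem_nhds (k1.eventually (lt_mem_nhds q1)),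
      mem_nhdsWithin_of_mem_nhds (k2.eventually (gt_mem_nhds q2))] with u' hu' r1 r2
    have := hmono_inv u' hu' (t u') (t u + e') (ht u' hu').le hA (by rw [hft u' hu']; exact r1)
    have := hmono_inv u' hu' (t u - e') (t u') hB (ht u' hu').le (by rw [hft u' hu']; exact r2)
    rw [Real.dist_eq, abs_lt]
    constructor <;> linarith
  have h01 : (0:ℝ) ∈ Icc (0:ℝ) 1 := by simp
  have h11 : (1:ℝ) ∈ Icc (0:ℝ) 1 := by simp
  have key := path_const hg (fun u => γ u + t u • v)
    (hγc.continuousOn.add (htc.smul continuousOn_const))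
    (fun u hu => ⟨hball _ (ht u hu).le _ (hγb2 u hu), hft u hu⟩)
  have g0 : γ 0 = y := by simp [hγ]
  have g1 : γ 1 = z := by simp [hγ]
  simp only [huniq 0 h01 (by rw [g0, hFy]), huniq 1 h11 (by rw [g1, hFz]), zero_smul, add_zero,
    g0, g1] at key
  exact key

/-- A pencil of conics, normalized. -/
structure Pen where
  M1 : Matrix (Fin 3) (Fin 3) ℝ
  M2 : Matrix (Fin 3) (Fin 3) ℝ
  M3 : Matrix (Fin 3) (Fin 3) ℝ
  s1 : M1.IsSymm
  s2 : M2.IsSymm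
  s3 : M3.IsSymm
  pd : ∀ x, x ≠ 0 → 0 < bl M1 x x
  ker : ∀ (s : ℝ) k, k ≠ 0 → (s ^ 2 • M1 + (2 * s) • M2 + M3) *ᵥ k = 0 →
    s * bl M1 k k + bl M2 k k ≠ 0
  dim : ∀ (s : ℝ) k k', k ≠ 0 → (s ^ 2 • M1 + (2 * s) • M2 + M3) *ᵥ k = 0 →
    (s ^ 2 • M1 + (2 * s) • M2 + M3) *ᵥ k' = 0 → ∃ c : ℝ, k' = c • k
  p : Fin 3 → ℝ
  hp : ∀ s : ℝ, 0 < bl (s ^ 2 • M1 + (2 * s) • M2 + M3) p p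

namespace Pen

variable (P : Pen)

/-- member of the pencil -/
def M (s : ℝ) : Matrix (Fin 3) (Fin 3) ℝ := s ^ 2 • P.M1 + (2 * s) • P.M2 + P.M3

theorem symM (s : ℝ) : (P.M s).IsSymm := by
  unfold M
  exact ((P.s1.smul _).add (P.s2.smul _)).add P.s3

/-- bilinear forms of the pencil -/
def b (s : ℝ) (x y : Fin 3 → ℝ) : ℝ := bl (P.M s) x y

theorem b_eq (s : ℝ) (x y : Fin 3 → ℝ) :
    P.b s x y = s ^ 2 * bl P.M1 x y + 2 * s * bl P.M2 x y + bl P.M3 x y := by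
  simp only [b, M, bl_add_mat, bl_smul_mat]

theorem b_symm (s : ℝ) (x y : Fin 3 → ℝ) : P.b s x y = P.b s y x := bl_symm (P.symM s) x y

theorem b_cont : Continuous (fun q : ℝ × (Fin 3 → ℝ) × (Fin 3 → ℝ) => P.b q.1 q.2.1 q.2.2) := by
  simp only [b_eq]
  have h1 := (bl_continuous P.M1).comp (continuous_snd (X := ℝ))
  have h2 := (bl_continuous P.M2).comp (continuous_snd (X := ℝ))
  have h3 := (bl_continuous P.M3).comp (continuous_snd (X := ℝ))
  simp only [Function.comp_def] at h1 h2 h3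
  fun_prop

theorem b_add_left (s : ℝ) (x y z : Fin 3 → ℝ) : P.b s (x + y) z = P.b s x z + P.b s y z :=
  bl_add_left _ _ _ _
theorem b_add_right (s : ℝ) (x y z : Fin 3 → ℝ) : P.b s x (y + z) = P.b s x y + P.b s x z :=
  bl_add_right _ _ _ _
theorem b_smul_left (s c : ℝ) (x y : Fin 3 → ℝ) : P.b s (c • x) y = c * P.b s x y :=
  bl_smul_left _ _ _ _
theorem b_smul_right (s c : ℝ) (x y : Fin 3 → ℝ) : P.b s x (c • y) = c * P.b s x y :=
  bl_smul_right _ _ _ _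

/-- the minimizing parameter, cut off at `c` -/
noncomputable def sg (c : ℝ) (x : Fin 3 → ℝ) : ℝ := min c (-bl P.M2 x x / bl P.M1 x x)

/-- `min_{s ≤ c} Q_s(x)` -/
noncomputable def F (c : ℝ) (x : Fin 3 → ℝ) : ℝ := P.b (P.sg c x) x x

/-- zero cone -/
def Z (c : ℝ) : Set (Fin 3 → ℝ) := {x | x ≠ 0 ∧ P.F c x = 0}

theorem sg_smul (c a : ℝ) (ha : a ≠ 0) (x : Fin 3 → ℝ) : P.sg c (a • x) = P.sg c x := by
  unfold sg
  congr 1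
  simp only [bl_smul_left, bl_smul_right]
  by_cases h : bl P.M1 x x = 0
  · simp [h]
  · field_simp

theorem F_smul (c a : ℝ) (ha : a ≠ 0) (x : Fin 3 → ℝ) : P.F c (a • x) = a ^ 2 * P.F c x := by
  unfold F
  rw [P.sg_smul c a ha, b_smul_left, b_smul_right]; ring

theorem Z_smul {c a : ℝ} (ha : a ≠ 0) {x : Fin 3 → ℝ} (hx : x ∈ P.Z c) : a • x ∈ P.Z c :=
  ⟨smul_ne_zero ha hx.1, by rw [P.F_smul c a ha, hx.2, mul_zero]⟩

theorem sg_le (c : ℝ) (x : Fin 3 → ℝ) : P.sg c x ≤ c := min_le_left _ _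

/-- completing the square -/
theorem b_sub (s m : ℝ) (x : Fin 3 → ℝ) :
    P.b s x x - P.b m x x = (s - m) * ((s + m) * bl P.M1 x x + 2 * bl P.M2 x x) := by
  rw [b_eq, b_eq]; ring

theorem F_le {c s : ℝ} {x : Fin 3 → ℝ} (hx : x ≠ 0) (hs : s ≤ c) : P.F c x ≤ P.b s x x := by
  have h1 := P.pd x hx
  have h := P.b_sub s (P.sg c x) x
  suffices 0 ≤ (s - P.sg c x) * ((s + P.sg c x) * bl P.M1 x x + 2 * bl P.M2 x x) by
    unfold F; linarith
  have hm : bl P.M2 x x = -(-bl P.M2 x x / bl P.M1 x x) * bl P.M1 x x := by field_simp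
  set m := -bl P.M2 x x / bl P.M1 x x with hmd
  have : (s - P.sg c x) * ((s + P.sg c x) * bl P.M1 x x + 2 * bl P.M2 x x)
      = ((s - P.sg c x) * (s + P.sg c x - 2 * m)) * bl P.M1 x x := by
    rw [hm]; ring
  rw [this]
  apply mul_nonneg _ h1.le
  have hsg : P.sg c x = min c m := rfl
  rw [hsg]
  rcases le_total c m with h' | h'
  · rw [min_eq_left h']; nlinarith
  · rw [min_eq_right h']; nlinarith [sq_nonneg (s - m)]

theorem sg_contAt (c : ℝ) (x : Fin 3 → ℝ) (hx : x ≠ 0) :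
    ContinuousAt (fun q : ℝ × (Fin 3 → ℝ) => P.sg q.1 q.2) (c, x) := by
  unfold sg
  have h1 : Continuous (fun q : ℝ × (Fin 3 → ℝ) => bl P.M1 q.2 q.2) :=
    continuous_bl _ continuous_snd continuous_snd
  have h2 : Continuous (fun q : ℝ × (Fin 3 → ℝ) => bl P.M2 q.2 q.2) :=
    continuous_bl _ continuous_snd continuous_snd
  refine Filter.Tendsto.min continuousAt_fst ?_
  exact (h2.neg.continuousAt).div h1.continuousAt (P.pd x hx).ne'

theorem F_contAt (c : ℝ) (x : Fin 3 → ℝ) (hx : x ≠ 0) :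
    ContinuousAt (fun q : ℝ × (Fin 3 → ℝ) => P.F q.1 q.2) (c, x) := by
  unfold F
  exact ContinuousAt.comp (g := fun q : ℝ × (Fin 3 → ℝ) × (Fin 3 → ℝ) => P.b q.1 q.2.1 q.2.2)
    (f := fun q : ℝ × (Fin 3 → ℝ) => (P.sg q.1 q.2, q.2, q.2)) P.b_cont.continuousAt
    ((P.sg_contAt c x hx).prodMk (by fun_prop))

theorem local_mono (s0 : ℝ) (x : Fin 3 → ℝ) (hx : x ≠ 0) (hv : P.M (P.sg s0 x) *ᵥ x ≠ 0) :
    ∃ ε > 0, (∀ c z, |c - s0| < ε → z ∈ Metric.ball x ε →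
      ContinuousAt (fun q : ℝ × (Fin 3 → ℝ) => P.F q.1 q.2) (c, z)) ∧
      (∀ c z, ∀ t : ℝ, |c - s0| < ε → z ∈ Metric.ball x ε →
        z + t • (P.M (P.sg s0 x) *ᵥ x) ∈ Metric.ball x ε → 0 < t →
        P.F c z < P.F c (z + t • (P.M (P.sg s0 x) *ᵥ x))) ∧ ∀ z ∈ Metric.ball x ε, z ≠ 0 := by
  set v := P.M (P.sg s0 x) *ᵥ x with hvd
  have h0 : 0 < P.b (P.sg s0 x) v x := by
    unfold b bl
    rw [← hvd]
    exact lt_of_le_of_ne (Finset.sum_nonneg fun i _ => mul_self_nonneg _) (fun h => hv (dotProduct_self_eq_zero.1 h.symm))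
  have hc : ContinuousAt (fun q : ℝ × (Fin 3 → ℝ) × (Fin 3 → ℝ) => P.b (P.sg q.1 q.2.1) v q.2.2)
      (s0, x, x) := by
    refine ContinuousAt.comp (g := fun q : ℝ × (Fin 3 → ℝ) × (Fin 3 → ℝ) => P.b q.1 q.2.1 q.2.2)
      (f := fun q : ℝ × (Fin 3 → ℝ) × (Fin 3 → ℝ) => (P.sg q.1 q.2.1, v, q.2.2))
      P.b_cont.continuousAt (ContinuousAt.prodMk ?_ (by fun_prop))
    exact ContinuousAt.comp (g := fun q : ℝ × (Fin 3 → ℝ) => P.sg q.1 q.2)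
      (f := fun q : ℝ × (Fin 3 → ℝ) × (Fin 3 → ℝ) => (q.1, q.2.1)) (P.sg_contAt s0 x hx) (by fun_prop)
  obtain ⟨ε, hε, h⟩ := Metric.eventually_nhds_iff.1 (hc.eventually (lt_mem_nhds h0))
  have hxn : 0 < ‖x‖ := norm_pos_iff.2 hx
  have hne : ∀ z ∈ Metric.ball x (min ε ‖x‖), z ≠ 0 := by
    rintro z hz rfl
    have := (Metric.mem_ball.1 hz).trans_le (min_le_right _ _)
    simp at this
  refine ⟨min ε ‖x‖, lt_min hε hxn, fun c z _ hz => P.F_contAt c z (hne z hz), ?_, hne⟩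
  intro c z t hct hz hzt ht
  have key : ∀ z1 z2, z1 ∈ Metric.ball x (min ε ‖x‖) → z2 ∈ Metric.ball x (min ε ‖x‖) →
      0 < P.b (P.sg c z1) v z2 := by
    intro z1 z2 h1 h2
    apply h (y := (c, z1, z2))
    rw [Prod.dist_eq, Prod.dist_eq]
    refine max_lt ?_ (max_lt ?_ ?_)
    · rw [Real.dist_eq]; exact hct.trans_le (min_le_left _ _)
    · exact h1.trans_le (min_le_left _ _)
    · exact h2.trans_le (min_le_left _ _)
  set s := P.sg c (z + t • v) with hs
  have k1 := key _ z hzt hz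
  have k2 := key _ _ hzt hzt
  have k3 : P.F c z ≤ P.b s z z := P.F_le (hne z hz) (P.sg_le _ _)
  have k4 : P.F c (z + t • v) = P.b s z z + t * (P.b s v z + P.b s v (z + t • v)) := by
    unfold F
    rw [← hs]
    simp only [b_add_left, b_add_right, b_smul_left, b_smul_right, P.b_symm s z v]
    ring
  rw [k4]
  have := mul_pos ht (add_pos k1 k2)
  linarith

end Pen

/-- Extension of a function from the sphere to the cone. -/
theorem lc_ext {K : Set (Fin 3 → ℝ)} (h0 : ∀ x ∈ K, x ≠ 0)
    (hK : ∀ x ∈ K, ∀ a : ℝ, a ≠ 0 → a • x ∈ K) (g : (Fin 3 → ℝ) → ℕ)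
    (hg : ContinuousOn g (K ∩ Metric.sphere 0 1)) (hn : ∀ x ∈ K ∩ Metric.sphere 0 1, g (-x) = g x) :
    LC K (fun x => g (‖x‖⁻¹ • x)) ∧ g '' (K ∩ Metric.sphere 0 1) ⊆ (fun x => g (‖x‖⁻¹ • x)) '' K := by
  have hu : ∀ x ∈ K, ‖x‖⁻¹ • x ∈ K ∩ Metric.sphere 0 1 := by
    intro x hx
    have h1 : ‖x‖ ≠ 0 := norm_ne_zero_iff.2 (h0 x hx)
    refine ⟨hK x hx _ (inv_ne_zero h1), ?_⟩
    simp [norm_smul, h1]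
  refine ⟨⟨?_, ?_⟩, ?_⟩
  · refine hg.comp (f := fun x => ‖x‖⁻¹ • x) ?_ (fun x hx => hu x hx)
    intro x hx
    have h1 : ‖x‖ ≠ 0 := norm_ne_zero_iff.2 (h0 x hx)
    apply ContinuousAt.continuousWithinAt
    exact (continuousAt_id.norm.inv₀ h1).smul continuousAt_id
  · intro x hx c hc
    simp only
    have h1 : ‖x‖ ≠ 0 := norm_ne_zero_iff.2 (h0 x hx)
    rw [norm_smul, Real.norm_eq_abs]
    rcases lt_or_gt_of_ne hc with h | h
    · rw [abs_of_neg h, ← hn _ (hu x hx)]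
      congr 1
      rw [smul_smul, ← neg_smul]
      congr 1
      field_simp
    · rw [abs_of_pos h]
      congr 1
      rw [smul_smul]
      congr 1
      field_simp
  · rintro _ ⟨x, hx, rfl⟩
    refine ⟨x, hx.1, ?_⟩
    have : ‖x‖ = 1 := by simpa using hx.2
    simp [this]

theorem lc_unit {K : Set (Fin 3 → ℝ)} {g : (Fin 3 → ℝ) → ℕ} (hg : LC K g) {x : Fin 3 → ℝ}
    (hx : x ∈ K) (h0 : x ≠ 0) : g (‖x‖⁻¹ • x) = g x :=
  hg.2 x hx _ (inv_ne_zero (norm_ne_zero_iff.2 h0))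

theorem contOn_of_loc {K : Set (Fin 3 → ℝ)} {g : (Fin 3 → ℝ) → ℕ} {ρ : ℝ} (hρ : 0 < ρ)
    (h : ∀ x ∈ K, ∀ y ∈ K, dist y x < ρ → g y = g x) : ContinuousOn g K := by
  intro x hx
  rw [ContinuousWithinAt, nhds_discrete, tendsto_pure]
  filter_upwards [self_mem_nhdsWithin, mem_nhdsWithin_of_mem_nhds (Metric.ball_mem_nhds x hρ)] with y hy hyx
  exact h x hx y hy hyx

namespace Pen
variable (P : Pen)

/-- at most `n` values -/
def B (n : ℕ) (c : ℝ) : Prop := ∀ g, LC (P.Z c) g → (g '' P.Z c).encard ≤ n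

/-- unit vectors of the zero cone -/
def KZ (c : ℝ) : Set (Fin 3 → ℝ) := P.Z c ∩ Metric.sphere 0 1

theorem KZ_compact (c : ℝ) : IsCompact (P.KZ c) := by
  have h1 : ContinuousOn (P.F c) (Metric.sphere 0 1) := by
    intro x hx
    apply ContinuousAt.continuousWithinAt
    exact ContinuousAt.comp (g := fun q : ℝ × (Fin 3 → ℝ) => P.F q.1 q.2)
      (f := fun x : Fin 3 → ℝ => (c, x)) (P.F_contAt c x (ne_zero_of_mem_unit_sphere ⟨x, hx⟩)) (by fun_prop)
  have h2 := h1.preimage_isClosed_of_isClosed Metric.isClosed_sphere (isClosed_singleton (x := (0:ℝ)))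
  have : P.KZ c = Metric.sphere 0 1 ∩ P.F c ⁻¹' {0} := by
    ext x
    constructor
    · rintro ⟨h, h'⟩; exact ⟨h', h.2⟩
    · rintro ⟨h, h'⟩; exact ⟨⟨ne_zero_of_mem_unit_sphere ⟨x, h⟩, h'⟩, h⟩
  rw [this]
  exact (isCompact_sphere 0 1).of_isClosed_subset h2 inter_subset_left

theorem unit_mem {c : ℝ} {x : Fin 3 → ℝ} (hx : x ∈ P.Z c) : ‖x‖⁻¹ • x ∈ P.KZ c := by
  have h1 : ‖x‖ ≠ 0 := norm_ne_zero_iff.2 hx.1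
  refine ⟨P.Z_smul (inv_ne_zero h1) hx, ?_⟩
  simp [norm_smul, h1]

theorem neg_memZ {c : ℝ} {x : Fin 3 → ℝ} (hx : x ∈ P.Z c) : -x ∈ P.Z c := by
  have := P.Z_smul (a := -1) (by norm_num) hx
  simpa using this

theorem neg_memK {c : ℝ} {x : Fin 3 → ℝ} (hx : x ∈ P.KZ c) : -x ∈ P.KZ c :=
  ⟨P.neg_memZ hx.1, by simpa using hx.2⟩

theorem lc_neg {K : Set (Fin 3 → ℝ)} {g : (Fin 3 → ℝ) → ℕ} (hg : LC K g) {x : Fin 3 → ℝ}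
    (hx : x ∈ K) : g (-x) = g x := by
  have := hg.2 x hx (-1) (by norm_num)
  simpa using this

theorem usc (s0 ρ : ℝ) (hρ : 0 < ρ) :
    ∀ᶠ c in 𝓝 s0, ∀ y ∈ P.KZ c, ∃ x ∈ P.KZ s0, dist y x < ρ := by
  set C := Metric.sphere (0 : Fin 3 → ℝ) 1 \ ⋃ x ∈ P.KZ s0, Metric.ball x ρ with hC
  have hCc : IsCompact C :=
    (isCompact_sphere 0 1).diff (isOpen_biUnion fun x _ => Metric.isOpen_ball)
  have := hCc.eventually_forall_of_forall_eventually (x₀ := s0) (P := fun c y => P.F c y ≠ 0) ?_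
  · filter_upwards [this] with c hc y hy
    by_contra hh
    push Not at hh
    refine hc y ⟨hy.2, ?_⟩ hy.1.2
    simp only [mem_iUnion, not_exists]
    intro x hx h
    exact absurd (Metric.mem_ball.1 h) (not_lt.2 (hh x hx))
  · intro y hy
    have hy0 : y ≠ 0 := ne_zero_of_mem_unit_sphere ⟨y, hy.1⟩
    apply (P.F_contAt s0 y hy0).eventually_ne
    intro h
    apply hy.2
    simp only [mem_iUnion]
    exact ⟨y, ⟨⟨hy0, h⟩, hy.1⟩, Metric.mem_ball_self hρ⟩

theorem right_core (s0 : ℝ) (n : ℕ) (G : ℝ → ((Fin 3 → ℝ) → ℕ) → Prop)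
    (hG : ∀ c g, G c g → LC (P.Z c) g)
    (hNE : ∀ x ∈ P.KZ s0, ∀ ρ > 0, ∀ᶠ c in 𝓝[>] s0, ∃ y ∈ P.Z c, dist y x < ρ)
    (hCN : ∀ x ∈ P.KZ s0, ∃ η > 0, ∀ᶠ c in 𝓝[>] s0, ∀ g, G c g →
      ∀ y ∈ P.Z c, ∀ z ∈ P.Z c, dist y x < η → dist z x < η → g y = g z)
    (hB : P.B n s0) :
    ∀ᶠ c in 𝓝[>] s0, ∀ g, G c g → (g '' P.Z c).encard ≤ n := by
  have hU : ∃ r > 0, ∀ᶠ c in 𝓝[>] s0, ∀ x ∈ P.KZ s0, ∀ g, G c g →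
      ∀ y ∈ P.Z c, ∀ z ∈ P.Z c, dist y x < r → dist z x < r → g y = g z := by
    refine (P.KZ_compact s0).induction_on (p := fun s => ∃ r > 0, ∀ᶠ c in 𝓝[>] s0, ∀ x ∈ s,
      ∀ g, G c g → ∀ y ∈ P.Z c, ∀ z ∈ P.Z c, dist y x < r → dist z x < r → g y = g z) ?_ ?_ ?_ ?_
    · exact ⟨1, one_pos, by simp⟩
    · rintro s t hst ⟨r, hr, h⟩
      exact ⟨r, hr, h.mono fun c hc x hx => hc x (hst hx)⟩
    · rintro s t ⟨r, hr, h⟩ ⟨r', hr', h'⟩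
      refine ⟨min r r', lt_min hr hr', ?_⟩
      filter_upwards [h, h'] with c hc hc' x hx g hg y hy z hz h1 h2
      rcases hx with hx | hx
      · exact hc x hx g hg y hy z hz (h1.trans_le (min_le_left _ _)) (h2.trans_le (min_le_left _ _))
      · exact hc' x hx g hg y hy z hz (h1.trans_le (min_le_right _ _)) (h2.trans_le (min_le_right _ _))
    · intro x hx
      obtain ⟨η, hη, h⟩ := hCN x hx
      refine ⟨Metric.ball x (η / 2), mem_nhdsWithin_of_mem_nhds (Metric.ball_mem_nhds x (by positivity)),
        η / 2, by positivity, ?_⟩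
      filter_upwards [h] with c hc x' hx' g hg y hy z hz h1 h2
      have := Metric.mem_ball.1 hx'
      refine hc g hg y hy z hz ?_ ?_
      · linarith [dist_triangle y x' x]
      · linarith [dist_triangle z x' x]
  obtain ⟨r, hr, hU⟩ := hU
  set ρ := r / 3 with hρd
  have hρ : 0 < ρ := by positivity
  have hN : ∀ᶠ c in 𝓝[>] s0, ∀ x ∈ P.KZ s0, ∃ y ∈ P.Z c, dist y x < ρ := by
    refine (P.KZ_compact s0).induction_on (p := fun s => ∀ᶠ c in 𝓝[>] s0, ∀ x ∈ s,
      ∃ y ∈ P.Z c, dist y x < ρ) ?_ ?_ ?_ ?_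
    · simp
    · intro s t hst h
      exact h.mono fun c hc x hx => hc x (hst hx)
    · intro s t h h'
      filter_upwards [h, h'] with c hc hc' x hx
      exact hx.elim (hc x) (hc' x)
    · intro x hx
      refine ⟨Metric.ball x (ρ / 2), mem_nhdsWithin_of_mem_nhds (Metric.ball_mem_nhds x (by positivity)), ?_⟩
      filter_upwards [hNE x hx (ρ / 2) (by positivity)] with c hc x' hx'
      obtain ⟨y, hy, h⟩ := hc
      have := Metric.mem_ball'.1 hx'
      exact ⟨y, hy, by linarith [dist_triangle y x x']⟩
  filter_upwards [hU, hN, mem_nhdsWithin_of_mem_nhds (P.usc s0 ρ hρ)] with c hU hN hS g hg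
  have hgl := hG c g hg
  choose! Y hY hYd using hN
  have key := lc_ext (K := P.Z s0) (fun x hx => hx.1) (fun x hx a ha => P.Z_smul ha hx)
    (fun x => g (Y x)) ?_ ?_
  · refine le_trans (encard_le_encard ?_) (hB _ key.1)
    refine Subset.trans ?_ key.2
    rintro _ ⟨y, hy, rfl⟩
    obtain ⟨x, hx, hd⟩ := hS _ (P.unit_mem hy)
    refine ⟨x, hx, ?_⟩
    rw [← lc_unit hgl hy hy.1]
    exact hU x hx g hg _ (hY x hx) _ (P.unit_mem hy).1 (by linarith [hYd x hx]) (by linarith)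
  · apply contOn_of_loc hρ
    intro x hx x' hx' hd
    have h1 := hYd x hx
    have h2 := hYd x' hx'
    exact hU x hx g hg _ (hY x' hx') _ (hY x hx) (by linarith [dist_triangle (Y x') x' x]) (by linarith)
  · intro x hx
    have hnx : -x ∈ P.KZ s0 := P.neg_memK hx
    have h1 := hYd x hx
    have h2 := hYd _ hnx
    rw [← lc_neg hgl (hY _ hnx)]
    refine hU x hx g hg _ (P.neg_memZ (hY _ hnx)) _ (hY x hx) ?_ (by linarith)
    rw [← dist_neg_neg, neg_neg]
    linarith

theorem left_core (s0 : ℝ) (n : ℕ) (hB : ∀ᶠ b in 𝓝[<] s0, P.B n b)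
    (g : (Fin 3 → ℝ) → ℕ) (hg : LC (P.Z s0) g) (V : Set ℕ)
    (hV : ∀ v ∈ V, ∃ x ∈ P.KZ s0, g x = v ∧ ∀ ρ > 0, ∀ᶠ b in 𝓝[<] s0, ∃ y ∈ P.Z b, dist y x < ρ) :
    V.encard ≤ n := by
  have hgK : ContinuousOn g (P.KZ s0) := hg.1.mono inter_subset_left
  have hVfin : V.Finite := by
    have : (g '' P.KZ s0).Finite := ((P.KZ_compact s0).image_of_continuousOn hgK).finite_of_discrete
    refine this.subset ?_
    intro v hv
    obtain ⟨x, hx, h, _⟩ := hV v hv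
    exact ⟨x, hx, h⟩
  obtain ⟨r, hr, hU⟩ : ∃ r > 0, ∀ x ∈ P.KZ s0, ∀ y ∈ P.KZ s0, dist x y < r → g x = g y := by
    have := (P.KZ_compact s0).uniformContinuousOn_of_continuous hgK
    obtain ⟨r, hr, h⟩ := Metric.uniformContinuousOn_iff.1 this 1 one_pos
    refine ⟨r, hr, fun x hx y hy hd => ?_⟩
    have := h x hx y hy hd
    by_contra hne
    rw [Nat.dist_eq] at this
    have h2 : ((g x : ℤ) - g y) ≠ 0 := by omega
    have h3 := Int.one_le_abs h2
    have h4 : (1:ℝ) ≤ |(g x : ℝ) - g y| := by exact_mod_cast h3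
    linarith
  set ρ := r / 3 with hρd
  have hρ : 0 < ρ := by positivity
  choose! x hx hgx hN using hV
  have hN' : ∀ᶠ b in 𝓝[<] s0, ∀ v ∈ V, ∃ y ∈ P.Z b, dist y (x v) < ρ := by
    rw [eventually_all_finite hVfin]
    exact fun v hv => hN v hv ρ hρ
  obtain ⟨b, hBb, hS, hNb⟩ := (hB.and (((P.usc s0 ρ hρ).filter_mono nhdsWithin_le_nhds).and hN')).exists
  change ∀ y ∈ P.KZ b, ∃ x ∈ P.KZ s0, dist y x < ρ at hS
  choose! X hX hXd using hS
  have key := lc_ext (K := P.Z b) (fun x hx => hx.1) (fun x hx a ha => P.Z_smul ha hx)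
    (fun y => g (X y)) ?_ ?_
  · refine le_trans (encard_le_encard ?_) (hBb _ key.1)
    refine Subset.trans ?_ key.2
    intro v hv
    obtain ⟨y, hy, hd⟩ := hNb v hv
    have hu := P.unit_mem hy
    refine ⟨_, hu, ?_⟩
    simp only
    rw [← hgx v hv]
    refine hU _ (hX _ hu) _ (hx v hv) ?_
    have h1 : dist (‖y‖⁻¹ • y) y < ρ := by
      have hxn : ‖x v‖ = 1 := by simpa using (hx v hv).2
      have hy0 : ‖y‖ ≠ 0 := norm_ne_zero_iff.2 hy.1
      calc dist (‖y‖⁻¹ • y) y = ‖(‖y‖⁻¹ - 1) • y‖ := by rw [dist_eq_norm, sub_smul, one_smul]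
        _ = |‖y‖⁻¹ - 1| * |‖y‖| := by rw [norm_smul, Real.norm_eq_abs, abs_norm]
        _ = |‖x v‖ - ‖y‖| := by rw [← abs_mul, hxn, sub_mul, inv_mul_cancel₀ hy0, one_mul]
        _ ≤ ‖x v - y‖ := abs_norm_sub_norm_le _ _
        _ < ρ := by rw [← dist_eq_norm, dist_comm]; exact hd
    have h2 := hXd _ hu
    rw [dist_comm] at h2
    linarith [dist_triangle (X (‖y‖⁻¹ • y)) (‖y‖⁻¹ • y) (x v), dist_triangle (‖y‖⁻¹ • y) y (x v)]
  · apply contOn_of_loc hρ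
    intro y hy y' hy' hd
    refine hU _ (hX _ hy') _ (hX _ hy) ?_
    have h1 := hXd y hy
    have h2 := hXd y' hy'
    rw [dist_comm] at h2
    linarith [dist_triangle4 (X y') y' y (X y)]
  · intro y hy
    have hny : -y ∈ P.KZ b := P.neg_memK hy
    rw [← lc_neg hg (hX _ hy).1]
    refine hU _ (hX _ hny) _ (P.neg_memK (hX _ hy)) ?_
    have h1 := hXd y hy
    have h2 := hXd _ hny
    rw [dist_comm] at h2
    rw [← dist_neg_neg] at h1
    linarith [dist_triangle (X (-y)) (-y) (-X y)]

theorem nc_ne (s0 : ℝ) (x : Fin 3 → ℝ) (hx : x ∈ P.Z s0) (hv : P.M (P.sg s0 x) *ᵥ x ≠ 0)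
    (ρ : ℝ) (hρ : 0 < ρ) : ∀ᶠ c in 𝓝 s0, ∃ y ∈ P.Z c, dist y x < ρ := by
  obtain ⟨ε, hε, h1, h2, h3⟩ := P.local_mono s0 x hx.1 hv
  filter_upwards [graph_ne P.F s0 x _ ε hε h1 h2 hx.2 (min ρ ε) (lt_min hρ hε)] with c hc
  obtain ⟨y, hy, hF⟩ := hc
  exact ⟨y, ⟨h3 y (Metric.ball_subset_ball (min_le_right _ _) hy), hF⟩,
    Metric.ball_subset_ball (min_le_left _ _) hy⟩

theorem nc_cn (s0 : ℝ) (x : Fin 3 → ℝ) (hx : x ∈ P.Z s0) (hv : P.M (P.sg s0 x) *ᵥ x ≠ 0) :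
    ∃ η > 0, ∀ᶠ c in 𝓝 s0, ∀ g, LC (P.Z c) g →
      ∀ y ∈ P.Z c, ∀ z ∈ P.Z c, dist y x < η → dist z x < η → g y = g z := by
  obtain ⟨ε, hε, h1, h2, h3⟩ := P.local_mono s0 x hx.1 hv
  obtain ⟨η, hη, h⟩ := graph_cn P.F s0 x _ ε hε h1 h2 hx.2
  refine ⟨η, hη, ?_⟩
  filter_upwards [h] with c hc g hg y hy z hz hyd hzd
  refine hc g (hg.1.mono fun y hy => ⟨h3 y hy.1, hy.2⟩) y hyd z hzd hy.2 hz.2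

end Pen

namespace Pen
variable (P : Pen)

/-- kernel vector of upward type -/
structure UpV (s0 : ℝ) (k : Fin 3 → ℝ) : Prop where
  unit : k ∈ Metric.sphere (0 : Fin 3 → ℝ) 1
  ker : P.M s0 *ᵥ k = 0
  neg : s0 * bl P.M1 k k + bl P.M2 k k < 0

theorem UpV.ne0 {P : Pen} {s0 : ℝ} {k : Fin 3 → ℝ} (h : P.UpV s0 k) : k ≠ 0 :=
  ne_zero_of_mem_unit_sphere ⟨k, h.unit⟩

theorem sg_eq {c : ℝ} {z : Fin 3 → ℝ} (hz : z ≠ 0) (h : c * bl P.M1 z z + bl P.M2 z z ≤ 0) :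
    P.sg c z = c := by
  apply min_eq_left
  rw [le_div_iff₀ (P.pd z hz)]
  linarith

theorem crit {s0 : ℝ} {x : Fin 3 → ℝ} (hx : x ∈ P.KZ s0) (h : P.M (P.sg s0 x) *ᵥ x = 0) :
    P.UpV s0 x := by
  have h1 := P.ker _ x hx.1.1 h
  have hpd := P.pd x hx.1.1
  have h2 : s0 < -bl P.M2 x x / bl P.M1 x x := by
    by_contra hh
    apply h1
    have : P.sg s0 x = -bl P.M2 x x / bl P.M1 x x := min_eq_right (not_lt.1 hh)
    rw [this]; field_simp; ring
  have h3 : P.sg s0 x = s0 := min_eq_left h2.le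
  rw [h3] at h
  refine ⟨hx.2, h, ?_⟩
  rw [lt_div_iff₀ hpd] at h2
  linarith

theorem UpV.locF {P : Pen} {s0 : ℝ} {k : Fin 3 → ℝ} (h : P.UpV s0 k) :
    ∃ δ > 0, ∀ c z, |c - s0| < δ → dist z k < δ → z ≠ 0 ∧ P.F c z = P.b c z z := by
  have hc : Continuous (fun q : ℝ × (Fin 3 → ℝ) => q.1 * bl P.M1 q.2 q.2 + bl P.M2 q.2 q.2) := by
    have h1 : Continuous (fun q : ℝ × (Fin 3 → ℝ) => bl P.M1 q.2 q.2) :=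
      continuous_bl _ continuous_snd continuous_snd
    have h2 : Continuous (fun q : ℝ × (Fin 3 → ℝ) => bl P.M2 q.2 q.2) :=
      continuous_bl _ continuous_snd continuous_snd
    fun_prop
  have e1 := (hc.continuousAt (x := (s0, k))).eventually (gt_mem_nhds h.neg)
  have e2 : ∀ᶠ q : ℝ × (Fin 3 → ℝ) in 𝓝 (s0, k), q.2 ≠ 0 :=
    (continuous_snd.continuousAt (x := (s0, k))).eventually_ne h.ne0
  obtain ⟨δ, hδ, he⟩ := Metric.eventually_nhds_iff.1 (e1.and e2)
  refine ⟨δ, hδ, fun c z hcd hz => ?_⟩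
  have := he (y := (c, z)) (by
    rw [Prod.dist_eq]; exact max_lt (by rw [Real.dist_eq]; exact hcd) hz)
  refine ⟨this.2, ?_⟩
  unfold F
  rw [P.sg_eq this.2 this.1.le]

theorem UpV.bk {P : Pen} {s0 : ℝ} {k : Fin 3 → ℝ} (h : P.UpV s0 k) (y : Fin 3 → ℝ) :
    P.b s0 y k = 0 := by
  unfold b bl; rw [h.ker]; simp

theorem UpV.bk' {P : Pen} {s0 : ℝ} {k : Fin 3 → ℝ} (h : P.UpV s0 k) (y : Fin 3 → ℝ) :
    P.b s0 k y = 0 := by rw [P.b_symm]; exact h.bk y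

theorem UpV.memK {P : Pen} {s0 : ℝ} {k : Fin 3 → ℝ} (h : P.UpV s0 k) : k ∈ P.KZ s0 := by
  refine ⟨⟨h.ne0, ?_⟩, h.unit⟩
  unfold F
  rw [P.sg_eq h.ne0 h.neg.le, h.bk]

/-- sign of `Q_c(k)` -/
theorem UpV.sgn {P : Pen} {s0 : ℝ} {k : Fin 3 → ℝ} (h : P.UpV s0 k) :
    ∀ᶠ c in 𝓝 s0, (c + s0) * bl P.M1 k k + 2 * bl P.M2 k k < 0 := by
  have hc : Continuous (fun c : ℝ => (c + s0) * bl P.M1 k k + 2 * bl P.M2 k k) := by fun_prop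
  apply (hc.continuousAt (x := s0)).eventually (gt_mem_nhds _)
  linarith [h.neg]

theorem UpV.sgnR {P : Pen} {s0 : ℝ} {k : Fin 3 → ℝ} (h : P.UpV s0 k) :
    ∀ᶠ c in 𝓝[>] s0, P.b c k k < 0 := by
  filter_upwards [self_mem_nhdsWithin, h.sgn.filter_mono nhdsWithin_le_nhds] with c hc h1
  have := P.b_sub c s0 k
  rw [h.bk, sub_zero] at this
  rw [this]
  exact mul_neg_of_pos_of_neg (sub_pos.2 hc) h1

theorem UpV.sgnL {P : Pen} {s0 : ℝ} {k : Fin 3 → ℝ} (h : P.UpV s0 k) :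
    ∀ᶠ c in 𝓝[<] s0, 0 < P.b c k k := by
  filter_upwards [self_mem_nhdsWithin, h.sgn.filter_mono nhdsWithin_le_nhds] with c hc h1
  have := P.b_sub c s0 k
  rw [h.bk, sub_zero] at this
  rw [this]
  exact mul_pos_of_neg_of_neg (sub_neg.2 hc) h1

theorem b_cont_c (x y : Fin 3 → ℝ) : Continuous (fun c => P.b c x y) :=
  P.b_cont.comp (by fun_prop : Continuous fun c : ℝ => (c, x, y))

theorem UpV.ne_side {P : Pen} {s0 : ℝ} {k : Fin 3 → ℝ} (h : P.UpV s0 k) (l : Filter ℝ)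
    (hl : l ≤ 𝓝 s0) (w : Fin 3 → ℝ) (hw0 : P.b s0 w w ≠ 0)
    (hw : ∀ᶠ c in l, P.b c k k * P.b s0 w w < 0) (ρ : ℝ) (hρ : 0 < ρ) :
    ∀ᶠ c in l, ∃ y ∈ P.Z c, dist y k < ρ := by
  obtain ⟨δ, hδ, hloc⟩ := h.locF
  set r := min ρ δ with hr
  have hr0 : 0 < r := lt_min hρ hδ
  set t := r / (2 * (‖w‖ + 1)) with htd
  have hv1 : 0 < ‖w‖ + 1 := by positivity
  have ht0 : 0 < t := by positivity
  have hball : ∀ a : ℝ, 0 ≤ a → a ≤ t → dist (k + a • w) k < r := by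
    intro a ha hat
    rw [dist_eq_norm, add_sub_cancel_left, norm_smul, Real.norm_eq_abs, abs_of_nonneg ha]
    calc a * ‖w‖ ≤ t * ‖w‖ := by gcongr
      _ ≤ t * (‖w‖ + 1) := by gcongr; linarith
      _ = r / 2 := by rw [htd]; field_simp
      _ < r := by linarith
  have e1 : ∀ᶠ c in 𝓝 s0, 0 < P.b c (k + t • w) (k + t • w) * P.b s0 w w := by
    have hc := (P.b_cont_c (k + t • w) (k + t • w)).mul_const (P.b s0 w w)
    apply (hc.continuousAt (x := s0)).eventually (lt_mem_nhds _)
    simp only [b_add_left, b_add_right, b_smul_left, b_smul_right, h.bk, h.bk']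
    have : 0 < t ^ 2 * (P.b s0 w w) ^ 2 := by positivity
    nlinarith
  have e3 : ∀ᶠ c in 𝓝 s0, |c - s0| < δ := by
    filter_upwards [Metric.ball_mem_nhds s0 hδ] with c hc
    simpa [Real.dist_eq] using hc
  filter_upwards [hw, hl e1, hl e3] with c h1 h2 h3
  have hcont : ContinuousOn (fun a : ℝ => P.b c (k + a • w) (k + a • w) * P.b s0 w w) (Icc 0 t) := by
    apply Continuous.continuousOn
    apply Continuous.mul_const
    exact P.b_cont.comp (by fun_prop : Continuous fun a : ℝ => (c, k + a • w, k + a • w))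
  obtain ⟨a, ha, hz⟩ := intermediate_value_Icc ht0.le hcont
    (show (0:ℝ) ∈ _ from ⟨by simpa using h1.le, h2.le⟩)
  have hd := hball a ha.1 ha.2
  have hl2 := hloc c (k + a • w) h3 (hd.trans_le (min_le_right _ _))
  refine ⟨k + a • w, ⟨hl2.1, ?_⟩, hd.trans_le (min_le_left _ _)⟩
  rw [hl2.2]
  simpa [hw0] using hz

theorem UpV.neR {P : Pen} {s0 : ℝ} {k : Fin 3 → ℝ} (h : P.UpV s0 k) (ρ : ℝ) (hρ : 0 < ρ) :
    ∀ᶠ c in 𝓝[>] s0, ∃ y ∈ P.Z c, dist y k < ρ := by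
  have hp : 0 < P.b s0 P.p P.p := P.hp s0
  refine h.ne_side _ nhdsWithin_le_nhds P.p hp.ne' ?_ ρ hρ
  filter_upwards [h.sgnR] with c hc
  exact mul_neg_of_neg_of_pos hc hp

theorem UpV.neL {P : Pen} {s0 : ℝ} {k : Fin 3 → ℝ} (h : P.UpV s0 k) (w : Fin 3 → ℝ)
    (hw : P.b s0 w w < 0) (ρ : ℝ) (hρ : 0 < ρ) :
    ∀ᶠ c in 𝓝[<] s0, ∃ y ∈ P.Z c, dist y k < ρ := by
  refine h.ne_side _ nhdsWithin_le_nhds w hw.ne ?_ ρ hρ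
  filter_upwards [h.sgnL] with c hc
  exact mul_neg_of_pos_of_neg hc hw

theorem psd_ker (s0 : ℝ) (hpsd : ∀ w, 0 ≤ P.b s0 w w) (x : Fin 3 → ℝ) (hx : P.b s0 x x = 0) :
    P.M s0 *ᵥ x = 0 := by
  set v := P.M s0 *ᵥ x with hv
  have ha : P.b s0 v x = v ⬝ᵥ v := by unfold b bl; rw [hv]
  have hb := hpsd v
  set β := P.b s0 v v
  set a := P.b s0 v x
  have h1 := hpsd (x + (-a / (β + 1)) • v)
  simp only [b_add_left, b_add_right, b_smul_left, b_smul_right, hx, P.b_symm s0 x v] at h1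
  change 0 ≤ 0 + -a / (β + 1) * a + -a / (β + 1) * (a + -a / (β + 1) * β) at h1
  have h2 : 0 + -a / (β + 1) * a + -a / (β + 1) * (a + -a / (β + 1) * β)
      = -(a ^ 2 * (β + 2) / (β + 1) ^ 2) := by
    have : β + 1 ≠ 0 := by positivity
    field_simp; ring
  rw [h2] at h1
  have h3 : a = 0 := by
    by_contra hne
    have : 0 < a ^ 2 * (β + 2) / (β + 1) ^ 2 := by positivity
    linarith
  rw [h3] at ha
  exact dotProduct_self_eq_zero.1 ha.symm

theorem UpV.pm {P : Pen} {s0 : ℝ} {k x : Fin 3 → ℝ} (h : P.UpV s0 k)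
    (hx : x ∈ Metric.sphere (0 : Fin 3 → ℝ) 1) (hk : P.M s0 *ᵥ x = 0) : x = k ∨ x = -k := by
  obtain ⟨c, rfl⟩ := P.dim s0 k x h.ne0 h.ker hk
  have h1 : ‖k‖ = 1 := by simpa using h.unit
  have h2 : |c| = 1 := by simpa [norm_smul, h1] using hx
  rcases (abs_eq (by norm_num)).1 h2 with h | h <;> simp [h]

theorem UpV.cnK1 {P : Pen} {s0 : ℝ} {k : Fin 3 → ℝ} (h : P.UpV s0 k)
    (hpsd : ∀ w, 0 ≤ P.b s0 w w) :
    ∃ η > 0, ∀ᶠ c in 𝓝[>] s0, ∀ g, LC (P.Z c) g →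
      ∀ y ∈ P.Z c, ∀ z ∈ P.Z c, dist y k < η → dist z k < η → g y = g z := by
  obtain ⟨δ, hδ, hloc⟩ := h.locF
  refine ⟨δ, hδ, ?_⟩
  set C := Metric.sphere (0 : Fin 3 → ℝ) 1 \ (Metric.ball k δ ∪ Metric.ball (-k) δ) with hC
  have hCc : IsCompact C := (isCompact_sphere 0 1).diff (Metric.isOpen_ball.union Metric.isOpen_ball)
  have e1 := hCc.eventually_forall_of_forall_eventually (x₀ := s0) (P := fun c y => P.b c y y ≠ 0) (by
    intro y hy
    have hcc : Continuous (fun q : ℝ × (Fin 3 → ℝ) => P.b q.1 q.2 q.2) :=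
      P.b_cont.comp (by fun_prop : Continuous fun q : ℝ × (Fin 3 → ℝ) => (q.1, q.2, q.2))
    apply (hcc.continuousAt (x := (s0, y))).eventually_ne
    intro h0
    apply hy.2
    rcases h.pm hy.1 (P.psd_ker s0 hpsd y h0) with rfl | rfl
    · left; exact Metric.mem_ball_self hδ
    · right; exact Metric.mem_ball_self hδ)
  have e3 : ∀ᶠ c in 𝓝 s0, |c - s0| < δ := by
    filter_upwards [Metric.ball_mem_nhds s0 hδ] with c hc
    simpa [Real.dist_eq] using hc
  filter_upwards [e1.filter_mono nhdsWithin_le_nhds, e3.filter_mono nhdsWithin_le_nhds]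
    with c h1 h3 g hg y hy z hz hyd hzd
  have hsub : {x | x ≠ 0 ∧ bl (P.M c) x x = 0} ⊆ P.Z c := by
    rintro x ⟨hx0, hx⟩
    have hn : ‖x‖ ≠ 0 := norm_ne_zero_iff.2 hx0
    set u := ‖x‖⁻¹ • x with hu
    have hus : u ∈ Metric.sphere (0 : Fin 3 → ℝ) 1 := by simp [hu, norm_smul, hn]
    have hub : P.b c u u = 0 := by
      rw [hu, b_smul_left, b_smul_right]; unfold b; rw [hx]; ring
    have hmem : u ∈ Metric.ball k δ ∪ Metric.ball (-k) δ := by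
      by_contra hh
      exact h1 u ⟨hus, hh⟩ hub
    have huZ : u ∈ P.Z c := by
      rcases hmem with hm | hm
      · have := hloc c u h3 hm
        exact ⟨this.1, by rw [this.2, hub]⟩
      · have hd : dist (-u) k < δ := by rw [← dist_neg_neg, neg_neg]; exact hm
        have := hloc c (-u) h3 hd
        have hz : -u ∈ P.Z c := ⟨this.1, by
          rw [this.2, show -u = (-1:ℝ) • u by simp, b_smul_left, b_smul_right, hub]; ring⟩
        simpa using P.neg_memZ hz
    have := P.Z_smul hn huZ
    rwa [hu, smul_smul, mul_inv_cancel₀ hn, one_smul] at this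
  have q : ∀ y ∈ P.Z c, dist y k < δ → bl (P.M c) y y = 0 := by
    intro y hy hyd
    have := (hloc c y h3 hyd).2
    rw [hy.2] at this
    exact this.symm
  exact conic_const (P.symM c) (hg.mono hsub) hy.1 hz.1 (q y hy hyd) (q z hz hzd)

end Pen

namespace Pen
variable (P : Pen)

theorem b_sub2 (s m : ℝ) (x y : Fin 3 → ℝ) :
    P.b s x y - P.b m x y = (s - m) * ((s + m) * bl P.M1 x y + 2 * bl P.M2 x y) := by
  rw [b_eq, b_eq]; ring

/-- discriminant form -/
def D (c : ℝ) (x y : Fin 3 → ℝ) : ℝ := P.b c x y * P.b c P.p P.p - P.b c x P.p * P.b c y P.p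

theorem UpV.basis {P : Pen} {s0 : ℝ} {k : Fin 3 → ℝ} (h : P.UpV s0 k) (w : Fin 3 → ℝ)
    (hw : P.b s0 w w < 0) (y : Fin 3 → ℝ) : ∃ α β γ : ℝ, y = α • k + β • P.p + γ • w := by
  have hp : 0 < P.b s0 P.p P.p := P.hp s0
  have li : LinearIndependent ℝ ![k, P.p, w] := by
    rw [Fintype.linearIndependent_iff]
    intro f hf
    simp only [Fin.sum_univ_three, Matrix.cons_val_zero, Matrix.cons_val_one, Matrix.cons_val] at hf
    have h1 : P.b s0 (f 0 • k + f 1 • P.p + f 2 • w) P.p = 0 := by rw [hf]; simp [b, bl]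
    have h2 : P.b s0 (f 0 • k + f 1 • P.p + f 2 • w) w = 0 := by rw [hf]; simp [b, bl]
    simp only [b_add_left, b_smul_left, h.bk'] at h1 h2
    rw [P.b_symm s0 P.p w] at h2
    have hf2 : f 2 = 0 := by
      have e : f 2 * (P.b s0 w w * P.b s0 P.p P.p - P.b s0 w P.p ^ 2) = 0 := by linear_combination P.b s0 P.p P.p * h2 - P.b s0 w P.p * h1
      rcases mul_eq_zero.1 e with e | e
      · exact e
      · nlinarith [mul_pos_of_neg_of_neg hw (neg_neg_of_pos hp), sq_nonneg (P.b s0 w P.p)]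
    have hf1 : f 1 = 0 := by
      rw [hf2] at h1
      have : f 1 * P.b s0 P.p P.p = 0 := by linarith
      exact (mul_eq_zero.1 this).resolve_right hp.ne'
    have hf0 : f 0 = 0 := by
      rw [hf1, hf2] at hf
      have : f 0 • k = 0 := by simpa using hf
      exact (smul_eq_zero.1 this).resolve_right h.ne0
    intro i
    fin_cases i <;> simp [hf0, hf1, hf2]
  have hsp := li.span_eq_top_of_card_eq_finrank' (by simp)
  have hy : y ∈ Submodule.span ℝ (Set.range ![k, P.p, w]) := by rw [hsp]; trivial
  obtain ⟨f, hf⟩ := (Submodule.mem_span_range_iff_exists_fun ℝ).1 hy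
  refine ⟨f 0, f 1, f 2, ?_⟩
  rw [← hf]
  simp [Fin.sum_univ_three]

set_option maxHeartbeats 2000000 in
theorem UpV.disc {P : Pen} {s0 : ℝ} {k : Fin 3 → ℝ} (h : P.UpV s0 k) (w : Fin 3 → ℝ)
    (hw : P.b s0 w w < 0) : ∀ᶠ c in 𝓝[>] s0, ∀ y, P.D c y y ≤ 0 := by
  have hp : 0 < P.b s0 P.p P.p := P.hp s0
  set kk : ℝ → ℝ := fun c => (c + s0) * bl P.M1 k k + 2 * bl P.M2 k k
  set kp : ℝ → ℝ := fun c => (c + s0) * bl P.M1 k P.p + 2 * bl P.M2 k P.p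
  set kw : ℝ → ℝ := fun c => (c + s0) * bl P.M1 k w + 2 * bl P.M2 k w
  set G1 : ℝ → ℝ := fun c => kk c * P.b c P.p P.p - (c - s0) * kp c ^ 2
  set G2 : ℝ → ℝ := fun c => kw c * P.b c P.p P.p - kp c * P.b c w P.p
  have hpp := P.b_cont_c P.p P.p
  have hwp := P.b_cont_c w P.p
  have hww := P.b_cont_c w w
  have c1 : Continuous G1 := by simp only [G1, kk, kp]; fun_prop
  have c2 : Continuous G2 := by simp only [G2, kw, kp]; fun_prop
  have c3 : Continuous (fun c => P.D c w w) := by unfold D; fun_prop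
  have hkk : kk s0 < 0 := by simp only [kk]; linarith [h.neg]
  have g1 : G1 s0 < 0 := by
    simp only [G1, sub_self, zero_mul, sub_zero]
    exact mul_neg_of_neg_of_pos hkk hp
  have d1 : P.D s0 w w < 0 := by
    unfold D
    nlinarith [mul_pos_of_neg_of_neg hw (neg_neg_of_pos hp), sq_nonneg (P.b s0 w P.p)]
  have e1 := (c1.continuousAt (x := s0)).eventually (gt_mem_nhds g1)
  have c4 : Continuous (fun c => G1 c * P.D c w w - (c - s0) * G2 c ^ 2) := by fun_prop
  have e2 := (c4.continuousAt (x := s0)).eventually (lt_mem_nhds (a := 0) (by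
    simp only [sub_self, zero_mul, sub_zero]; exact mul_pos_of_neg_of_neg g1 d1))
  filter_upwards [self_mem_nhdsWithin, e1.filter_mono nhdsWithin_le_nhds,
    e2.filter_mono nhdsWithin_le_nhds] with c hc h1 h2 y
  have hε : 0 < c - s0 := sub_pos.2 hc
  have b1 := P.b_sub2 c s0 k k
  have b2 := P.b_sub2 c s0 k P.p
  have b3 := P.b_sub2 c s0 k w
  rw [h.bk', sub_zero] at b1 b2 b3
  have D1 : P.D c k k = (c - s0) * G1 c := by
    unfold D; rw [b1, b2]; simp only [G1, kk, kp]; ring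
  have D2 : P.D c k w = (c - s0) * G2 c := by
    unfold D; rw [b3, b2]; simp only [G2, kw, kp]; ring
  obtain ⟨α, β, γ, rfl⟩ := h.basis w hw y
  have D3 : P.D c (α • k + β • P.p + γ • w) (α • k + β • P.p + γ • w) =
      α ^ 2 * P.D c k k + 2 * α * γ * P.D c k w + γ ^ 2 * P.D c w w := by
    unfold D
    simp only [b_add_left, b_add_right, b_smul_left, b_smul_right, P.b_symm c P.p k, P.b_symm c P.p w,
      P.b_symm c w k]
    ring
  rw [D3]
  have n1 : P.D c k k < 0 := by rw [D1]; exact mul_neg_of_pos_of_neg hε h1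
  have n2 : 0 < P.D c k k * P.D c w w - P.D c k w ^ 2 := by
    rw [D1, D2]
    have := mul_pos hε h2
    nlinarith
  by_contra hh
  push Not at hh
  have := mul_neg_of_neg_of_pos n1 hh
  nlinarith [sq_nonneg (α * P.D c k k + γ * P.D c k w), mul_nonneg (sq_nonneg γ) n2.le]

theorem UpV.cnK2 {P : Pen} {s0 : ℝ} {k : Fin 3 → ℝ} (h : P.UpV s0 k) (w : Fin 3 → ℝ)
    (hw : P.b s0 w w < 0) :
    ∃ η > 0, ∀ᶠ c in 𝓝[>] s0, ∀ g, LC (P.Z c) g →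
      ∀ y ∈ P.Z c, ∀ z ∈ P.Z c, dist y k < η → dist z k < η →
        (0 ≤ P.b c y P.p ↔ 0 ≤ P.b c z P.p) → g y = g z := by
  obtain ⟨δ, hδ, hloc⟩ := h.locF
  have hpp : ∀ c, 0 < P.b c P.p P.p := P.hp
  let T : ℝ → ℝ → (Fin 3 → ℝ) → ℝ := fun e c y =>
    (-P.b c y P.p + e * √(P.b c y P.p ^ 2 - P.b c y y * P.b c P.p P.p)) / P.b c P.p P.p
  have hTc : ∀ e, Continuous (fun q : ℝ × (Fin 3 → ℝ) => T e q.1 q.2) := by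
    intro e
    have a1 : Continuous (fun q : ℝ × (Fin 3 → ℝ) => P.b q.1 q.2 P.p) :=
      P.b_cont.comp (by fun_prop : Continuous fun q : ℝ × (Fin 3 → ℝ) => (q.1, q.2, P.p))
    have a2 : Continuous (fun q : ℝ × (Fin 3 → ℝ) => P.b q.1 q.2 q.2) :=
      P.b_cont.comp (by fun_prop : Continuous fun q : ℝ × (Fin 3 → ℝ) => (q.1, q.2, q.2))
    have a3 : Continuous (fun q : ℝ × (Fin 3 → ℝ) => P.b q.1 P.p P.p) :=
      P.b_cont.comp (by fun_prop : Continuous fun q : ℝ × (Fin 3 → ℝ) => (q.1, P.p, P.p))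
    apply Continuous.div _ a3 (fun q => (hpp q.1).ne')
    fun_prop
  have hT0 : ∀ e, T e s0 k = 0 := by
    intro e
    simp [T, h.bk']
  have hX : ∀ e, ∃ η > 0, ∀ c y, |c - s0| < η → dist y k < η → dist (y + T e c y • P.p) k < δ := by
    intro e
    have hc : Continuous (fun q : ℝ × (Fin 3 → ℝ) => q.2 + T e q.1 q.2 • P.p) := by
      have := hTc e
      fun_prop
    have := (hc.continuousAt (x := (s0, k))).eventually (Metric.ball_mem_nhds _ hδ)
    obtain ⟨η, hη, he⟩ := Metric.eventually_nhds_iff.1 this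
    refine ⟨η, hη, fun c y hcd hy => ?_⟩
    have := he (y := (c, y)) (by
      rw [Prod.dist_eq]; exact max_lt (by rw [Real.dist_eq]; exact hcd) hy)
    simpa [hT0] using this
  obtain ⟨η1, hη1, hX1⟩ := hX 1
  obtain ⟨η2, hη2, hX2⟩ := hX (-1)
  set η := min δ (min η1 η2) with hη
  have hη0 : 0 < η := by positivity
  refine ⟨η, hη0, ?_⟩
  have e3 : ∀ᶠ c in 𝓝 s0, |c - s0| < η := by
    filter_upwards [Metric.ball_mem_nhds s0 hη0] with c hc
    simpa [Real.dist_eq] using hc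
  filter_upwards [e3.filter_mono nhdsWithin_le_nhds, h.disc w hw] with c hc hD g hg y hy z hz hyd hzd hyz
  have hcδ : |c - s0| < δ := hc.trans_le (min_le_left _ _)
  -- the general construction
  have main : ∀ e : ℝ, e ^ 2 = 1 →
      (∀ y, dist y k < η → dist (y + T e c y • P.p) k < δ) →
      T e c y = 0 → T e c z = 0 → g y = g z := by
    intro e he hXe hTy hTz
    set γ : ℝ → Fin 3 → ℝ := fun u => (1 - u) • y + u • z with hγ
    have hγc : Continuous γ := by fun_prop
    have hγb : ∀ u ∈ Icc (0:ℝ) 1, dist (γ u) k < η := by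
      intro u hu
      exact (convex_ball k η) (show y ∈ Metric.ball k η from hyd) (show z ∈ Metric.ball k η from hzd)
        (by linarith [hu.2]) hu.1 (by ring)
    have key := path_const hg.1 (fun u => γ u + T e c (γ u) • P.p) (by
      have := (hTc e).comp (by fun_prop : Continuous fun u : ℝ => (c, γ u))
      simp only [Function.comp_def] at this
      fun_prop) (by
      intro u hu
      have h1 := hXe _ (hγb u hu)
      have h2 := hloc c _ hcδ h1
      refine ⟨h2.1, ?_⟩
      rw [h2.2]
      simp only [b_add_left, b_add_right, b_smul_left, b_smul_right, P.b_symm c P.p (γ u)]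
      have hDu := hD (γ u)
      unfold D at hDu
      have hs := Real.sq_sqrt (show 0 ≤ P.b c (γ u) P.p ^ 2 - P.b c (γ u) (γ u) * P.b c P.p P.p by nlinarith)
      simp only [T]
      set S := √(P.b c (γ u) P.p ^ 2 - P.b c (γ u) (γ u) * P.b c P.p P.p)
      have h0 := (hpp c).ne'
      field_simp
      linear_combination e ^ 2 * hs + (P.b c (γ u) P.p ^ 2 - P.b c (γ u) (γ u) * P.b c P.p P.p) * he)
    have g0 : γ 0 = y := by simp [hγ]
    have g1 : γ 1 = z := by simp [hγ]
    simp only [g0, g1, hTy, hTz, zero_smul, add_zero] at key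
    exact key
  have q : ∀ y ∈ P.Z c, dist y k < η → P.b c y y = 0 := by
    intro y hy hyd
    have := (hloc c y hcδ (hyd.trans_le (min_le_left _ _))).2
    rw [hy.2] at this
    exact this.symm
  have qy := q y hy hyd
  have qz := q z hz hzd
  have l1 : η ≤ η1 := (min_le_right _ _).trans (min_le_left _ _)
  have l2 : η ≤ η2 := (min_le_right _ _).trans (min_le_right _ _)
  by_cases hs : 0 ≤ P.b c y P.p
  · have hs' := hyz.1 hs
    refine main 1 (by norm_num) (fun y hy => hX1 c y (hc.trans_le l1) (hy.trans_le l1)) ?_ ?_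
    · simp [T, qy, Real.sqrt_sq hs]
    · simp [T, qz, Real.sqrt_sq hs']
  · have hs' : ¬ 0 ≤ P.b c z P.p := fun h => hs (hyz.2 h)
    push Not at hs hs'
    refine main (-1) (by norm_num) (fun y hy => hX2 c y (hc.trans_le l2) (hy.trans_le l2)) ?_ ?_
    · simp [T, qy, Real.sqrt_sq_eq_abs, abs_of_neg hs]
    · simp [T, qz, Real.sqrt_sq_eq_abs, abs_of_neg hs']

end Pen

namespace Pen
variable (P : Pen)

theorem B.mono {P : Pen} {n m : ℕ} {c : ℝ} (h : P.B n c) (hnm : n ≤ m) : P.B m c :=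
  fun g hg => (h g hg).trans (by exact_mod_cast hnm)

theorem lc_near_neg {c r : ℝ} {x : Fin 3 → ℝ} {g : (Fin 3 → ℝ) → ℕ} (hg : LC (P.Z c) g)
    (h : ∀ y ∈ P.Z c, ∀ z ∈ P.Z c, dist y x < r → dist z x < r → g y = g z) :
    ∀ y ∈ P.Z c, ∀ z ∈ P.Z c, dist y (-x) < r → dist z (-x) < r → g y = g z := by
  intro y hy z hz hyd hzd
  rw [← lc_neg hg hy, ← lc_neg hg hz]
  refine h _ (P.neg_memZ hy) _ (P.neg_memZ hz) ?_ ?_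
  · rwa [← dist_neg_neg, neg_neg]
  · rwa [← dist_neg_neg, neg_neg]

theorem ne_near_neg {c r : ℝ} {x : Fin 3 → ℝ} (h : ∃ y ∈ P.Z c, dist y x < r) :
    ∃ y ∈ P.Z c, dist y (-x) < r := by
  obtain ⟨y, hy, hd⟩ := h
  exact ⟨-y, P.neg_memZ hy, by rwa [dist_neg_neg]⟩

theorem right_gen {s0 : ℝ} {n : ℕ} (G : ℝ → ((Fin 3 → ℝ) → ℕ) → Prop)
    (hG : ∀ c g, G c g → LC (P.Z c) g)
    (hCN : ∀ x, P.UpV s0 x → ∃ η > 0, ∀ᶠ c in 𝓝[>] s0, ∀ g, G c g →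
      ∀ y ∈ P.Z c, ∀ z ∈ P.Z c, dist y x < η → dist z x < η → g y = g z)
    (hB : P.B n s0) :
    ∀ᶠ c in 𝓝[>] s0, ∀ g, G c g → (g '' P.Z c).encard ≤ n := by
  refine P.right_core s0 n G hG ?_ ?_ hB
  · intro x hx ρ hρ
    by_cases hv : P.M (P.sg s0 x) *ᵥ x = 0
    · exact (P.crit hx hv).neR ρ hρ
    · exact (P.nc_ne s0 x hx.1 hv ρ hρ).filter_mono nhdsWithin_le_nhds
  · intro x hx
    by_cases hv : P.M (P.sg s0 x) *ᵥ x = 0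
    · exact hCN x (P.crit hx hv)
    · obtain ⟨η, hη, h⟩ := P.nc_cn s0 x hx.1 hv
      refine ⟨η, hη, ?_⟩
      filter_upwards [h.filter_mono nhdsWithin_le_nhds] with c hc g hg
      exact hc g (hG c g hg)

/-- the set of upward roots -/
def upS : Set ℝ := {s | ∃ k, P.UpV s k}

/-- semidefinite member -/
def K1 (s : ℝ) : Prop := ∀ w, 0 ≤ P.b s w w

theorem right_step0 {s0 : ℝ} {n : ℕ} (h : s0 ∉ P.upS ∨ P.K1 s0) (hB : P.B n s0) :
    ∀ᶠ c in 𝓝[>] s0, P.B n c := by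
  refine P.right_gen (fun c g => LC (P.Z c) g) (fun _ _ h => h) ?_ hB
  intro x hx
  rcases h with h | h
  · exact absurd ⟨x, hx⟩ h
  · exact hx.cnK1 h

theorem right_step2 {s0 : ℝ} {n : ℕ} (h : ¬ P.K1 s0) (hB : P.B n s0) :
    ∀ᶠ c in 𝓝[>] s0, P.B (n + 1) c := by
  by_cases hup : s0 ∉ P.upS
  · exact (P.right_step0 (Or.inl hup) hB).mono fun c hc => hc.mono (by omega)
  obtain ⟨k, hk⟩ := not_not.1 hup
  unfold K1 at h
  push Not at h
  obtain ⟨w, hw⟩ := h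
  obtain ⟨η, hη, hc2⟩ := hk.cnK2 w hw
  have := P.right_gen (s0 := s0) (n := n) (fun c g => LC (P.Z c) g ∧ ∀ y ∈ P.Z c, ∀ z ∈ P.Z c,
    dist y k < η → dist z k < η → g y = g z) (fun _ _ h => h.1) (by
    intro x hx
    refine ⟨η, hη, Eventually.of_forall ?_⟩
    rintro c g ⟨hg, hgk⟩
    rcases hk.pm hx.unit hx.ker with rfl | rfl
    · exact hgk
    · exact P.lc_near_neg hg hgk) hB
  filter_upwards [this, hc2] with c hc hc2 g hg
  -- representatives
  have hrep : ∀ q : Prop, ∃ a : ℕ, ∀ y ∈ P.Z c, dist y k < η → (0 ≤ P.b c y P.p ↔ q) → g y = a := by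
    intro q
    by_cases hex : ∃ y ∈ P.Z c, dist y k < η ∧ (0 ≤ P.b c y P.p ↔ q)
    · obtain ⟨y, hy, hd, hq⟩ := hex
      refine ⟨g y, fun z hz hzd hzq => hc2 g hg z hz y hy hzd hd (hzq.trans hq.symm)⟩
    · exact ⟨0, fun z hz hzd hzq => absurd ⟨z, hz, hzd, hzq⟩ hex⟩
  obtain ⟨a, ha⟩ := hrep True
  obtain ⟨b, hb⟩ := hrep False
  have hval : ∀ y ∈ P.Z c, dist y k < η → g y = a ∨ g y = b := by
    intro y hy hd
    by_cases hs : 0 ≤ P.b c y P.p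
    · left; exact ha y hy hd (by simpa using hs)
    · right; exact hb y hy hd (by simpa using hs)
  let m : ℕ → ℕ := fun v => if v = b then a else v
  have hm := hc (m ∘ g) ⟨⟨(continuous_of_discreteTopology (f := m)).comp_continuousOn hg.1,
    fun x hx d hd => by simp [hg.2 x hx d hd]⟩, ?_⟩
  · have hsub : g '' P.Z c ⊆ insert b ((m ∘ g) '' P.Z c) := by
      rintro _ ⟨y, hy, rfl⟩
      by_cases hyb : g y = b
      · left; exact hyb
      · right; exact ⟨y, hy, by simp [m, hyb]⟩
    calc (g '' P.Z c).encard ≤ _ := encard_le_encard hsub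
      _ ≤ ((m ∘ g) '' P.Z c).encard + 1 := encard_insert_le _ _
      _ ≤ n + 1 := by gcongr
      _ = ((n + 1 : ℕ) : ℕ∞) := by push_cast; rfl
  · have hma : ∀ y ∈ P.Z c, dist y k < η → (m ∘ g) y = a := by
      intro y hy hd
      rcases hval y hy hd with h | h <;> simp [m, h]
    intro y hy z hz hyd hzd
    rw [hma y hy hyd, hma z hz hzd]

theorem left_step0 {s0 : ℝ} {n : ℕ} (h : s0 ∉ P.upS ∨ ¬ P.K1 s0)
    (hB : ∀ᶠ b in 𝓝[<] s0, P.B n b) : P.B n s0 := by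
  intro g hg
  refine P.left_core s0 n hB g hg _ ?_
  rintro _ ⟨x, hx, rfl⟩
  refine ⟨_, P.unit_mem hx, lc_unit hg hx hx.1, fun ρ hρ => ?_⟩
  have hu := P.unit_mem hx
  generalize ‖x‖⁻¹ • x = u at hu
  by_cases hv : P.M (P.sg s0 u) *ᵥ u = 0
  · have hk := P.crit hu hv
    rcases h with h | h
    · exact absurd ⟨u, hk⟩ h
    · unfold K1 at h
      push Not at h
      obtain ⟨w, hw⟩ := h
      exact hk.neL w hw ρ hρ
  · exact (P.nc_ne s0 u hu.1 hv ρ hρ).filter_mono nhdsWithin_le_nhds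

theorem left_step1 {s0 : ℝ} {n : ℕ} (hB : ∀ᶠ b in 𝓝[<] s0, P.B n b) : P.B (n + 1) s0 := by
  by_cases hup : s0 ∉ P.upS
  · exact (P.left_step0 (Or.inl hup) hB).mono (by omega)
  obtain ⟨k, hk⟩ := not_not.1 hup
  intro g hg
  have := P.left_core s0 n hB g hg (g '' P.Z s0 \ {g k}) ?_
  · have hsub : g '' P.Z s0 ⊆ insert (g k) (g '' P.Z s0 \ {g k}) := by
      intro v hv
      by_cases h : v = g k
      · left; exact h
      · right; exact ⟨hv, h⟩
    calc (g '' P.Z s0).encard ≤ _ := encard_le_encard hsub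
      _ ≤ (g '' P.Z s0 \ {g k}).encard + 1 := encard_insert_le _ _
      _ ≤ n + 1 := by gcongr
      _ = ((n + 1 : ℕ) : ℕ∞) := by push_cast; rfl
  · rintro _ ⟨⟨x, hx, rfl⟩, hne⟩
    refine ⟨_, P.unit_mem hx, lc_unit hg hx hx.1, fun ρ hρ => ?_⟩
    have hu := P.unit_mem hx
    have hgu := lc_unit hg hx hx.1
    generalize ‖x‖⁻¹ • x = u at hu hgu
    by_cases hv : P.M (P.sg s0 u) *ᵥ u = 0
    · exfalso
      have hk' := P.crit hu hv
      apply hne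
      rw [mem_singleton_iff, ← hgu]
      rcases hk.pm hk'.unit hk'.ker with rfl | rfl
      · rfl
      · exact lc_neg hg hk.memK.1
    · exact (P.nc_ne s0 u hu.1 hv ρ hρ).filter_mono nhdsWithin_le_nhds

open Classical in
/-- counting function -/
noncomputable def N (c : ℝ) : ℕ := ({s ∈ P.upS | s < c ∨ (s = c ∧ P.K1 s)}).ncard

theorem sweep (hfin : P.upS.Finite) (a0 : ℝ) (h0 : P.B 0 a0) (c : ℝ) (hc : a0 ≤ c) :
    P.B P.upS.ncard c := by
  suffices P.B (P.N c) c from this.mono (ncard_le_ncard (fun s hs => hs.1) hfin)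
  by_contra hbad
  set S := {c | a0 ≤ c ∧ ¬ P.B (P.N c) c} with hS
  have hne : S.Nonempty := ⟨c, hc, hbad⟩
  have hbdd : BddBelow S := ⟨a0, fun x hx => hx.1⟩
  set s := sInf S with hs
  have has : a0 ≤ s := le_csInf hne fun x hx => hx.1
  have hlt : ∀ b, a0 ≤ b → b < s → P.B (P.N b) b := by
    intro b hb hbs
    by_contra hh
    exact absurd (csInf_le hbdd (show b ∈ S from ⟨hb, hh⟩)) (not_le.2 hbs)
  have hfs : ∀ p : ℝ → Prop, ({s ∈ P.upS | p s}).Finite := fun p => hfin.subset fun s hs => hs.1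
  have hBs : P.B (P.N s) s := by
    rcases has.eq_or_lt with h | h
    · rw [← h]; exact h0.mono (Nat.zero_le _)
    · set m := ({s' ∈ P.upS | s' < s}).ncard with hm
      have hl : ∀ᶠ b in 𝓝[<] s, P.B m b := by
        filter_upwards [Ioo_mem_nhdsLT h] with b hb
        refine (hlt b hb.1.le hb.2).mono (ncard_le_ncard ?_ (hfs _))
        rintro s' ⟨h1, h2⟩
        refine ⟨h1, ?_⟩
        rcases h2 with h2 | h2
        · exact h2.trans hb.2
        · rw [h2.1]; exact hb.2
      by_cases hk : s ∈ P.upS ∧ P.K1 s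
      · refine (P.left_step1 hl).mono ?_
        rw [hm, ← ncard_insert_of_notMem (a := s) (by simp) (hfs _)]
        refine ncard_le_ncard ?_ (hfs _)
        intro s' hs'
        rcases hs' with rfl | h'
        · exact ⟨hk.1, Or.inr ⟨rfl, hk.2⟩⟩
        · exact ⟨h'.1, Or.inl h'.2⟩
      · refine (P.left_step0 (by tauto) hl).mono ?_
        exact ncard_le_ncard (fun s' h' => ⟨h'.1, Or.inl h'.2⟩) (hfs _)
  have hr : ∀ᶠ c in 𝓝[>] s, P.B (P.N c) c := by
    by_cases hk : s ∉ P.upS ∨ P.K1 s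
    · filter_upwards [P.right_step0 hk hBs, self_mem_nhdsWithin] with c h1 hcs
      refine h1.mono (ncard_le_ncard ?_ (hfs _))
      rintro s' ⟨h1, h2⟩
      refine ⟨h1, Or.inl ?_⟩
      rcases h2 with h2 | h2
      · exact h2.trans hcs
      · rw [h2.1]; exact hcs
    · push Not at hk
      filter_upwards [P.right_step2 hk.2 hBs, self_mem_nhdsWithin] with c h1 hcs
      refine h1.mono ?_
      unfold N
      rw [← ncard_insert_of_notMem (a := s) (by simp; intro _ h; exact absurd h hk.2) (hfs _)]
      refine ncard_le_ncard ?_ (hfs _)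
      intro s' hs'
      rcases hs' with rfl | h'
      · exact ⟨hk.1, Or.inl hcs⟩
      · refine ⟨h'.1, Or.inl ?_⟩
        rcases h'.2 with h2 | h2
        · exact h2.trans hcs
        · rw [h2.1]; exact hcs
  obtain ⟨u, hu, hur⟩ := (mem_nhdsGT_iff_exists_Ioo_subset).1 hr
  obtain ⟨x, hx, hxu⟩ := exists_lt_of_csInf_lt hne (show sInf S < u from hu)
  have hsx : s ≤ x := csInf_le hbdd hx
  rcases hsx.eq_or_lt with h | h
  · rw [← h] at hx; exact hx.2 hBs
  · exact hx.2 (hur ⟨h, hxu⟩)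

end Pen

namespace Pen
variable (P : Pen)

theorem exists_R : ∃ R > 0, (∀ s : ℝ, R ≤ |s| → ∀ x, x ≠ 0 → 0 < P.b s x x) ∧
    ∀ x, x ≠ 0 → |bl P.M2 x x| ≤ R * bl P.M1 x x := by
  have hS := isCompact_sphere (0 : Fin 3 → ℝ) 1
  have c1 : Continuous (fun x : Fin 3 → ℝ => bl P.M1 x x) := continuous_bl _ continuous_id continuous_id
  have c2 : Continuous (fun x : Fin 3 → ℝ => bl P.M2 x x) := continuous_bl _ continuous_id continuous_id
  have c3 : Continuous (fun x : Fin 3 → ℝ => bl P.M3 x x) := continuous_bl _ continuous_id continuous_id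
  have hne : (Metric.sphere (0 : Fin 3 → ℝ) 1).Nonempty := NormedSpace.sphere_nonempty.2 zero_le_one
  obtain ⟨x0, hx0, hmin⟩ := hS.exists_isMinOn hne c1.continuousOn
  have hm : 0 < bl P.M1 x0 x0 := P.pd x0 (ne_zero_of_mem_unit_sphere ⟨x0, hx0⟩)
  set m := bl P.M1 x0 x0
  obtain ⟨C2, hC2⟩ := hS.exists_bound_of_continuousOn c2.continuousOn
  obtain ⟨C3, hC3⟩ := hS.exists_bound_of_continuousOn c3.continuousOn
  set C := max C2 C3 with hC
  have hC0 : 0 ≤ C := (norm_nonneg _).trans ((hC2 x0 hx0).trans (le_max_left _ _))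
  have hq : 0 ≤ 3 * C / m := by positivity
  have hcm : 3 * C / m * m = 3 * C := by field_simp
  have u1 : ∀ s : ℝ, 3 * C / m + 1 ≤ |s| → ∀ x ∈ Metric.sphere (0 : Fin 3 → ℝ) 1, 0 < P.b s x x := by
    intro s hs x hx
    have h1 : m ≤ bl P.M1 x x := hmin hx
    have h2 : |bl P.M2 x x| ≤ C := (hC2 x hx).trans (le_max_left _ _)
    have h3 : |bl P.M3 x x| ≤ C := (hC3 x hx).trans (le_max_right _ _)
    rw [b_eq]
    have hs1 : 1 ≤ |s| := by linarith
    have k1 : 3 * C + m ≤ |s| * m := by nlinarith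
    have k2 : |s * bl P.M2 x x| ≤ |s| * C := by rw [abs_mul]; gcongr
    have k3 := (abs_le.1 k2).1
    have k4 := (abs_le.1 h3).1
    have k5 : s ^ 2 * m ≤ s ^ 2 * bl P.M1 x x := by gcongr
    have k6 : s ^ 2 = |s| ^ 2 := (sq_abs s).symm
    have k7 : |s| * (3 * C + m) ≤ |s| * (|s| * m) := by gcongr
    nlinarith
  have u2 : ∀ x ∈ Metric.sphere (0 : Fin 3 → ℝ) 1, |bl P.M2 x x| ≤ (3 * C / m + 1) * bl P.M1 x x := by
    intro x hx
    have h1 : m ≤ bl P.M1 x x := hmin hx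
    have h2 : |bl P.M2 x x| ≤ C := (hC2 x hx).trans (le_max_left _ _)
    calc |bl P.M2 x x| ≤ C := h2
      _ ≤ (3 * C / m + 1) * m := by nlinarith
      _ ≤ _ := by gcongr
  have sc : ∀ x : Fin 3 → ℝ, x ≠ 0 → ∃ u ∈ Metric.sphere (0 : Fin 3 → ℝ) 1, ∃ r : ℝ, 0 < r ∧ x = r • u := by
    intro x hx
    have hn : ‖x‖ ≠ 0 := norm_ne_zero_iff.2 hx
    refine ⟨‖x‖⁻¹ • x, by simp [norm_smul, hn], ‖x‖, norm_pos_iff.2 hx, ?_⟩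
    rw [smul_smul, mul_inv_cancel₀ hn, one_smul]
  refine ⟨3 * C / m + 1, by positivity, ?_, ?_⟩
  · intro s hs x hx
    obtain ⟨u, hu, r, hr, rfl⟩ := sc x hx
    rw [b_smul_left, b_smul_right]
    have := u1 s hs u hu
    positivity
  · intro x hx
    obtain ⟨u, hu, r, hr, rfl⟩ := sc x hx
    simp only [bl_smul_left, bl_smul_right]
    have := u2 u hu
    rw [abs_mul, abs_mul, abs_of_pos hr]
    calc r * (r * |bl P.M2 u u|) ≤ r * (r * ((3 * C / m + 1) * bl P.M1 u u)) := by gcongr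
      _ = _ := by ring

theorem few_up (hfin : P.upS.Finite) (g : (Fin 3 → ℝ) → ℕ)
    (hg : LC {x | x ≠ 0 ∧ bl P.M1 x x * bl P.M3 x x - bl P.M2 x x ^ 2 = 0} g) :
    (g '' {x | x ≠ 0 ∧ bl P.M1 x x * bl P.M3 x x - bl P.M2 x x ^ 2 = 0}).encard ≤ P.upS.ncard := by
  obtain ⟨R, hR, h1, h2⟩ := P.exists_R
  have hB0 : P.B 0 (-R) := by
    intro g _
    have : P.Z (-R) = ∅ := by
      ext x
      simp only [mem_empty_iff_false, iff_false]
      rintro ⟨hx, hF⟩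
      have hs := P.sg_le (-R) x
      have := h1 (P.sg (-R) x) (by rw [abs_of_neg (by linarith)]; linarith) x hx
      unfold F at hF
      linarith
    simp [this]
  have hZ : P.Z R = {x | x ≠ 0 ∧ bl P.M1 x x * bl P.M3 x x - bl P.M2 x x ^ 2 = 0} := by
    ext x
    refine and_congr_right fun hx => ?_
    have hpd := P.pd x hx
    have hsg : P.sg R x = -bl P.M2 x x / bl P.M1 x x := by
      apply min_eq_right
      rw [div_le_iff₀ hpd]
      exact (neg_le_abs _).trans (h2 x hx)
    unfold F
    rw [hsg, b_eq]
    have : (-bl P.M2 x x / bl P.M1 x x) ^ 2 * bl P.M1 x x + 2 * (-bl P.M2 x x / bl P.M1 x x) * bl P.M2 x x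
      + bl P.M3 x x = (bl P.M1 x x * bl P.M3 x x - bl P.M2 x x ^ 2) / bl P.M1 x x := by
      field_simp; ring
    rw [this, div_eq_zero_iff]
    simp [hpd.ne']
  have := P.sweep hfin (-R) hB0 R (by linarith)
  rw [B, hZ] at this
  exact this g hg

/-- reversed pencil -/
def flip : Pen where
  M1 := P.M1
  M2 := -P.M2
  M3 := P.M3
  s1 := P.s1
  s2 := P.s2.neg
  s3 := P.s3
  pd := P.pd
  ker := by
    intro s k hk h
    have := P.ker (-s) k hk (by
      rw [← h]; congr 1; congr 2; · congr 1; ring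
      · rw [smul_neg, ← neg_smul]; congr 1; ring)
    intro h'
    apply this
    have e : bl (-P.M2) k k = - bl P.M2 k k := by simp [bl, neg_mulVec]
    rw [e] at h'
    linarith
  dim := by
    intro s k k' hk h h'
    have e : (s ^ 2 • P.M1 + (2 * s) • -P.M2 + P.M3) = ((-s) ^ 2 • P.M1 + (2 * -s) • P.M2 + P.M3) := by
      congr 2
      · congr 1; ring
      · rw [smul_neg, ← neg_smul]; congr 1; ring
    rw [e] at h h'
    exact P.dim (-s) k k' hk h h'
  p := P.p
  hp := by
    intro s
    have e : (s ^ 2 • P.M1 + (2 * s) • -P.M2 + P.M3) = ((-s) ^ 2 • P.M1 + (2 * -s) • P.M2 + P.M3) := by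
      congr 2
      · congr 1; ring
      · rw [smul_neg, ← neg_smul]; congr 1; ring
    rw [e]
    exact P.hp (-s)

theorem flip_M (s : ℝ) : P.flip.M s = P.M (-s) := by
  unfold M flip
  congr 2
  · congr 1; ring
  · simp only; rw [smul_neg, ← neg_smul]; congr 1; ring

open Polynomial in
/-- determinant polynomial -/
noncomputable def dp : ℝ[X] := Matrix.det (Matrix.of fun i j =>
  Polynomial.C (P.M1 i j) * X ^ 2 + Polynomial.C (2 * P.M2 i j) * X + Polynomial.C (P.M3 i j))

theorem dp_eval (s : ℝ) : P.dp.eval s = (P.M s).det := by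
  unfold dp M
  simp only [det_fin_three, of_apply, Polynomial.eval_sub, Polynomial.eval_add, Polynomial.eval_mul,
    Polynomial.eval_C, Polynomial.eval_pow, Polynomial.eval_X, Matrix.add_apply, Matrix.smul_apply,
    smul_eq_mul]
  ring

theorem dp_deg : P.dp.natDegree ≤ 6 := by
  unfold dp
  rw [det_fin_three]
  simp only [of_apply]
  compute_degree

theorem dp_ne : P.dp ≠ 0 := by
  obtain ⟨R, hR, h1, h2⟩ := P.exists_R
  intro h
  have h3 := P.dp_eval R
  rw [h, Polynomial.eval_zero] at h3
  obtain ⟨v, hv, hv0⟩ := (Matrix.exists_mulVec_eq_zero_iff).2 h3.symm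
  have := h1 R (by rw [abs_of_pos hR]) v hv
  unfold b bl at this
  rw [hv0] at this
  simp at this

theorem counts : P.upS.Finite ∧ P.flip.upS.Finite ∧ P.upS.ncard + P.flip.upS.ncard ≤ 6 := by
  have hr : ∀ s k, k ≠ 0 → P.M s *ᵥ k = 0 → s ∈ (P.dp.roots.toFinset : Set ℝ) := by
    intro s k hk h
    simp only [Multiset.mem_toFinset, Finset.mem_coe, Polynomial.mem_roots P.dp_ne, Polynomial.IsRoot.def,
      P.dp_eval]
    exact Matrix.exists_mulVec_eq_zero_iff.1 ⟨k, hk, h⟩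
  have h1 : P.upS ⊆ (P.dp.roots.toFinset : Set ℝ) := fun s ⟨k, hk⟩ => hr s k hk.ne0 hk.ker
  have h2 : (fun s => -s) '' P.flip.upS ⊆ (P.dp.roots.toFinset : Set ℝ) := by
    rintro _ ⟨s, ⟨k, hk⟩, rfl⟩
    refine hr _ k hk.ne0 ?_
    rw [← P.flip_M]; exact hk.ker
  have f1 : P.upS.Finite := (Finset.finite_toSet _).subset h1
  have f2 : ((fun s => -s) '' P.flip.upS).Finite := (Finset.finite_toSet _).subset h2
  have f2' : P.flip.upS.Finite := f2.of_finite_image (neg_injective.injOn)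
  refine ⟨f1, f2', ?_⟩
  have hdis : Disjoint P.upS ((fun s => -s) '' P.flip.upS) := by
    rw [Set.disjoint_left]
    rintro s ⟨k, hk⟩ ⟨s', ⟨k', hk'⟩, hs⟩
    simp only at hs
    have hker : P.M s *ᵥ k' = 0 := by rw [← hs, ← P.flip_M]; exact hk'.ker
    have hn := hk'.neg
    have e : bl P.flip.M2 k' k' = - bl P.M2 k' k' := by simp [bl, flip, neg_mulVec]
    have e1 : bl P.flip.M1 k' k' = bl P.M1 k' k' := rfl
    rw [e, e1] at hn
    have hn2 := hk.neg
    obtain rfl : s = -s' := hs.symm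
    rcases hk.pm hk'.unit hker with rfl | rfl
    · linarith
    · simp [bl, mulVec_neg] at hn hn2
      linarith
  rw [← ncard_image_of_injective P.flip.upS neg_injective, ← ncard_union_eq hdis f1 f2]
  calc _ ≤ (P.dp.roots.toFinset : Set ℝ).ncard := ncard_le_ncard (union_subset h1 h2) (Finset.finite_toSet _)
    _ = P.dp.roots.toFinset.card := ncard_coe_finset _
    _ ≤ P.dp.roots.card := Multiset.toFinset_card_le _
    _ ≤ P.dp.natDegree := P.dp.card_roots'
    _ ≤ 6 := P.dp_deg

theorem few (g : (Fin 3 → ℝ) → ℕ)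
    (hg : LC {x | x ≠ 0 ∧ bl P.M1 x x * bl P.M3 x x - bl P.M2 x x ^ 2 = 0} g) :
    (g '' {x | x ≠ 0 ∧ bl P.M1 x x * bl P.M3 x x - bl P.M2 x x ^ 2 = 0}).encard ≤ 3 := by
  obtain ⟨f1, f2, hc⟩ := P.counts
  have a1 := P.few_up f1 g hg
  have e : {x | x ≠ 0 ∧ bl P.flip.M1 x x * bl P.flip.M3 x x - bl P.flip.M2 x x ^ 2 = 0} =
      {x | x ≠ 0 ∧ bl P.M1 x x * bl P.M3 x x - bl P.M2 x x ^ 2 = 0} := by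
    ext x
    have : bl P.flip.M2 x x = - bl P.M2 x x := by simp [bl, flip, neg_mulVec]
    simp only [mem_setOf_eq, this, neg_sq]
    rfl
  have a2 := P.flip.few_up f2 g (by rw [e]; exact hg)
  rw [e] at a2
  by_cases h : P.upS.ncard ≤ 3
  · exact a1.trans (by exact_mod_cast h)
  · exact a2.trans (by exact_mod_cast (by omega : P.flip.upS.ncard ≤ 3))

end Pen

/-- real constants as polynomials -/
noncomputable def cR : ℝ →+* MvPolynomial (Fin 2) ℂ :=
  (MvPolynomial.C : ℂ →+* MvPolynomial (Fin 2) ℂ).comp (algebraMap ℝ ℂ)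

theorem dvd_det_of_kernel {R : Type*} [CommRing R] (L : R) (E : Matrix (Fin 3) (Fin 3) R)
    (h00 : L ^ 2 ∣ E 0 0) (h0j : ∀ j, L ∣ E 0 j) (hj0 : ∀ j, L ∣ E j 0) : L ^ 2 ∣ E.det := by
  obtain ⟨a, ha⟩ := h00
  obtain ⟨b, hb⟩ := h0j 1
  obtain ⟨c, hc⟩ := h0j 2
  obtain ⟨d, hd⟩ := hj0 1
  obtain ⟨e, he⟩ := hj0 2
  rw [det_fin_three, ha, hb, hc, hd, he]
  refine ⟨a * E 1 1 * E 2 2 - a * E 1 2 * E 2 1 - b * d * E 2 2 + b * E 1 2 * e + c * d * E 2 1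
    - c * E 1 1 * e, ?_⟩
  ring

theorem dvd_det_of_rows {R : Type*} [CommRing R] (L : R) (E : Matrix (Fin 3) (Fin 3) R)
    (h0j : ∀ j, L ∣ E 0 j) (h1j : ∀ j, L ∣ E 1 j) : L ^ 2 ∣ E.det := by
  obtain ⟨a, ha⟩ := h0j 0
  obtain ⟨b, hb⟩ := h0j 1
  obtain ⟨c, hc⟩ := h0j 2
  obtain ⟨d, hd⟩ := h1j 0
  obtain ⟨e, he⟩ := h1j 1
  obtain ⟨f, hf⟩ := h1j 2
  rw [det_fin_three, ha, hb, hc, hd, he, hf]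
  refine ⟨a * e * E 2 2 - a * f * E 2 1 - b * d * E 2 2 + b * f * E 2 0 + c * d * E 2 1
    - c * e * E 2 0, ?_⟩
  ring

/-- The pencil member (polarized). -/
def pol (M₁ M₂ M₃ : Matrix (Fin 3) (Fin 3) ℝ) (x y a b : ℝ) : Matrix (Fin 3) (Fin 3) ℝ :=
  (x * a) • M₁ + (x * b + y * a) • M₂ + (y * b) • M₃

open MvPolynomial in
theorem sextic_conj (M₁ M₂ M₃ P : Matrix (Fin 3) (Fin 3) ℝ) (x y : ℝ) :
    Matrix.det (((cR x * X 0 + cR y * X 1) ^ 2) • (Pᵀ * pol M₁ M₂ M₃ x y x y * P).map cR +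
      (2 * (cR x * X 0 + cR y * X 1) * (cR y * X 0 - cR x * X 1)) •
        (Pᵀ * pol M₁ M₂ M₃ x y y (-x) * P).map cR +
      ((cR y * X 0 - cR x * X 1) ^ 2) • (Pᵀ * pol M₁ M₂ M₃ y (-x) y (-x) * P).map cR) =
    cR ((x ^ 2 + y ^ 2) ^ 6 * P.det ^ 2) * binarySextic M₁ M₂ M₃ := by
  set S : Matrix (Fin 3) (Fin 3) (MvPolynomial (Fin 2) ℂ) := (Matrix.of fun i j =>
    X 0 ^ 2 * C (M₁ i j : ℂ) + 2 * X 0 * X 1 * C (M₂ i j : ℂ) + X 1 ^ 2 * C (M₃ i j : ℂ)) with hS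
  have h1 : (cR x * X 0 + cR y * X 1) ^ 2 • (pol M₁ M₂ M₃ x y x y).map cR +
      (2 * (cR x * X 0 + cR y * X 1) * (cR y * X 0 - cR x * X 1)) •
        (pol M₁ M₂ M₃ x y y (-x)).map cR +
      ((cR y * X 0 - cR x * X 1) ^ 2) • (pol M₁ M₂ M₃ y (-x) y (-x)).map cR =
      (cR ((x ^ 2 + y ^ 2) ^ 2)) • S := by
    ext1 i j
    have e : ∀ r : ℝ, (C (r : ℂ) : MvPolynomial (Fin 2) ℂ) = cR r := fun r => rfl
    simp only [hS, pol, Matrix.add_apply, Matrix.smul_apply, Matrix.map_apply, smul_eq_mul, of_apply, e,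
      map_add, map_mul, map_pow, map_neg]
    ring
  have h2 : (((cR x * X 0 + cR y * X 1) ^ 2) • (Pᵀ * pol M₁ M₂ M₃ x y x y * P).map cR +
      (2 * (cR x * X 0 + cR y * X 1) * (cR y * X 0 - cR x * X 1)) •
        (Pᵀ * pol M₁ M₂ M₃ x y y (-x) * P).map cR +
      ((cR y * X 0 - cR x * X 1) ^ 2) • (Pᵀ * pol M₁ M₂ M₃ y (-x) y (-x) * P).map cR) =
      (P.map cR)ᵀ * ((cR ((x ^ 2 + y ^ 2) ^ 2)) • S) * P.map cR := by
    rw [← h1]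
    simp only [Matrix.map_mul, Matrix.mul_add, Matrix.add_mul, Matrix.mul_smul, Matrix.smul_mul,
      Matrix.transpose_map]
  rw [h2, det_mul, det_mul, det_transpose, det_smul]
  have h3 : (P.map cR).det = cR P.det := (RingHom.map_det cR P).symm
  rw [h3]
  unfold binarySextic
  rw [← hS]
  simp only [map_mul, map_pow, Fintype.card_fin]
  ring

open MvPolynomial in
theorem not_sq_dvd {M₁ M₂ M₃ : Matrix (Fin 3) (Fin 3) ℝ}
    (hsf : Squarefree (binarySextic M₁ M₂ M₃)) (x y r : ℝ) (hr : r ≠ 0)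
    (h : (cR y * X 0 - cR x * X 1) ^ 2 ∣ cR r * binarySextic M₁ M₂ M₃) : False := by
  have hu : IsUnit (cR r) := (IsUnit.mk0 r hr).map cR
  have h1 : (cR y * X 0 - cR x * X 1) ^ 2 ∣ binarySextic M₁ M₂ M₃ := by
    exact (hu.dvd_mul_left).1 h
  rw [sq] at h1
  have h2 := hsf _ h1
  have h3 := h2.map (MvPolynomial.eval (![(x : ℂ), (y : ℂ)]))
  simp [cR] at h3
  apply h3
  ring

theorem exists_P1 (k : Fin 3 → ℝ) (hk : k ≠ 0) : ∃ P : Matrix (Fin 3) (Fin 3) ℝ, P.det ≠ 0 ∧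
    ∀ i, P i 0 = k i := by
  have : k 0 ≠ 0 ∨ k 1 ≠ 0 ∨ k 2 ≠ 0 := by
    by_contra h
    push Not at h
    apply hk
    ext i
    fin_cases i <;> simp [h]
  rcases this with h | h | h
  · refine ⟨!![k 0, 0, 0; k 1, 1, 0; k 2, 0, 1], by simpa [det_fin_three] using h, ?_⟩
    intro i; fin_cases i <;> rfl
  · refine ⟨!![k 0, 1, 0; k 1, 0, 0; k 2, 0, 1], by simpa [det_fin_three] using h, ?_⟩
    intro i; fin_cases i <;> rfl
  · refine ⟨!![k 0, 1, 0; k 1, 0, 1; k 2, 0, 0], by simpa [det_fin_three] using h, ?_⟩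
    intro i; fin_cases i <;> rfl

theorem exists_P2 (k l : Fin 3 → ℝ) (hk : k ≠ 0) (hl : ¬ ∃ c : ℝ, l = c • k) :
    ∃ P : Matrix (Fin 3) (Fin 3) ℝ, P.det ≠ 0 ∧ (∀ i, P i 0 = k i) ∧ ∀ i, P i 1 = l i := by
  refine ⟨!![k 0, l 0, k 1 * l 2 - k 2 * l 1; k 1, l 1, k 2 * l 0 - k 0 * l 2;
    k 2, l 2, k 0 * l 1 - k 1 * l 0], ?_, ?_, ?_⟩
  · intro h
    simp [det_fin_three] at h
    have h1 : (k 1 * l 2 - k 2 * l 1) ^ 2 + (k 2 * l 0 - k 0 * l 2) ^ 2 + (k 0 * l 1 - k 1 * l 0) ^ 2 = 0 := by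
      linarith
    have a1 : k 1 * l 2 - k 2 * l 1 = 0 := by nlinarith
    have a2 : k 2 * l 0 - k 0 * l 2 = 0 := by nlinarith
    have a3 : k 0 * l 1 - k 1 * l 0 = 0 := by nlinarith
    have : k 0 ≠ 0 ∨ k 1 ≠ 0 ∨ k 2 ≠ 0 := by
      by_contra h
      push Not at h
      apply hk
      ext i
      fin_cases i <;> simp [h]
    apply hl
    rcases this with h | h | h
    · refine ⟨l 0 / k 0, ?_⟩
      ext i
      fin_cases i <;> simp <;> field_simp <;> linarith
    · refine ⟨l 1 / k 1, ?_⟩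
      ext i
      fin_cases i <;> simp <;> field_simp <;> linarith
    · refine ⟨l 2 / k 2, ?_⟩
      ext i
      fin_cases i <;> simp <;> field_simp <;> linarith
  · intro i; fin_cases i <;> rfl
  · intro i; fin_cases i <;> rfl

theorem conj_entry (P M : Matrix (Fin 3) (Fin 3) ℝ) (i j : Fin 3) :
    (Pᵀ * M * P) i j = bl M (fun a => P a i) (fun a => P a j) := by
  simp only [bl, Matrix.mul_apply, dotProduct, mulVec, Fin.sum_univ_three, transpose_apply]
  ring

theorem pol_symm {M₁ M₂ M₃ : Matrix (Fin 3) (Fin 3) ℝ} (h1 : M₁.IsSymm) (h2 : M₂.IsSymm)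
    (h3 : M₃.IsSymm) (x y a b : ℝ) : (pol M₁ M₂ M₃ x y a b).IsSymm :=
  ((h1.smul _).add (h2.smul _)).add (h3.smul _)

theorem sqf_ker {M₁ M₂ M₃ : Matrix (Fin 3) (Fin 3) ℝ} (h1 : M₁.IsSymm) (h2 : M₂.IsSymm)
    (h3 : M₃.IsSymm) (hsf : Squarefree (binarySextic M₁ M₂ M₃)) (x y a b : ℝ)
    (hd : x * b - y * a ≠ 0) (k : Fin 3 → ℝ) (hk : k ≠ 0)
    (hker : pol M₁ M₂ M₃ x y x y *ᵥ k = 0) : bl (pol M₁ M₂ M₃ x y a b) k k ≠ 0 := by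
  intro h0
  obtain ⟨P, hP, hPk⟩ := exists_P1 k hk
  have hPk' : (fun i => P i 0) = k := funext hPk
  have hr : x ^ 2 + y ^ 2 ≠ 0 := by
    intro h
    have hx : x = 0 := by nlinarith
    have hy : y = 0 := by nlinarith
    simp [hx, hy] at hd
  have hz : ∀ v, bl (pol M₁ M₂ M₃ x y x y) v k = 0 := by intro v; unfold bl; rw [hker]; simp
  have hz' : ∀ v, bl (pol M₁ M₂ M₃ x y x y) k v = 0 := by
    intro v; rw [bl_symm (pol_symm h1 h2 h3 _ _ _ _)]; exact hz v
  have hpk : bl (pol M₁ M₂ M₃ x y y (-x)) k k = 0 := by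
    have e1 := hz k
    simp only [pol, bl_add_mat, bl_smul_mat] at e1 h0 ⊢
    have : (x * b - y * a) * (x * y * bl M₁ k k + (x * -x + y * y) * bl M₂ k k + y * -x * bl M₃ k k) = 0 := by
      linear_combination (a * x + b * y) * e1 - (x ^ 2 + y ^ 2) * h0
    exact (mul_eq_zero.1 this).resolve_left hd
  refine not_sq_dvd hsf x y ((x ^ 2 + y ^ 2) ^ 6 * P.det ^ 2) (by positivity) ?_
  rw [← sextic_conj M₁ M₂ M₃ P x y]
  apply dvd_det_of_kernel
  · simp only [Matrix.add_apply, Matrix.smul_apply, Matrix.map_apply, smul_eq_mul, conj_entry, hPk', hz, hpk]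
    simp
  · intro j
    simp only [Matrix.add_apply, Matrix.smul_apply, Matrix.map_apply, smul_eq_mul, conj_entry, hPk', hz',
      map_zero, mul_zero, zero_add]
    exact dvd_add (Dvd.dvd.mul_right (Dvd.intro_left _ rfl) _) (Dvd.dvd.mul_right (dvd_pow_self _ two_ne_zero) _)
  · intro j
    simp only [Matrix.add_apply, Matrix.smul_apply, Matrix.map_apply, smul_eq_mul, conj_entry, hPk', hz,
      map_zero, mul_zero, zero_add]
    exact dvd_add (Dvd.dvd.mul_right (Dvd.intro_left _ rfl) _) (Dvd.dvd.mul_right (dvd_pow_self _ two_ne_zero) _)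

theorem sqf_dim {M₁ M₂ M₃ : Matrix (Fin 3) (Fin 3) ℝ} (h1 : M₁.IsSymm) (h2 : M₂.IsSymm)
    (h3 : M₃.IsSymm) (hsf : Squarefree (binarySextic M₁ M₂ M₃)) (x y : ℝ)
    (hr : x ^ 2 + y ^ 2 ≠ 0) (k l : Fin 3 → ℝ) (hk : k ≠ 0)
    (hker : pol M₁ M₂ M₃ x y x y *ᵥ k = 0) (hker' : pol M₁ M₂ M₃ x y x y *ᵥ l = 0) :
    ∃ c : ℝ, l = c • k := by
  by_contra hl
  obtain ⟨P, hP, hPk, hPl⟩ := exists_P2 k l hk hl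
  have hPk' : (fun i => P i 0) = k := funext hPk
  have hPl' : (fun i => P i 1) = l := funext hPl
  have hz' : ∀ v, bl (pol M₁ M₂ M₃ x y x y) k v = 0 := by
    intro v; rw [bl_symm (pol_symm h1 h2 h3 _ _ _ _)]; unfold bl; rw [hker]; simp
  have hw' : ∀ v, bl (pol M₁ M₂ M₃ x y x y) l v = 0 := by
    intro v; rw [bl_symm (pol_symm h1 h2 h3 _ _ _ _)]; unfold bl; rw [hker']; simp
  refine not_sq_dvd hsf x y ((x ^ 2 + y ^ 2) ^ 6 * P.det ^ 2) (by positivity) ?_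
  rw [← sextic_conj M₁ M₂ M₃ P x y]
  apply dvd_det_of_rows
  · intro j
    simp only [Matrix.add_apply, Matrix.smul_apply, Matrix.map_apply, smul_eq_mul, conj_entry, hPk', hz',
      map_zero, mul_zero, zero_add]
    exact dvd_add (Dvd.dvd.mul_right (Dvd.intro_left _ rfl) _) (Dvd.dvd.mul_right (dvd_pow_self _ two_ne_zero) _)
  · intro j
    simp only [Matrix.add_apply, Matrix.smul_apply, Matrix.map_apply, smul_eq_mul, conj_entry, hPl', hw',
      map_zero, mul_zero, zero_add]
    exact dvd_add (Dvd.dvd.mul_right (Dvd.intro_left _ rfl) _) (Dvd.dvd.mul_right (dvd_pow_self _ two_ne_zero) _)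

theorem bl_pol (M₁ M₂ M₃ : Matrix (Fin 3) (Fin 3) ℝ) (x y a b : ℝ) (v w : Fin 3 → ℝ) :
    bl (pol M₁ M₂ M₃ x y a b) v w =
      (x * a) * bl M₁ v w + (x * b + y * a) * bl M₂ v w + (y * b) * bl M₃ v w := by
  simp [pol, bl_add_mat, bl_smul_mat]

theorem few_of_def {M₁ M₂ M₃ : Matrix (Fin 3) (Fin 3) ℝ} (h1 : M₁.IsSymm) (h2 : M₂.IsSymm)
    (h3 : M₃.IsSymm) (hsf : Squarefree (binarySextic M₁ M₂ M₃)) (a b e : ℝ)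
    (hd : ∀ x, x ≠ 0 → 0 < e * bl (pol M₁ M₂ M₃ a b a b) x x) (p : Fin 3 → ℝ)
    (hp : 0 < bl M₁ p p * bl M₃ p p - bl M₂ p p ^ 2) (g : (Fin 3 → ℝ) → ℕ)
    (hg : LC {x | x ≠ 0 ∧ bl M₁ x x * bl M₃ x x - bl M₂ x x ^ 2 = 0} g) :
    (g '' {x | x ≠ 0 ∧ bl M₁ x x * bl M₃ x x - bl M₂ x x ^ 2 = 0}).encard ≤ 3 := by
  have hp0 : p ≠ 0 := by
    rintro rfl
    simp [bl] at hp
  have hdp := hd p hp0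
  have he : e ≠ 0 := by rintro rfl; simp at hdp
  have hr : a ^ 2 + b ^ 2 ≠ 0 := by
    intro h
    have ha : a = 0 := by nlinarith
    have hb : b = 0 := by nlinarith
    simp [ha, hb, bl_pol] at hdp
  have key : ∀ s : ℝ, s ^ 2 • (e • pol M₁ M₂ M₃ a b a b) + (2 * s) • (e • pol M₁ M₂ M₃ a b (-b) a) +
      e • pol M₁ M₂ M₃ (-b) a (-b) a = e • pol M₁ M₂ M₃ (s * a - b) (s * b + a) (s * a - b) (s * b + a) := by
    intro s
    ext i j
    simp [pol]
    ring
  have kk : ∀ s : ℝ, ∀ k : Fin 3 → ℝ, (s ^ 2 • (e • pol M₁ M₂ M₃ a b a b) +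
      (2 * s) • (e • pol M₁ M₂ M₃ a b (-b) a) + e • pol M₁ M₂ M₃ (-b) a (-b) a) *ᵥ k = 0 →
      pol M₁ M₂ M₃ (s * a - b) (s * b + a) (s * a - b) (s * b + a) *ᵥ k = 0 := by
    intro s k hk
    rw [key, smul_mulVec] at hk
    exact (smul_eq_zero.1 hk).resolve_left he
  have hf : ∀ x : Fin 3 → ℝ, bl (e • pol M₁ M₂ M₃ a b a b) x x * bl (e • pol M₁ M₂ M₃ (-b) a (-b) a) x x
      - bl (e • pol M₁ M₂ M₃ a b (-b) a) x x ^ 2 =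
      (e * (a ^ 2 + b ^ 2)) ^ 2 * (bl M₁ x x * bl M₃ x x - bl M₂ x x ^ 2) := by
    intro x
    simp only [bl_smul_mat, bl_pol]
    ring
  let P : Pen :=
    { M1 := e • pol M₁ M₂ M₃ a b a b
      M2 := e • pol M₁ M₂ M₃ a b (-b) a
      M3 := e • pol M₁ M₂ M₃ (-b) a (-b) a
      s1 := (pol_symm h1 h2 h3 _ _ _ _).smul _
      s2 := (pol_symm h1 h2 h3 _ _ _ _).smul _
      s3 := (pol_symm h1 h2 h3 _ _ _ _).smul _
      pd := fun x hx => by rw [bl_smul_mat]; exact hd x hx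
      ker := by
        intro s k hk hker h0
        refine sqf_ker h1 h2 h3 hsf (s * a - b) (s * b + a) a b ?_ k hk (kk s k hker) ?_
        · intro h
          apply hr
          linarith
        · simp only [bl_smul_mat, bl_pol] at h0 ⊢
          apply mul_left_cancel₀ he
          rw [mul_zero, ← h0]
          ring
      dim := by
        intro s k k' hk hker hker'
        refine sqf_dim h1 h2 h3 hsf (s * a - b) (s * b + a) ?_ k k' hk (kk s k hker) (kk s k' hker')
        have : (s * a - b) ^ 2 + (s * b + a) ^ 2 = (s ^ 2 + 1) * (a ^ 2 + b ^ 2) := by ring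
        rw [this]
        positivity
      p := p
      hp := by
        intro s
        have h := hf p
        have hpos : 0 < (e * (a ^ 2 + b ^ 2)) ^ 2 * (bl M₁ p p * bl M₃ p p - bl M₂ p p ^ 2) := by
          positivity
        rw [← h] at hpos
        rw [← bl_smul_mat] at hdp
        simp only [bl_add_mat, bl_smul_mat _ (_ • _)]
        generalize bl (e • pol M₁ M₂ M₃ a b a b) p p = A at *
        generalize bl (e • pol M₁ M₂ M₃ a b (-b) a) p p = B at *
        generalize bl (e • pol M₁ M₂ M₃ (-b) a (-b) a) p p = C at *
        have : 0 < A * (s ^ 2 * A + 2 * s * B + C) := by nlinarith [sq_nonneg (s * A + B)]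
        exact (mul_pos_iff_of_pos_left hdp).1 this }
  have hs : {x | x ≠ 0 ∧ bl P.M1 x x * bl P.M3 x x - bl P.M2 x x ^ 2 = 0} =
      {x | x ≠ 0 ∧ bl M₁ x x * bl M₃ x x - bl M₂ x x ^ 2 = 0} := by
    ext x
    have hne : (e * (a ^ 2 + b ^ 2)) ^ 2 ≠ 0 := by positivity
    have := hf x
    simp only [P, mem_setOf_eq]
    rw [this]
    simp only [mul_eq_zero, hne, false_or]
  have := P.few g
  rw [hs] at this
  exact this hg

theorem exists_zero_of_not_def (M : Matrix (Fin 3) (Fin 3) ℝ)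
    (h : ¬ ∃ e : ℝ, ∀ x, x ≠ 0 → 0 < e * bl M x x) : ∃ x, x ≠ 0 ∧ bl M x x = 0 := by
  push Not at h
  obtain ⟨x, hx, hx1⟩ := h 1
  obtain ⟨y, hy, hy1⟩ := h (-1)
  have hc : IsConnected ({0}ᶜ : Set (Fin 3 → ℝ)) :=
    isConnected_compl_singleton_of_one_lt_rank (by simp) 0
  have := hc.isPreconnected.intermediate_value (a := x) (b := y) hx hy
    (f := fun v => bl M v v) (continuous_bl M continuous_id continuous_id).continuousOn
  obtain ⟨z, hz, hz0⟩ := this (show (0:ℝ) ∈ _ from ⟨by linarith, by linarith⟩)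
  exact ⟨z, hz, hz0⟩

theorem disc_of_zero {A B C a b : ℝ} (ht : (a, b) ≠ 0)
    (h : (a * a) * A + (a * b + b * a) * B + (b * b) * C = 0) : A * C - B ^ 2 ≤ 0 := by
  by_contra hf
  push Not at hf
  have h1 : (a * A + b * B) ^ 2 + b ^ 2 * (A * C - B ^ 2) = 0 := by linear_combination A * h
  have hb : b ^ 2 * (A * C - B ^ 2) ≤ 0 := by nlinarith [sq_nonneg (a * A + b * B)]
  have hb0 : b = 0 := by
    by_contra hb0
    have : 0 < b ^ 2 * (A * C - B ^ 2) := by positivity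
    linarith
  subst hb0
  have ha : a ≠ 0 := by rintro rfl; exact ht rfl
  have hA : A = 0 := by simpa [ha] using h
  subst hA
  nlinarith [sq_nonneg B]

theorem zero_of_disc {A B C : ℝ} (h : A * C - B ^ 2 ≤ 0) : ∃ a b : ℝ, (a, b) ≠ 0 ∧
    (a * a) * A + (a * b + b * a) * B + (b * b) * C = 0 := by
  by_cases hA : A = 0
  · exact ⟨1, 0, by simp, by simp [hA]⟩
  · refine ⟨-B + √(B ^ 2 - A * C), A, by simp [hA], ?_⟩
    have := Real.sq_sqrt (show 0 ≤ B ^ 2 - A * C by linarith)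
    linear_combination A * this

/-- the quartic -/
def ff (M₁ M₂ M₃ : Matrix (Fin 3) (Fin 3) ℝ) (x : Fin 3 → ℝ) : ℝ :=
  bl M₁ x x * bl M₃ x x - bl M₂ x x ^ 2

theorem ff_cont (M₁ M₂ M₃ : Matrix (Fin 3) (Fin 3) ℝ) : Continuous (ff M₁ M₂ M₃) := by
  unfold ff
  have h := fun M => continuous_bl M (continuous_id (X := Fin 3 → ℝ)) continuous_id
  exact ((h M₁).mul (h M₃)).sub ((h M₂).pow 2)

theorem ff_smul (M₁ M₂ M₃ : Matrix (Fin 3) (Fin 3) ℝ) (c : ℝ) (x : Fin 3 → ℝ) :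
    ff M₁ M₂ M₃ (c • x) = c ^ 4 * ff M₁ M₂ M₃ x := by
  simp only [ff, bl_smul_left, bl_smul_right]
  ring

theorem closed_T (M₁ M₂ M₃ : Matrix (Fin 3) (Fin 3) ℝ) (A : Set (Fin 3 → ℝ)) (hA : IsCompact A) :
    IsClosed {t : ℝ × ℝ | ∃ x ∈ A, bl (pol M₁ M₂ M₃ t.1 t.2 t.1 t.2) x x = 0} := by
  have := isCompact_iff_compactSpace.1 hA
  have hc : IsClosed {p : (ℝ × ℝ) × A | bl (pol M₁ M₂ M₃ p.1.1 p.1.2 p.1.1 p.1.2) p.2.1 p.2.1 = 0} := by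
    refine isClosed_eq ?_ continuous_const
    simp only [bl_pol]
    have h := fun M => continuous_bl M (show Continuous fun p : (ℝ × ℝ) × A => p.2.1 by fun_prop)
      (show Continuous fun p : (ℝ × ℝ) × A => p.2.1 by fun_prop)
    have := h M₁
    have := h M₂
    have := h M₃
    fun_prop
  have := isClosedMap_fst_of_compactSpace (X := ℝ × ℝ) (Y := A) _ hc
  convert this using 1
  ext t
  simp

theorem le_const {M₁ M₂ M₃ : Matrix (Fin 3) (Fin 3) ℝ} (h1 : M₁.IsSymm) (h2 : M₂.IsSymm)
    (h3 : M₃.IsSymm)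
    (hnd : ∀ a b : ℝ, ¬ ∃ e : ℝ, ∀ x, x ≠ 0 → 0 < e * bl (pol M₁ M₂ M₃ a b a b) x x)
    (g : (Fin 3 → ℝ) → ℕ) (hg : LC {x | x ≠ 0 ∧ ff M₁ M₂ M₃ x ≤ 0} g)
    (x y : Fin 3 → ℝ) (hx : x ∈ {x | x ≠ 0 ∧ ff M₁ M₂ M₃ x ≤ 0})
    (hy : y ∈ {x | x ≠ 0 ∧ ff M₁ M₂ M₃ x ≤ 0}) : g x = g y := by
  by_contra hne
  set K := {x | x ≠ 0 ∧ ff M₁ M₂ M₃ x ≤ 0} with hK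
  set S := K ∩ Metric.sphere 0 1 with hS
  have hSc : IsCompact S := by
    have : S = Metric.sphere 0 1 ∩ {x | ff M₁ M₂ M₃ x ≤ 0} := by
      ext z
      constructor
      · rintro ⟨⟨h, h'⟩, h''⟩
        exact ⟨h'', h'⟩
      · rintro ⟨h, h'⟩
        refine ⟨⟨?_, h'⟩, h⟩
        rintro rfl
        simp at h
    rw [this]
    exact (isCompact_sphere _ _).inter_right (isClosed_le (ff_cont _ _ _) continuous_const)
  have hgS : ContinuousOn g S := hg.1.mono inter_subset_left
  have hcomp : ∀ V : Set ℕ, IsCompact (S ∩ g ⁻¹' V) := fun V =>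
    hSc.of_isClosed_subset (hgS.preimage_isClosed_of_isClosed hSc.isClosed (isClosed_discrete V))
      inter_subset_left
  have hconic : ∀ a b : ℝ, (a, b) ≠ 0 → {z | z ≠ 0 ∧ bl (pol M₁ M₂ M₃ a b a b) z z = 0} ⊆ K := by
    rintro a b hab z ⟨hz, hz'⟩
    rw [bl_pol] at hz'
    exact ⟨hz, disc_of_zero hab hz'⟩
  have hunit : ∀ z ∈ K, ‖z‖⁻¹ • z ∈ S ∧ g (‖z‖⁻¹ • z) = g z := by
    intro z hz
    have hz0 : ‖z‖ ≠ 0 := norm_ne_zero_iff.2 hz.1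
    refine ⟨⟨⟨smul_ne_zero (inv_ne_zero hz0) hz.1, ?_⟩, ?_⟩, hg.2 z hz _ (inv_ne_zero hz0)⟩
    · rw [ff_smul]
      exact mul_nonpos_of_nonneg_of_nonpos (by positivity) hz.2
    · simp [norm_smul, hz0]
  have hc : IsConnected ({0}ᶜ : Set (ℝ × ℝ)) :=
    isConnected_compl_singleton_of_one_lt_rank (by simp [one_add_one_eq_two]) 0
  have hmeet : ∀ V : Set ℕ, ∀ z ∈ K, g z ∈ V → (({0}ᶜ : Set (ℝ × ℝ)) ∩ {t : ℝ × ℝ | ∃ x ∈ S ∩ g ⁻¹' V,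
      bl (pol M₁ M₂ M₃ t.1 t.2 t.1 t.2) x x = 0}).Nonempty := by
    intro V z hz hzV
    obtain ⟨a, b, hab, h⟩ := zero_of_disc hz.2
    rw [← bl_pol] at h
    refine ⟨(a, b), hab, ‖z‖⁻¹ • z, ⟨(hunit z hz).1, ?_⟩, ?_⟩
    · simpa [(hunit z hz).2] using hzV
    · simp [bl_smul_left, bl_smul_right, h]
  obtain ⟨⟨a, b⟩, hab, ⟨u, ⟨hu, hu'⟩, hu0⟩, ⟨v, ⟨hv, hv'⟩, hv0⟩⟩ :=
    (isPreconnected_closed_iff.1 hc.isPreconnected) _ _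
    (closed_T M₁ M₂ M₃ _ (hcomp {g x})) (closed_T M₁ M₂ M₃ _ (hcomp {g x}ᶜ)) (by
      rintro ⟨a, b⟩ hab
      obtain ⟨z, hz, hz0⟩ := exists_zero_of_not_def _ (hnd a b)
      have hzK := hconic a b hab ⟨hz, hz0⟩
      have hz1 : bl (pol M₁ M₂ M₃ a b a b) (‖z‖⁻¹ • z) (‖z‖⁻¹ • z) = 0 := by
        simp [bl_smul_left, bl_smul_right, hz0]
      by_cases hgz : g z = g x
      · left
        exact ⟨‖z‖⁻¹ • z, ⟨(hunit z hzK).1, by simp [(hunit z hzK).2, hgz]⟩, hz1⟩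
      · right
        exact ⟨‖z‖⁻¹ • z, ⟨(hunit z hzK).1, by simp [(hunit z hzK).2, hgz]⟩, hz1⟩)
    (hmeet _ x hx rfl) (hmeet _ y hy (fun h => hne h.symm))
  have := conic_const (pol_symm h1 h2 h3 a b a b) (hg.mono (hconic a b hab)) hu.1.1 hv.1.1 hu0 hv0
  exact hv' (by rw [← this]; exact hu')

theorem decr_dir {f : (Fin 3 → ℝ) → ℝ} (hf : ContDiff ℝ 1 f) (z : Fin 3 → ℝ) 
    (hd : fderiv ℝ f z ≠ 0) : ∃ v : Fin 3 → ℝ, ∃ τ > 0, ∃ ρ > 0, ∀ x ∈ Metric.ball z ρ,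
      StrictAntiOn (fun t : ℝ => f (x + t • v)) (Icc 0 τ) := by
  obtain ⟨v, hv⟩ : ∃ v, fderiv ℝ f z v < 0 := by
    by_contra h
    push Not at h
    apply hd
    ext v
    have h1 := h v
    have h2 := h (-v)
    simp at h2
    simp
    linarith
  have hc : Continuous fun w => fderiv ℝ f w v :=
    (hf.continuous_fderiv (by simp)).clm_apply continuous_const
  have hev : ∀ᶠ w in 𝓝 z, fderiv ℝ f w v < 0 := hc.continuousAt.eventually_lt continuousAt_const hv
  obtain ⟨r, hr, hball⟩ := Metric.eventually_nhds_iff_ball.1 hev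
  refine ⟨v, r / (2 * (‖v‖ + 1)), by positivity, r / 2, by positivity, ?_⟩
  intro x hx
  have hder : ∀ t : ℝ, HasDerivAt (fun t : ℝ => f (x + t • v)) (fderiv ℝ f (x + t • v) v) t := by
    intro t
    have h1 : HasDerivAt (fun t : ℝ => x + t • v) v t := by
      simpa using ((hasDerivAt_id t).smul_const v).const_add x
    exact ((hf.differentiable (by simp)) _).hasFDerivAt.comp_hasDerivAt t h1
  apply strictAntiOn_of_deriv_neg (convex_Icc _ _)
  · exact fun t _ => (hder t).continuousAt.continuousWithinAt
  · intro t ht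
    rw [interior_Icc] at ht
    rw [(hder t).deriv]
    apply hball
    rw [Metric.mem_ball, dist_eq_norm] at hx ⊢
    have h2 : t * ‖v‖ ≤ r / 2 := by
      have := ht.2.le
      rw [le_div_iff₀ (by positivity)] at this
      nlinarith [ht.1, norm_nonneg v]
    calc ‖x + t • v - z‖ = ‖(x - z) + t • v‖ := by congr 1; abel
      _ ≤ ‖x - z‖ + ‖t • v‖ := norm_add_le _ _
      _ = ‖x - z‖ + t * ‖v‖ := by rw [norm_smul, Real.norm_of_nonneg ht.1.le]
      _ < r := by linarith

theorem loc_neg {f : (Fin 3 → ℝ) → ℝ} (hf : ContDiff ℝ 1 f) (z : Fin 3 → ℝ) (hz : f z = 0)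
    (hd : fderiv ℝ f z ≠ 0) : z ∈ closure {x | f x < 0} := by
  obtain ⟨v, τ, hτ, ρ, hρ, h⟩ := decr_dir hf z hd
  have h0 := h z (Metric.mem_ball_self hρ)
  have ht : Tendsto (fun t : ℝ => z + t • v) (𝓝[>] 0) (𝓝 z) := by
    have : Continuous fun t : ℝ => z + t • v := by fun_prop
    have := this.tendsto 0
    simp only [zero_smul, add_zero] at this
    exact this.mono_left nhdsWithin_le_nhds
  refine mem_closure_of_tendsto ht ?_
  filter_upwards [Ioc_mem_nhdsGT hτ] with t ht
  have := h0 (left_mem_Icc.2 hτ.le) ⟨ht.1.le, ht.2⟩ ht.1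
  simpa [hz] using this

theorem loc_const {f : (Fin 3 → ℝ) → ℝ} (hf : ContDiff ℝ 1 f) (z : Fin 3 → ℝ) (hz : f z = 0)
    (hd : fderiv ℝ f z ≠ 0) (g : (Fin 3 → ℝ) → ℕ) (hg : ContinuousOn g {x | f x < 0}) :
    ∃ n, ∀ᶠ x in 𝓝 z, f x < 0 → g x = n := by
  obtain ⟨v, τ, hτ, ρ, hρ, h⟩ := decr_dir hf z hd
  have h0 := h z (Metric.mem_ball_self hρ)
  have hneg : f (z + τ • v) < 0 := by
    have := h0 (left_mem_Icc.2 hτ.le) (right_mem_Icc.2 hτ.le) hτ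
    simpa [hz] using this
  have hev : ∀ᶠ w in 𝓝 (z + τ • v), f w < 0 :=
    hf.continuous.continuousAt.eventually_lt continuousAt_const hneg
  obtain ⟨r, hr, hball⟩ := Metric.eventually_nhds_iff_ball.1 hev
  refine ⟨g (z + τ • v), ?_⟩
  filter_upwards [Metric.ball_mem_nhds z hρ, Metric.ball_mem_nhds z hr] with x hx hxr hfx
  have e1 := path_const hg (fun t => x + (t * τ) • v) (by fun_prop) (by
    intro t ht
    have h1 := (h x hx).antitoneOn (left_mem_Icc.2 hτ.le)
      (show t * τ ∈ Icc 0 τ from ⟨mul_nonneg ht.1 hτ.le, by nlinarith [ht.2]⟩)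
      (mul_nonneg ht.1 hτ.le)
    simp only [zero_smul, add_zero] at h1
    exact lt_of_le_of_lt h1 hfx)
  have hm : x + τ • v ∈ Metric.ball (z + τ • v) r := by simpa [dist_eq_norm] using hxr
  have e2 : g (x + τ • v) = g (z + τ • v) :=
    ((convex_ball (z + τ • v) r).isPreconnected).constant (hg.mono hball) hm
      (Metric.mem_ball_self hr)
  simp at e1
  rw [e1, e2]

theorem loc_pos {f : (Fin 3 → ℝ) → ℝ} (hf : ContDiff ℝ 1 f) (z : Fin 3 → ℝ) (hz : f z = 0)
    (hd : fderiv ℝ f z ≠ 0) : ∃ x, 0 < f x := by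
  have := loc_neg (f := fun x => - f x) hf.neg z (by simp [hz]) (by
    rw [fderiv_fun_neg]
    simpa using hd)
  obtain ⟨x, hx⟩ := closure_nonempty_iff.1 ⟨z, this⟩
  exact ⟨x, by simpa using hx⟩

theorem ff_contDiff (M₁ M₂ M₃ : Matrix (Fin 3) (Fin 3) ℝ) : ContDiff ℝ 1 (ff M₁ M₂ M₃) := by
  unfold ff bl dotProduct mulVec dotProduct
  fun_prop

theorem lt_const {M₁ M₂ M₃ : Matrix (Fin 3) (Fin 3) ℝ} (h1 : M₁.IsSymm) (h2 : M₂.IsSymm)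
    (h3 : M₃.IsSymm)
    (hnd : ∀ a b : ℝ, ¬ ∃ e : ℝ, ∀ x, x ≠ 0 → 0 < e * bl (pol M₁ M₂ M₃ a b a b) x x)
    (hsm : ∀ P : Fin 3 → ℝ, P ≠ 0 → ff M₁ M₂ M₃ P = 0 → fderiv ℝ (ff M₁ M₂ M₃) P ≠ 0)
    (g : (Fin 3 → ℝ) → ℕ) (hg : LC {x | ff M₁ M₂ M₃ x < 0} g)
    (x y : Fin 3 → ℝ) (hx : ff M₁ M₂ M₃ x < 0) (hy : ff M₁ M₂ M₃ y < 0) : g x = g y := by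
  have hloc : ∀ z, ∃ n, z ≠ 0 → ff M₁ M₂ M₃ z = 0 →
      ∀ᶠ x in 𝓝 z, ff M₁ M₂ M₃ x < 0 → g x = n := by
    intro z
    by_cases hz : z ≠ 0 ∧ ff M₁ M₂ M₃ z = 0
    · obtain ⟨n, hn⟩ := loc_const (ff_contDiff M₁ M₂ M₃) z hz.2 (hsm z hz.1 hz.2) g hg.1
      exact ⟨n, fun _ _ => hn⟩
    · exact ⟨0, fun ha hb => absurd ⟨ha, hb⟩ hz⟩
  choose n hn using hloc
  have hne0 : ∀ w, ff M₁ M₂ M₃ w < 0 → w ≠ 0 := by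
    rintro w hw rfl
    simp [ff, bl] at hw
  have huniq : ∀ z, z ≠ 0 → ff M₁ M₂ M₃ z = 0 → ∀ m,
      (∀ᶠ x in 𝓝 z, ff M₁ M₂ M₃ x < 0 → g x = m) → n z = m := by
    intro z hz hz0 m hm
    have hcl := loc_neg (ff_contDiff M₁ M₂ M₃) z hz0 (hsm z hz hz0)
    obtain ⟨w, hw, hwn, hwm⟩ := ((mem_closure_iff_frequently.1 hcl).and_eventually
      ((hn z hz hz0).and hm)).exists
    rw [← hwn hw, hwm hw]
  classical
  set G : (Fin 3 → ℝ) → ℕ := fun w => if ff M₁ M₂ M₃ w < 0 then g w else n w with hG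
  have hLC : LC {x | x ≠ 0 ∧ ff M₁ M₂ M₃ x ≤ 0} G := by
    constructor
    · rintro z ⟨hz, hz0⟩
      rw [ContinuousWithinAt, nhds_discrete, tendsto_pure]
      rcases lt_or_eq_of_le hz0 with hlt | heq
      · have hop : IsOpen {x | ff M₁ M₂ M₃ x < 0} := isOpen_lt (ff_cont _ _ _) continuous_const
        have hc := hg.1.continuousAt (hop.mem_nhds hlt)
        rw [ContinuousAt, nhds_discrete ℕ, tendsto_pure] at hc
        filter_upwards [mem_nhdsWithin_of_mem_nhds hc, mem_nhdsWithin_of_mem_nhds (hop.mem_nhds hlt)]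
          with w hw hw0
        have hw0' : ff M₁ M₂ M₃ w < 0 := hw0
        simpa [hG, hw0', hlt] using hw
      · filter_upwards [self_mem_nhdsWithin, mem_nhdsWithin_of_mem_nhds
          (eventually_eventually_nhds.2 (hn z hz heq))] with w hw hw'
        have hGz : G z = n z := by simp [hG, heq]
        rw [hGz]
        rcases lt_or_eq_of_le hw.2 with hwlt | hweq
        · simpa [hG, hwlt] using hw'.self_of_nhds hwlt
        · simp only [hG, hweq, lt_irrefl, if_false]
          exact huniq w hw.1 hweq _ hw'
    · rintro z ⟨hz, hz0⟩ c hc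
      have hc4 : 0 < c ^ 4 := by positivity
      have hs : ∀ w, ff M₁ M₂ M₃ (c • w) < 0 ↔ ff M₁ M₂ M₃ w < 0 := by
        intro w
        rw [ff_smul]
        exact ⟨fun h => by by_contra h0; exact absurd h (not_lt.2 (mul_nonneg hc4.le (not_lt.1 h0))), fun h => mul_neg_of_pos_of_neg hc4 h⟩
      rcases lt_or_eq_of_le hz0 with hlt | heq
      · simp only [hG, hs, hlt, if_true]
        exact hg.2 z hlt c hc
      · simp only [hG, hs, heq, lt_irrefl, if_false]
        symm
        apply huniq z hz heq
        have hcz := hn (c • z) (smul_ne_zero hc hz) (by rw [ff_smul, heq, mul_zero])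
        have ht : Tendsto (fun w : Fin 3 → ℝ => c • w) (𝓝 z) (𝓝 (c • z)) :=
          (continuous_const_smul c).tendsto z
        filter_upwards [ht.eventually hcz] with w hw hlt
        rw [← hw ((hs w).2 hlt)]
        exact (hg.2 w hlt c hc).symm
  have := le_const h1 h2 h3 hnd G hLC x y ⟨hne0 x hx, hx.le⟩ ⟨hne0 y hy, hy.le⟩
  simpa [hG, hx, hy] using this

open Classical in
/-- Pull back a function on projective space to the cone. -/
noncomputable def lft (φ : RP 3 → ℕ) (v : Fin 3 → ℝ) : ℕ :=
  if h : v ≠ 0 then φ (Quot.mk (projRel 3) ⟨v, h⟩) else 0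

theorem lft_eq (φ : RP 3 → ℕ) (v : {v : Fin 3 → ℝ // v ≠ 0}) :
    lft φ v = φ (Quot.mk (projRel 3) v) := by
  simp [lft, v.2]

theorem lft_LC (φ : RP 3 → ℕ) (S : Set (RP 3)) (hφ : ContinuousOn φ S) (K : Set (Fin 3 → ℝ))
    (hK : ∀ v ∈ K, ∃ h : v ≠ 0, (Quot.mk (projRel 3) ⟨v, h⟩ : RP 3) ∈ S) : LC K (lft φ) := by
  constructor
  · rw [continuousOn_iff_continuous_restrict]
    have hm : Continuous (fun v : {v : Fin 3 → ℝ // v ≠ 0} => (Quot.mk (projRel 3) v : RP 3)) :=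
      continuous_quot_mk
    have h1 : Continuous (fun v : K => (⟨v.1, (hK v.1 v.2).1⟩ : {v : Fin 3 → ℝ // v ≠ 0})) :=
      continuous_subtype_val.subtype_mk _
    have h2 := hφ.comp_continuous (hm.comp h1) (fun v => (hK v.1 v.2).2)
    convert h2 using 1
    ext v
    exact lft_eq φ ⟨v.1, (hK v.1 v.2).1⟩
  · intro v hv c hc
    have h := (hK v hv).1
    have e1 := lft_eq φ ⟨v, h⟩
    have e2 := lft_eq φ ⟨c • v, smul_ne_zero hc h⟩
    simp only at e1 e2
    rw [e1, e2]
    congr 1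
    exact (Quot.sound ⟨c, hc, rfl⟩).symm

theorem pre_of_const (p : (Fin 3 → ℝ) → Prop)
    (h : ∀ g, LC {x | x ≠ 0 ∧ p x} g → ∀ x y, (x ≠ 0 ∧ p x) → (y ≠ 0 ∧ p y) → g x = g y) :
    IsPreconnected {x : RP 3 | ∃ P : {v : Fin 3 → ℝ // v ≠ 0}, Quot.mk (projRel 3) P = x ∧
      p (P : Fin 3 → ℝ)} := by
  apply isPreconnected_of_forall_constant
  rintro φ hφ _ ⟨P, rfl, hP⟩ _ ⟨Q, rfl, hQ⟩
  have hφ' := (continuous_of_discreteTopology (f := Bool.toNat)).comp_continuousOn hφ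
  have := h (lft (Bool.toNat ∘ φ)) (lft_LC _ _ hφ' _ (by
    rintro v ⟨hv, hpv⟩
    exact ⟨hv, ⟨v, hv⟩, rfl, hpv⟩)) P Q ⟨P.2, hP⟩ ⟨Q.2, hQ⟩
  rw [lft_eq, lft_eq] at this
  revert this
  simp only [Function.comp]
  cases φ (Quot.mk (projRel 3) P) <;> cases φ (Quot.mk (projRel 3) Q) <;> simp

theorem four_values (p : (Fin 3 → ℝ) → Prop) (Z : Set (RP 3))
    (hZ : Z = {x | ∃ P : {v : Fin 3 → ℝ // v ≠ 0}, Quot.mk (projRel 3) P = x ∧ p (P : Fin 3 → ℝ)})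
    (e : ConnectedComponents ↥Z ≃ Fin 4) :
    ∃ g, LC {x | x ≠ 0 ∧ p x} g ∧ 4 ≤ (g '' {x | x ≠ 0 ∧ p x}).encard := by
  classical
  have : Finite (ConnectedComponents ↥Z) := Finite.of_equiv _ e.symm
  have hd : DiscreteTopology (ConnectedComponents ↥Z) := inferInstance
  set φ : RP 3 → ℕ := fun x => if h : x ∈ Z then
    (e (ConnectedComponents.mk (⟨x, h⟩ : Z))).val else 0 with hφ
  have hφZ : ∀ x : Z, φ x = (e (ConnectedComponents.mk x)).val := by
    intro x
    simp [hφ, x.2]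
  have hc : ContinuousOn φ Z := by
    rw [continuousOn_iff_continuous_restrict]
    have h1 : Continuous (fun x : Z => (e (ConnectedComponents.mk x)).val) :=
      (continuous_of_discreteTopology (f := fun c => (e c).val)).comp ConnectedComponents.continuous_coe
    convert h1 using 1
    ext x
    exact hφZ x
  refine ⟨lft φ, lft_LC φ Z hc _ ?_, ?_⟩
  · rintro v ⟨hv, hpv⟩
    refine ⟨hv, ?_⟩
    rw [hZ]
    exact ⟨⟨v, hv⟩, rfl, hpv⟩
  · have hsub : (fun i : Fin 4 => (i : ℕ)) '' univ ⊆ lft φ '' {x | x ≠ 0 ∧ p x} := by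
      rintro _ ⟨i, -, rfl⟩
      obtain ⟨x, hx⟩ := ConnectedComponents.surjective_coe (e.symm i)
      obtain ⟨P, hP, hpP⟩ := hZ.subset x.2
      refine ⟨P, ⟨P.2, hpP⟩, ?_⟩
      rw [lft_eq, hP, hφZ x]
      have : e (ConnectedComponents.mk x) = i := by
        rw [show ConnectedComponents.mk x = e.symm i from hx]; simp
      rw [this]
    refine le_trans ?_ (encard_le_encard hsub)
    rw [Function.Injective.encard_image Fin.val_injective]
    simp

open Matrix in
theorem main_aux
    (M₁ M₂ M₃ : Matrix (Fin 3) (Fin 3) ℝ)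
    (hM₁ : M₁.IsSymm) (hM₂ : M₂.IsSymm) (hM₃ : M₃.IsSymm)
    (hsm : ∀ P : Fin 3 → ℝ, P ≠ 0 → ff M₁ M₂ M₃ P = 0 → fderiv ℝ (ff M₁ M₂ M₃) P ≠ 0)
    (hsf : Squarefree (binarySextic M₁ M₂ M₃))
    (Z : Set (RP 3))
    (hZ : Z = {x | ∃ P : {v : Fin 3 → ℝ // v ≠ 0}, Quot.mk (projRel 3) P = x ∧
      ff M₁ M₂ M₃ (P : Fin 3 → ℝ) = 0})
    (hZ4 : Nonempty (ConnectedComponents ↥Z ≃ Fin 4)) :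
    IsConnected {x : RP 3 | ∃ P : {v : Fin 3 → ℝ // v ≠ 0}, Quot.mk (projRel 3) P = x ∧
      ff M₁ M₂ M₃ (P : Fin 3 → ℝ) < 0} ∧
    IsConnected {x : RP 3 | ∃ P : {v : Fin 3 → ℝ // v ≠ 0}, Quot.mk (projRel 3) P = x ∧
      ff M₁ M₂ M₃ (P : Fin 3 → ℝ) ≤ 0} := by
  obtain ⟨e⟩ := hZ4
  obtain ⟨g, hg, hg4⟩ := four_values (fun x => ff M₁ M₂ M₃ x = 0) Z hZ e
  obtain ⟨z, hz, hz0⟩ : ∃ z, z ≠ 0 ∧ ff M₁ M₂ M₃ z = 0 := by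
    obtain ⟨x, hx⟩ := ConnectedComponents.surjective_coe (e.symm 0)
    obtain ⟨P, -, hP⟩ := hZ.subset x.2
    exact ⟨P, P.2, hP⟩
  obtain ⟨p, hp⟩ := loc_pos (ff_contDiff M₁ M₂ M₃) z hz0 (hsm z hz hz0)
  obtain ⟨q, hq⟩ := closure_nonempty_iff.1
    ⟨z, loc_neg (ff_contDiff M₁ M₂ M₃) z hz0 (hsm z hz hz0)⟩
  have hq : ff M₁ M₂ M₃ q < 0 := hq
  have hq0 : q ≠ 0 := by
    rintro rfl
    simp [ff, bl] at hq
  have hnd : ∀ a b : ℝ, ¬ ∃ e : ℝ, ∀ x, x ≠ 0 → 0 < e * bl (pol M₁ M₂ M₃ a b a b) x x := by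
    rintro a b ⟨e, he⟩
    have := few_of_def hM₁ hM₂ hM₃ hsf a b e he p hp g hg
    have h43 := hg4.trans this
    exact absurd h43 (by decide)
  refine ⟨⟨⟨_, ⟨q, hq0⟩, rfl, hq⟩, pre_of_const (fun w => ff M₁ M₂ M₃ w < 0) ?_⟩, ⟨⟨_, ⟨q, hq0⟩, rfl, hq.le⟩, pre_of_const (fun w => ff M₁ M₂ M₃ w ≤ 0) ?_⟩⟩
  · intro g hg x y hx hy
    refine lt_const hM₁ hM₂ hM₃ hnd hsm g (hg.mono ?_) x y hx.2 hy.2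
    intro w hw
    refine ⟨?_, hw⟩
    rintro rfl
    simp [ff, bl] at hw
  · intro g hg x y hx hy
    exact le_const hM₁ hM₂ hM₃ hnd g hg x y hx hy

end Helpers

open Matrix in
/-- If the quartic `Δ = {f = 0}`, `f = Q₁Q₃ − Q₂²`, is smooth at its real points, the binary
sextic `det(t₀²M₁ + 2t₀t₁M₂ + t₁²M₃)` is nonzero and squarefree over `ℂ`, and the real locus
`Z ⊆ ℝP²` of `Δ` has exactly four connected components, then the sets `{f < 0}` and
`{f ≤ 0}` in `ℝP²` are connected (the outside `U_Δ` of the four ovals is exactly the region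
where `Q₁Q₃ − Q₂² < 0`). -/
theorem four_ovals_outside_is_negative_locus
    (M₁ M₂ M₃ : Matrix (Fin 3) (Fin 3) ℝ)
    (hM₁ : M₁.IsSymm) (hM₂ : M₂.IsSymm) (hM₃ : M₃.IsSymm)
    (Q₁ Q₂ Q₃ : (Fin 3 → ℝ) → ℝ)
    (hQ₁ : ∀ v, Q₁ v = v ⬝ᵥ (M₁ *ᵥ v)) (hQ₂ : ∀ v, Q₂ v = v ⬝ᵥ (M₂ *ᵥ v))
    (hQ₃ : ∀ v, Q₃ v = v ⬝ᵥ (M₃ *ᵥ v))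
    (hsm : ∀ P : Fin 3 → ℝ, P ≠ 0 → Q₁ P * Q₃ P - Q₂ P ^ 2 = 0 →
      fderiv ℝ (fun v => Q₁ v * Q₃ v - Q₂ v ^ 2) P ≠ 0)
    (hp : binarySextic M₁ M₂ M₃ ≠ 0) (hsf : Squarefree (binarySextic M₁ M₂ M₃))
    (Z : Set (RP 3))
    (hZ : Z = {x | ∃ P : {v : Fin 3 → ℝ // v ≠ 0}, Quot.mk (projRel 3) P = x ∧
      Q₁ (P : Fin 3 → ℝ) * Q₃ (P : Fin 3 → ℝ) - Q₂ (P : Fin 3 → ℝ) ^ 2 = 0})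
    (hZ4 : Nonempty (ConnectedComponents ↥Z ≃ Fin 4)) :
    IsConnected {x : RP 3 | ∃ P : {v : Fin 3 → ℝ // v ≠ 0}, Quot.mk (projRel 3) P = x ∧
      Q₁ (P : Fin 3 → ℝ) * Q₃ (P : Fin 3 → ℝ) - Q₂ (P : Fin 3 → ℝ) ^ 2 < 0} ∧
    IsConnected {x : RP 3 | ∃ P : {v : Fin 3 → ℝ // v ≠ 0}, Quot.mk (projRel 3) P = x ∧
      Q₁ (P : Fin 3 → ℝ) * Q₃ (P : Fin 3 → ℝ) - Q₂ (P : Fin 3 → ℝ) ^ 2 ≤ 0} := by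
  obtain rfl : Q₁ = fun v => bl M₁ v v := funext hQ₁
  obtain rfl : Q₂ = fun v => bl M₂ v v := funext hQ₂
  obtain rfl : Q₃ = fun v => bl M₃ v v := funext hQ₃
  exact main_aux M₁ M₂ M₃ hM₁ hM₂ hM₃ hsm hsf Z hZ hZ4
end

section
/- Let Q₁, Q₂, Q₃ : ℝ³ → ℝ be real quadratic forms and f := Q₁Q₃ − Q₂². Assume that fderiv ℝ f P ≠ 0 for every P ∈ ℝ³∖{0} with f(P) = 0. Let ℝP² be the quotient topological space of ℝ³∖{0} by the scaling action of ℝ∖{0}, and assume: (i) Z := { [P] ∈ ℝP² : f(P) = 0 } has exactly three connected components; (ii) the set { [P] ∈ ℝP² : f(P) ≤ 0 } is not connected; (iii) the set S₂ := { [P] ∈ ℝP² : Q₁(P) ≥ 0 ∨ f(P) ≤ 0 } is connected. Then there exists P ∈ ℝ³∖{0} with f(P) = 0 and Q₁(P) > 0; consequently there exist P ∈ ℝ³∖{0} and r, s ∈ ℝ with r² = Q₁(P), r·s = Q₂(P), s² = Q₃(P), i.e. the discriminant cover Δ̃ has a real point. -/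
open QuadraticMap Topology

abbrev V3 := Fin 3 → ℝ

theorem quad_expand (Q : QuadraticForm ℝ V3) (x y z : V3) (a b c : ℝ) :
    Q (a • x + b • y + c • z) = a ^ 2 * Q x + b ^ 2 * Q y + c ^ 2 * Q z + a * b * polar Q x y
      + a * c * polar Q x z + b * c * polar Q y z := by
  rw [QuadraticMap.map_add Q (a • x + b • y), QuadraticMap.map_add Q (a • x)]
  simp only [QuadraticMap.map_smul, polar_add_left, polar_smul_left, polar_smul_right, smul_eq_mul]
  ring

theorem quad_expand2 (Q : QuadraticForm ℝ V3) (x y : V3) (a b : ℝ) :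
    Q (a • x + b • y) = a ^ 2 * Q x + b ^ 2 * Q y + a * b * polar Q x y := by
  rw [QuadraticMap.map_add Q (a • x)]
  simp only [QuadraticMap.map_smul, polar_smul_left, polar_smul_right, smul_eq_mul]
  ring

theorem quad_line (Q : QuadraticForm ℝ V3) (x y : V3) (t : ℝ) :
    Q (x + t • y) = Q x + t ^ 2 * Q y + t * polar Q x y := by
  have := quad_expand2 Q x y 1 t
  simpa using this

theorem quad_differentiable (Q : QuadraticForm ℝ V3) : Differentiable ℝ (fun v => Q v) := by
  have h : (fun v : V3 => Q v) = fun v => Q (v 0 • (Pi.single 0 1 : V3) + v 1 • (Pi.single 1 1 : V3)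
      + v 2 • (Pi.single 2 1 : V3)) := by
    funext v
    congr 1
    ext i
    fin_cases i <;> simp
  rw [h]
  simp only [quad_expand]
  fun_prop

theorem quad_continuous (Q : QuadraticForm ℝ V3) : Continuous (fun v => Q v) :=
  (quad_differentiable Q).continuous

theorem fderiv_f (Q₁ Q₂ Q₃ : QuadraticForm ℝ V3) (P e : V3) :
    fderiv ℝ (fun v => Q₁ v * Q₃ v - Q₂ v ^ 2) P e =
      polar Q₁ P e * Q₃ P + Q₁ P * polar Q₃ P e - 2 * Q₂ P * polar Q₂ P e := by
  have hd : DifferentiableAt ℝ (fun v => Q₁ v * Q₃ v - Q₂ v ^ 2) P := by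
    have h1 := quad_differentiable Q₁
    have h2 := quad_differentiable Q₂
    have h3 := quad_differentiable Q₃
    exact (((h1 P).mul (h3 P)).sub ((h2 P).pow 2))
  rw [← hd.lineDeriv_eq_fderiv]
  unfold lineDeriv
  simp only [quad_line]
  have hq : ∀ Q : QuadraticForm ℝ V3,
      HasDerivAt (fun t : ℝ => Q P + t ^ 2 * Q e + t * polar Q P e) (polar Q P e) 0 := by
    intro Q
    have := (((hasDerivAt_pow 2 (0:ℝ)).mul_const (Q e)).const_add (Q P)).add
      ((hasDerivAt_id (0:ℝ)).mul_const (polar Q P e))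
    refine this.congr_deriv ?_
    simp
  have := ((hq Q₁).mul (hq Q₃)).sub ((hq Q₂).pow 2)
  refine this.deriv.trans ?_
  simp

theorem exists_orth_s12 (Q : QuadraticForm ℝ V3) (u v : V3) :
    ∃ w : V3, w ≠ 0 ∧ polar Q u w = 0 ∧ polar Q v w = 0 := by
  let φ : V3 →ₗ[ℝ] ℝ × ℝ := (polarBilin Q u).prod (polarBilin Q v)
  have h : LinearMap.ker φ ≠ ⊥ := by
    apply LinearMap.ker_ne_bot_of_finrank_lt
    simp
  obtain ⟨w, hw, hw0⟩ := Submodule.exists_mem_ne_zero_of_ne_bot h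
  rw [LinearMap.mem_ker] at hw
  have h1 : polar Q u w = 0 := congrArg Prod.fst hw
  have h2 : polar Q v w = 0 := congrArg Prod.snd hw
  exact ⟨w, hw0, h1, h2⟩

theorem polar_self_zero (Q : QuadraticForm ℝ V3) (u : V3) (h : Q u = 0) : polar Q u u = 0 := by
  rw [QuadraticMap.polar_self, h]; simp

theorem indep_of (Q : QuadraticForm ℝ V3) (u v w : V3) (hu : Q u = 0) (hv : Q v = 0)
    (huv : polar Q u v ≠ 0) (hw0 : w ≠ 0) (huw : polar Q u w = 0) (hvw : polar Q v w = 0)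
    (a b c : ℝ) (h : a • u + b • v + c • w = 0) : a = 0 ∧ b = 0 ∧ c = 0 := by
  have h1 : polar Q u (a • u + b • v + c • w) = 0 := by rw [h]; simp
  have h2 : polar Q v (a • u + b • v + c • w) = 0 := by rw [h]; simp
  simp only [polar_add_right, polar_smul_right, smul_eq_mul, polar_self_zero Q u hu, huw, hvw,
    polar_self_zero Q v hv, QuadraticMap.polar_comm Q v u] at h1 h2
  have hb : b = 0 := by simpa [huv] using h1
  have ha : a = 0 := by simpa [huv] using h2
  subst hb ha
  refine ⟨rfl, rfl, ?_⟩
  simpa [hw0] using h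

theorem span_of (u v w : V3)
    (h : ∀ a b c : ℝ, a • u + b • v + c • w = 0 → a = 0 ∧ b = 0 ∧ c = 0) (x : V3) :
    ∃ a b c : ℝ, x = a • u + b • v + c • w := by
  have hl : LinearIndependent ℝ ![u, v, w] := by
    rw [Fintype.linearIndependent_iff]
    intro g hg
    simp only [Fin.sum_univ_three, Matrix.cons_val] at hg
    obtain ⟨h0, h1, h2⟩ := h _ _ _ hg
    intro i
    fin_cases i <;> assumption
  have hs := hl.span_eq_top_of_card_eq_finrank' (by simp)
  have hx : x ∈ Submodule.span ℝ (Set.range ![u, v, w]) := by rw [hs]; trivial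
  obtain ⟨c, hc⟩ := (Submodule.mem_span_range_iff_exists_fun ℝ).1 hx
  refine ⟨c 0, c 1, c 2, ?_⟩
  rw [← hc]
  simp [Fin.sum_univ_three]

/-- Connectedness by pairs in the zero locus of a quadratic form. -/
def JoinedRP (S : Set (RP 3)) (x y : RP 3) : Prop :=
  ∃ t : Set (RP 3), t ⊆ S ∧ x ∈ t ∧ y ∈ t ∧ IsPreconnected t

theorem JoinedRP.trans {S : Set (RP 3)} {x y z : RP 3} (h : JoinedRP S x y) (k : JoinedRP S y z) :
    JoinedRP S x z := by
  obtain ⟨t, h1, h2, h3, h4⟩ := h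
  obtain ⟨s, k1, k2, k3, k4⟩ := k
  exact ⟨t ∪ s, Set.union_subset h1 k1, Or.inl h2, Or.inr k3, h4.union y h3 k2 k4⟩

abbrev X3 := {v : V3 // v ≠ 0}

def pr (P : X3) : RP 3 := Quot.mk (projRel 3) P

theorem pr_continuous : Continuous pr := continuous_quot_mk

def zeroSet (G : QuadraticForm ℝ V3) : Set (RP 3) :=
  {x | ∃ P : X3, pr P = x ∧ G (P : V3) = 0}

theorem joined_path (G : QuadraticForm ℝ V3) (γ : ℝ → V3) (hc : Continuous γ)
    (h0 : ∀ t, γ t ≠ 0) (hG : ∀ t, G (γ t) = 0) :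
    JoinedRP (zeroSet G) (pr ⟨γ 0, h0 0⟩) (pr ⟨γ 1, h0 1⟩) := by
  refine ⟨Set.range (fun t => pr ⟨γ t, h0 t⟩), ?_, ⟨0, rfl⟩, ⟨1, rfl⟩, ?_⟩
  · rintro _ ⟨t, rfl⟩
    exact ⟨_, rfl, hG t⟩
  · apply isPreconnected_range
    exact pr_continuous.comp (hc.subtype_mk _)

theorem pr_eq (u v : X3) (c : ℝ) (hc : c ≠ 0) (h : c • (u : V3) = v) : pr u = pr v :=
  Quot.sound ⟨c, hc, h⟩

theorem joined_seg (G : QuadraticForm ℝ V3) (u v : X3) (hu : G (u : V3) = 0)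
    (hv : G (v : V3) = 0) (huv : polar G (u : V3) v = 0) :
    JoinedRP (zeroSet G) (pr u) (pr v) := by
  by_cases h : ∃ t : ℝ, (1 - t) • (u : V3) + t • (v : V3) = 0
  · obtain ⟨t, ht⟩ := h
    have ht0 : t ≠ 0 := by
      rintro rfl
      exact u.2 (by simpa using ht)
    have ht1 : 1 - t ≠ 0 := by
      intro h1
      rw [h1] at ht
      have : t = 1 := by linarith
      subst this
      exact v.2 (by simpa using ht)
    have : pr u = pr v := by
      refine pr_eq u v (-(1 - t) / t) (div_ne_zero (neg_ne_zero.2 ht1) ht0) ?_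
      have h2 : t • (v : V3) = -((1 - t) • (u : V3)) := (neg_eq_of_add_eq_zero_right ht).symm
      have h3 : (v : V3) = t⁻¹ • (t • (v : V3)) := by rw [smul_smul, inv_mul_cancel₀ ht0, one_smul]
      rw [h3, h2, ← neg_smul, smul_smul]
      congr 1
      field_simp
    rw [this]
    exact ⟨{pr v}, by rintro _ rfl; exact ⟨v, rfl, hv⟩, rfl, rfl, isPreconnected_singleton⟩
  · push Not at h
    have := joined_path G (fun t => (1 - t) • (u : V3) + t • (v : V3)) (by fun_prop) h
      (by intro t; rw [quad_expand2, hu, hv, huv]; ring)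
    convert this using 2 <;> simp

theorem joined_zero (G : QuadraticForm ℝ V3) (u v : X3) (hu : G (u : V3) = 0)
    (hv : G (v : V3) = 0) : JoinedRP (zeroSet G) (pr u) (pr v) := by
  by_cases huv : polar G (u : V3) v = 0
  · exact joined_seg G u v hu hv huv
  obtain ⟨w, hw0, huw, hvw⟩ := exists_orth_s12 G u v
  by_cases hw : G w = 0
  · refine (joined_seg G u ⟨w, hw0⟩ hu hw huw).trans (joined_seg G ⟨w, hw0⟩ v hw hv ?_)
    rw [QuadraticMap.polar_comm]; exact hvw
  have hk : -G w / polar G (u : V3) v ≠ 0 := div_ne_zero (neg_ne_zero.2 hw) huv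
  have hne : ∀ t : ℝ, ((1 - t) ^ 2) • (u : V3) + (t ^ 2 * (-G w / polar G (u : V3) v)) • (v : V3)
      + ((1 - t) * t) • w ≠ 0 := by
    intro t ht
    obtain ⟨h1, h2, h3⟩ := indep_of G u v w hu hv huv hw0 huw hvw _ _ _ ht
    have e1 : 1 - t = 0 := by simpa using h1
    have e2 : t = 0 := by
      rcases mul_eq_zero.1 h2 with h | h
      · simpa using h
      · exact absurd h hk
    linarith
  have := joined_path G _ (by fun_prop) hne (by
    intro t
    rw [quad_expand, hu, hv, huw, hvw]
    field_simp
    ring)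
  have e0 : pr ⟨_, hne 0⟩ = pr u := by congr 1; ext1; simp
  have e1 : pr v = pr ⟨_, hne 1⟩ := pr_eq _ _ _ hk (by simp)
  rw [e0, ← e1] at this
  exact this

theorem zeroSet_preconnected (G : QuadraticForm ℝ V3) : IsPreconnected (zeroSet G) := by
  apply isPreconnected_of_forall_pair
  rintro _ ⟨u, rfl, hu⟩ _ ⟨v, rfl, hv⟩
  exact joined_zero G u v hu hv

theorem key (Q₁ Q₂ Q₃ : QuadraticForm ℝ V3)
    (hsm : ∀ P : Fin 3 → ℝ, P ≠ 0 → Q₁ P * Q₃ P - Q₂ P ^ 2 = 0 →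
      fderiv ℝ (fun v => Q₁ v * Q₃ v - Q₂ v ^ 2) P ≠ 0)
    (hno : ∀ P : V3, P ≠ 0 → Q₁ P * Q₃ P - Q₂ P ^ 2 = 0 → Q₁ P ≤ 0)
    (P : V3) (hP : P ≠ 0) (h1 : Q₁ P = 0) (h2 : Q₂ P = 0) (h3 : 0 < Q₃ P) :
    ∃ k : ℝ, ∀ v, Q₂ v = k * Q₁ v := by
  -- a transversal direction
  obtain ⟨e, he, hPe⟩ : ∃ e : V3, Q₁ e = 0 ∧ polar Q₁ P e = 1 := by
    obtain ⟨d, hd⟩ : ∃ d, polar Q₁ P d ≠ 0 := by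
      by_contra hcon
      push Not at hcon
      apply hsm P hP (by rw [h1, h2]; ring)
      ext1 d
      rw [fderiv_f, hcon d, h1, h2]
      simp
    set β := polar Q₁ P d with hβ
    refine ⟨β⁻¹ • d + (-(β⁻¹ ^ 2 * Q₁ d)) • P, ?_, ?_⟩
    · rw [quad_expand2, QuadraticMap.polar_comm, ← hβ, h1]
      field_simp
      ring
    · rw [polar_add_right, polar_smul_right, polar_smul_right, polar_self_zero Q₁ P h1, ← hβ]
      simp [hd]
  obtain ⟨w, hw0, hPw, hew⟩ := exists_orth_s12 Q₁ P e
  have hind := indep_of Q₁ P e w h1 he (by rw [hPe]; norm_num) hw0 hPw hew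
  set g := Q₁ w with hg
  -- Q₁ along R(b) + t e
  have hQ1 : ∀ b t : ℝ, Q₁ ((1:ℝ) • P + (t - g * b ^ 2) • e + b • w) = t := by
    intro b t
    rw [quad_expand, h1, he, hPe, hPw, hew, ← hg]; ring
  have hRne : ∀ b t : ℝ, (1:ℝ) • P + (t - g * b ^ 2) • e + b • w ≠ 0 := by
    intro b t h
    exact one_ne_zero (hind _ _ _ h).1
  let R : ℝ → ℝ → V3 := fun b t => (1:ℝ) • P + (t - g * b ^ 2) • e + b • w
  let F : V3 → ℝ := fun v => Q₁ v * Q₃ v - Q₂ v ^ 2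
  have hFc : Continuous F :=
    ((quad_continuous Q₁).mul (quad_continuous Q₃)).sub ((quad_continuous Q₂).pow 2)
  -- positivity
  obtain ⟨t₀, ht₀, hF0⟩ : ∃ t₀ : ℝ, 0 < t₀ ∧ 0 < F (R 0 t₀) := by
    have hc : Continuous (fun t : ℝ => Q₃ (P + t • e) - t * (t * Q₂ e + polar Q₂ P e) ^ 2) := by
      have := (quad_continuous Q₃).comp (show Continuous (fun t : ℝ => P + t • e) by fun_prop)
      exact this.sub (by fun_prop)
    have hev : ∀ᶠ t in 𝓝 (0:ℝ), 0 < Q₃ (P + t • e) - t * (t * Q₂ e + polar Q₂ P e) ^ 2 := by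
      apply hc.continuousAt.eventually (lt_mem_nhds _)
      simpa using h3
    have hev2 := (hev.filter_mono (nhdsWithin_le_nhds (s := Set.Ioi 0))).and self_mem_nhdsWithin
    obtain ⟨t, ht, ht0⟩ := hev2.exists
    refine ⟨t, ht0, ?_⟩
    have e1 : R 0 t = P + t • e := by simp [R]
    have e2 : F (R 0 t) = t * (Q₃ (P + t • e) - t * (t * Q₂ e + polar Q₂ P e) ^ 2) := by
      have := hQ1 0 t
      change Q₁ (R 0 t) = t at this
      change Q₁ (R 0 t) * Q₃ (R 0 t) - Q₂ (R 0 t) ^ 2 = _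
      rw [this, e1, quad_line Q₂, h2]
      ring
    rw [e2]
    exact mul_pos ht0 ht
  have hR1 : Continuous (fun b => F (R b t₀)) := hFc.comp (by fun_prop)
  have hev : ∀ᶠ b in 𝓝 (0:ℝ), 0 < F (R b t₀) := hR1.continuousAt.eventually (lt_mem_nhds hF0)
  have hz : ∀ b, 0 < F (R b t₀) → Q₂ (R b 0) = 0 := by
    intro b hb
    by_contra hne
    have hneg : F (R b 0) < 0 := by
      change Q₁ (R b 0) * Q₃ (R b 0) - Q₂ (R b 0) ^ 2 < 0
      have := hQ1 b 0
      change Q₁ (R b 0) = 0 at this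
      rw [this]
      have : 0 < Q₂ (R b 0) ^ 2 := by positivity
      linarith
    have hR2 : Continuous (fun t => F (R b t)) := hFc.comp (by fun_prop)
    obtain ⟨t, ht, htz⟩ := intermediate_value_Icc ht₀.le hR2.continuousOn
      (show (0:ℝ) ∈ Set.Icc (F (R b 0)) (F (R b t₀)) from ⟨hneg.le, hb.le⟩)
    have hle := hno (R b t) (hRne b t) htz
    have := hQ1 b t
    change Q₁ (R b t) = t at this
    have ht0 : t = 0 := le_antisymm (this ▸ hle) ht.1
    subst ht0
    exact absurd htz hneg.ne
  obtain ⟨ε, hε, hball⟩ := Metric.eventually_nhds_iff.1 hev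
  have hpoly : ∀ b, |b| < ε → b ^ 2 * Q₂ w + (g * b ^ 2) ^ 2 * Q₂ e - g * b ^ 2 * polar Q₂ P e
      + b * polar Q₂ P w - g * b ^ 3 * polar Q₂ e w = 0 := by
    intro b hb
    have := hz b (hball (by simpa [Real.dist_eq] using hb))
    change Q₂ ((1:ℝ) • P + (0 - g * b ^ 2) • e + b • w) = 0 at this
    rw [quad_expand, h2] at this
    linear_combination this
  obtain ⟨δ, hδ, hδε⟩ : ∃ δ : ℝ, 0 < δ ∧ 2 * δ < ε := ⟨ε / 4, by positivity, by linarith⟩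
  have p1 := hpoly δ (by rw [abs_of_pos hδ]; linarith)
  have p2 := hpoly (-δ) (by rw [abs_neg, abs_of_pos hδ]; linarith)
  have p3 := hpoly (2 * δ) (by rw [abs_of_pos (by linarith)]; linarith)
  have p4 := hpoly (-(2 * δ)) (by rw [abs_neg, abs_of_pos (by linarith)]; linarith)
  have c1 : polar Q₂ P w = 0 := by
    have : δ * polar Q₂ P w = 0 := by linear_combination (8 * (p1 - p2) - (p3 - p4)) / 12
    exact (mul_eq_zero.1 this).resolve_left hδ.ne'
  have c3 : g * polar Q₂ e w = 0 := by
    have : δ ^ 3 * (g * polar Q₂ e w) = 0 := by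
      linear_combination (2 * (p1 - p2) - (p3 - p4)) / 12
    exact (mul_eq_zero.1 this).resolve_left (by positivity)
  have c4 : g ^ 2 * Q₂ e = 0 := by
    have : δ ^ 4 * (g ^ 2 * Q₂ e) = 0 := by
      linear_combination ((p3 + p4) - 4 * (p1 + p2)) / 24
    exact (mul_eq_zero.1 this).resolve_left (by positivity)
  have c2 : Q₂ w - g * polar Q₂ P e = 0 := by
    have : δ ^ 2 * (Q₂ w - g * polar Q₂ P e) = 0 := by
      linear_combination (16 * (p1 + p2) - (p3 + p4)) / 24
    exact (mul_eq_zero.1 this).resolve_left (by positivity)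
  by_cases hg0 : g = 0
  · exfalso
    have hw2 : Q₂ w = 0 := by rw [hg0] at c2; linarith
    have hw1 : Q₁ w = 0 := hg ▸ hg0
    apply hsm w hw0 (by rw [hw1, hw2]; ring)
    ext1 d
    have hd : polar Q₁ w d = 0 := by
      obtain ⟨a, b, c, rfl⟩ := span_of P e w hind d
      rw [QuadraticMap.polar_comm]
      simp only [polar_add_left, polar_smul_left, polar_self_zero Q₁ w hw1, hPw, hew]
      simp
    rw [fderiv_f, hw1, hw2, hd]
    simp
  · have d3 := (mul_eq_zero.1 c3).resolve_left hg0
    have d4 := (mul_eq_zero.1 c4).resolve_left (pow_ne_zero 2 hg0)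
    refine ⟨polar Q₂ P e, fun v => ?_⟩
    obtain ⟨a, b, c, rfl⟩ := span_of P e w hind v
    rw [quad_expand, quad_expand, h1, h2, he, hPe, hPw, hew, c1, d3, d4, ← hg]
    linear_combination c ^ 2 * c2

theorem same_comp {Z A : Set (RP 3)} (hA : A ⊆ Z) (hc : IsPreconnected A) (x y : Z)
    (hx : (x : RP 3) ∈ A) (hy : (y : RP 3) ∈ A) :
    (x : ConnectedComponents Z) = (y : ConnectedComponents Z) := by
  have h : IsPreconnected ((Subtype.val : Z → RP 3) ⁻¹' A) := by
    rw [← Topology.IsInducing.subtypeVal.isPreconnected_image]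
    rwa [Subtype.image_preimage_coe, Set.inter_eq_right.2 hA]
  rw [ConnectedComponents.coe_eq_coe']
  exact h.subset_connectedComponent hy hx

theorem not_three {Z A B : Set (RP 3)} (hZ : Z = A ∪ B) (hA : IsPreconnected A)
    (hB : IsPreconnected B) (e : ConnectedComponents Z ≃ Fin 3) : False := by
  have hAZ : A ⊆ Z := hZ ▸ Set.subset_union_left
  have hBZ : B ⊆ Z := hZ ▸ Set.subset_union_right
  have hx : ∀ i : Fin 3, ∃ x : Z, (x : ConnectedComponents Z) = e.symm i :=
    fun i => ConnectedComponents.surjective_coe _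
  choose x hx using hx
  have hinj : ∀ i j, ((x i : ConnectedComponents Z) = x j) → i = j := by
    intro i j h
    rw [hx, hx] at h
    exact e.symm.injective h
  have hm : ∀ i, (x i : RP 3) ∈ A ∨ (x i : RP 3) ∈ B := fun i => by
    exact hZ.subset (x i).2
  have kA : ∀ i j, (x i : RP 3) ∈ A → (x j : RP 3) ∈ A → i = j := fun i j h k =>
    hinj i j (same_comp hAZ hA _ _ h k)
  have kB : ∀ i j, (x i : RP 3) ∈ B → (x j : RP 3) ∈ B → i = j := fun i j h k =>
    hinj i j (same_comp hBZ hB _ _ h k)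
  have n01 : (0 : Fin 3) ≠ 1 := by decide
  have n02 : (0 : Fin 3) ≠ 2 := by decide
  have n12 : (1 : Fin 3) ≠ 2 := by decide
  rcases hm 0 with h0 | h0 <;> rcases hm 1 with h1 | h1 <;> rcases hm 2 with h2 | h2
  · exact n01 (kA _ _ h0 h1)
  · exact n01 (kA _ _ h0 h1)
  · exact n02 (kA _ _ h0 h2)
  · exact n12 (kB _ _ h1 h2)
  · exact n12 (kA _ _ h1 h2)
  · exact n02 (kB _ _ h0 h2)
  · exact n01 (kB _ _ h0 h1)
  · exact n01 (kB _ _ h0 h1)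

theorem X3_preconnected : PreconnectedSpace X3 := by
  have : IsConnected ({(0 : V3)}ᶜ : Set V3) := by
    apply isConnected_compl_singleton_of_one_lt_rank
    rw [← Module.finrank_eq_rank]
    simp
  exact Subtype.preconnectedSpace this.isPreconnected

/-- If the quartic `Δ = {f = 0}`, `f = Q₁Q₃ − Q₂²`, is smooth at its real points, its real
locus `Z ⊆ ℝP²` has exactly three connected components, the set `{f ≤ 0}` is not connected,
and the image `S₂ = {Q₁ ≥ 0} ∪ {f ≤ 0}` of `Y(ℝ)` in `ℝP²` is connected, then there is a real
point of `Δ` with `Q₁ > 0`; consequently the discriminant cover `Δ̃` has a real point. -/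
theorem three_ovals_connected_gives_cover_point
    (Q₁ Q₂ Q₃ : QuadraticForm ℝ (Fin 3 → ℝ))
    (hsm : ∀ P : Fin 3 → ℝ, P ≠ 0 → Q₁ P * Q₃ P - Q₂ P ^ 2 = 0 →
      fderiv ℝ (fun v => Q₁ v * Q₃ v - Q₂ v ^ 2) P ≠ 0)
    (Z : Set (RP 3))
    (hZ : Z = {x | ∃ P : {v : Fin 3 → ℝ // v ≠ 0}, Quot.mk (projRel 3) P = x ∧
      Q₁ (P : Fin 3 → ℝ) * Q₃ (P : Fin 3 → ℝ) - Q₂ (P : Fin 3 → ℝ) ^ 2 = 0})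
    (hZ3 : Nonempty (ConnectedComponents ↥Z ≃ Fin 3))
    (hle : ¬ IsConnected {x : RP 3 | ∃ P : {v : Fin 3 → ℝ // v ≠ 0},
      Quot.mk (projRel 3) P = x ∧
      Q₁ (P : Fin 3 → ℝ) * Q₃ (P : Fin 3 → ℝ) - Q₂ (P : Fin 3 → ℝ) ^ 2 ≤ 0})
    (hS₂ : IsConnected {x : RP 3 | ∃ P : {v : Fin 3 → ℝ // v ≠ 0},
      Quot.mk (projRel 3) P = x ∧
      (0 ≤ Q₁ (P : Fin 3 → ℝ) ∨
        Q₁ (P : Fin 3 → ℝ) * Q₃ (P : Fin 3 → ℝ) - Q₂ (P : Fin 3 → ℝ) ^ 2 ≤ 0)}) :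
    (∃ P : Fin 3 → ℝ, P ≠ 0 ∧ Q₁ P * Q₃ P - Q₂ P ^ 2 = 0 ∧ 0 < Q₁ P) ∧
    (∃ (P : Fin 3 → ℝ) (r s : ℝ), P ≠ 0 ∧
      r ^ 2 = Q₁ P ∧ r * s = Q₂ P ∧ s ^ 2 = Q₃ P) := by
  have main : ∃ P : Fin 3 → ℝ, P ≠ 0 ∧ Q₁ P * Q₃ P - Q₂ P ^ 2 = 0 ∧ 0 < Q₁ P := by
    by_contra hcon
    have hno : ∀ P : V3, P ≠ 0 → Q₁ P * Q₃ P - Q₂ P ^ 2 = 0 → Q₁ P ≤ 0 := by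
      intro P h0 h1
      by_contra h2
      exact hcon ⟨P, h0, h1, not_le.1 h2⟩
    obtain ⟨e3⟩ := hZ3
    -- no proportionality
    have hprop : ¬ ∃ k : ℝ, ∀ v, Q₂ v = k * Q₁ v := by
      rintro ⟨k, hk⟩
      refine not_three (A := zeroSet Q₁) (B := zeroSet (Q₃ - k ^ 2 • Q₁)) ?_
        (zeroSet_preconnected _) (zeroSet_preconnected _) e3
      rw [hZ]
      have hf : ∀ v, Q₁ v * Q₃ v - Q₂ v ^ 2 = Q₁ v * (Q₃ - k ^ 2 • Q₁) v := by
        intro v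
        rw [hk]
        simp only [_root_.sub_apply, _root_.smul_apply, smul_eq_mul]
        ring
      ext x
      constructor
      · rintro ⟨P, hP, h⟩
        rw [hf] at h
        rcases mul_eq_zero.1 h with h | h
        · exact Or.inl ⟨P, hP, h⟩
        · exact Or.inr ⟨P, hP, h⟩
      · rintro (⟨P, hP, h⟩ | ⟨P, hP, h⟩)
        · exact ⟨P, hP, by rw [hf, h, zero_mul]⟩
        · exact ⟨P, hP, by rw [hf, h, mul_zero]⟩
    let U : Set X3 := {P | 0 < Q₁ (P : V3) * Q₃ (P : V3) - Q₂ (P : V3) ^ 2 ∧ 0 < Q₁ (P : V3)}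
    have q1 : Continuous (fun P : X3 => Q₁ (P : V3)) :=
      (quad_continuous Q₁).comp continuous_subtype_val
    have q2 : Continuous (fun P : X3 => Q₂ (P : V3)) :=
      (quad_continuous Q₂).comp continuous_subtype_val
    have q3 : Continuous (fun P : X3 => Q₃ (P : V3)) :=
      (quad_continuous Q₃).comp continuous_subtype_val
    have qf : Continuous (fun P : X3 => Q₁ (P : V3) * Q₃ (P : V3) - Q₂ (P : V3) ^ 2) :=
      (q1.mul q3).sub (q2.pow 2)
    have hUo : IsOpen U := (isOpen_lt continuous_const qf).inter (isOpen_lt continuous_const q1)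
    have hUc : IsClosed U := by
      rw [← closure_subset_iff_isClosed]
      intro P hPcl
      have hsub : closure U ⊆ {P : X3 | 0 ≤ Q₁ (P : V3) * Q₃ (P : V3) - Q₂ (P : V3) ^ 2} ∩
          {P : X3 | 0 ≤ Q₁ (P : V3)} :=
        closure_minimal (fun R hR => ⟨hR.1.le, hR.2.le⟩)
          ((isClosed_le continuous_const qf).inter (isClosed_le continuous_const q1))
      obtain ⟨hf0, hq0⟩ := hsub hPcl
      simp only [Set.mem_ofPred_eq] at hf0 hq0
      rcases hf0.lt_or_eq with hf | hf
      · refine ⟨hf, lt_of_le_of_ne hq0 ?_⟩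
        intro h
        rw [← h] at hf
        nlinarith [sq_nonneg (Q₂ (P : V3))]
      · exfalso
        have h1 : Q₁ (P : V3) = 0 := le_antisymm (hno P P.2 hf.symm) hq0
        have h2 : Q₂ (P : V3) = 0 := by
          rw [h1] at hf
          have : Q₂ (P : V3) ^ 2 = 0 := by linarith
          simpa using this
        rcases lt_trichotomy (Q₃ (P : V3)) 0 with h3 | h3 | h3
        · have hop : IsOpen {R : X3 | Q₃ (R : V3) < 0} := isOpen_lt q3 continuous_const
          obtain ⟨R, hR3, hRf, hR1⟩ := mem_closure_iff.1 hPcl _ hop h3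
          simp only [Set.mem_ofPred_eq] at hR3
          nlinarith [mul_pos_of_neg_of_neg hR3 (neg_lt_zero.2 hR1), sq_nonneg (Q₂ (R : V3))]
        · apply hsm P P.2 hf.symm
          ext1 d
          rw [fderiv_f, h1, h2, h3]
          simp
        · exact hprop (key Q₁ Q₂ Q₃ hsm hno P P.2 h1 h2 h3)
    have := X3_preconnected
    rcases isClopen_iff.1 ⟨hUc, hUo⟩ with hU | hU
    · apply hle
      convert hS₂ using 1
      ext x
      constructor
      · rintro ⟨P, hP, h⟩
        exact ⟨P, hP, Or.inr h⟩
      · rintro ⟨P, hP, h⟩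
        refine ⟨P, hP, ?_⟩
        by_contra hf
        rw [not_le] at hf
        have h1 : 0 ≤ Q₁ (P : V3) := h.resolve_right (not_le.2 hf)
        have : P ∈ U := by
          refine ⟨hf, lt_of_le_of_ne h1 ?_⟩
          intro h
          rw [← h] at hf
          nlinarith [sq_nonneg (Q₂ (P : V3))]
        rw [hU] at this
        exact this
    · obtain ⟨x, -⟩ := ConnectedComponents.surjective_coe (e3.symm 0)
      have hx := hZ.subset x.2
      obtain ⟨P, -, hP⟩ := hx
      have : P ∈ U := by rw [hU]; trivial
      exact absurd hP this.1.ne'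
  refine ⟨main, ?_⟩
  obtain ⟨P, hP, hf, h1⟩ := main
  have hs := Real.sqrt_pos.2 h1
  have hsq := Real.sq_sqrt h1.le
  refine ⟨P, √(Q₁ P), Q₂ P / √(Q₁ P), hP, hsq, by field_simp, ?_⟩
  rw [div_pow, hsq, div_eq_iff h1.ne']
  linarith
end
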